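/- arXiv:1103.0203 — 2 statements merged into one kernel-verified Lean document; each statement's English description precedes it below -/
import Mathlib

section
/- Let n ≥ 1 and d ≥ 2. Define R(n,d) = ⌈binom(n+d,d)/(n+1)⌉, except in the following cases: R(n,2) = n+1; R(n,4) = binom(n+2,2) for 2 ≤ n ≤ 4; and R(4,3) = 8. Then a general homogeneous polynomial f of degree d in x_0,…,x_n over ℂ has symmetric rank exactly R(n,d); that is, there is a nonzero polynomial D in the binom(n+d,d) coefficients of f such that every homogeneous f of degree d with D(f) ≠ 0 has symmetric rank R(n,d). -/
open MvPolynomial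

/-- The linear form `ℓ_v = Σ_j v_j x_j` associated to a vector `v ∈ ℂ^k`. -/
noncomputable def linForm (k : ℕ) (v : Fin k → ℂ) : MvPolynomial (Fin k) ℂ :=
  ∑ j, MvPolynomial.C (v j) * MvPolynomial.X j

/-- The (symmetric/Waring) rank of `f`: the least `r` such that
`f = Σ_{i=1}^r c_i ℓ_{v_i}^d` with all `v_i ≠ 0`. -/
noncomputable def waringRank (n d : ℕ) (f : MvPolynomial (Fin (n+1)) ℂ) : ℕ :=
  sInf {r : ℕ | ∃ (c : Fin r → ℂ) (v : Fin r → (Fin (n+1) → ℂ)),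
    (∀ i, v i ≠ 0) ∧ f = ∑ i, c i • (linForm (n+1) (v i)) ^ d}

/-- The generic rank `R(n,d)`: `⌈binom(n+d,d)/(n+1)⌉` except in the listed exceptional
cases. -/
def genericRank (n d : ℕ) : ℕ :=
  if d = 2 then n + 1
  else if d = 4 ∧ 2 ≤ n ∧ n ≤ 4 then Nat.choose (n + 2) 2
  else if n = 4 ∧ d = 3 then 8
  else (Nat.choose (n + d) d + n) / (n + 1)

set_option linter.unusedSectionVars false
set_option linter.unusedSimpArgs false

namespace AlexanderHirschowitz

section Separation

variable {V I : Type*} [AddCommGroup V] [Module ℂ V] [FiniteDimensional ℂ V]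

/-- A separating family of functionals on a finite-dimensional space contains a separating
subfamily of size the dimension. -/
lemma exists_separating_fin (m : ℕ) :
    ∀ (V : Type _) [AddCommGroup V] [Module ℂ V] [FiniteDimensional ℂ V]
      (φ : I → V →ₗ[ℂ] ℂ), Module.finrank ℂ V = m → (∀ v, (∀ i, φ i v = 0) → v = 0) →
      ∃ h : Fin m → I, ∀ v, (∀ a, φ (h a) v = 0) → v = 0 := by
  induction m with
  | zero =>
    intro V _ _ _ φ hV _
    exact ⟨Fin.elim0, fun v _ => (Module.finrank_zero_iff.mp hV).elim v 0⟩
  | succ m ih =>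
    intro V _ _ _ φ hV hφ
    have : Nontrivial V := Module.nontrivial_of_finrank_pos (R := ℂ) (by omega)
    obtain ⟨v, hv⟩ := exists_ne (0 : V)
    obtain ⟨i, hi⟩ : ∃ i, φ i v ≠ 0 := by
      by_contra! hcon
      exact hv (hφ v hcon)
    have hne : φ i ≠ 0 := fun h0 => hi (by simp [h0])
    have hker : Module.finrank ℂ (LinearMap.ker (φ i)) = m := by
      have h1 := (φ i).finrank_range_add_finrank_ker
      rw [LinearMap.range_eq_top.mpr (LinearMap.surjective hne), finrank_top,
        Module.finrank_self] at h1
      omega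
    obtain ⟨h, hh⟩ := ih (LinearMap.ker (φ i)) (fun k => (φ k).comp (Submodule.subtype _)) hker
      (fun w hw => Subtype.ext (hφ w hw))
    refine ⟨Fin.cons i h, fun w hw => ?_⟩
    have h0 : φ i w = 0 := by simpa using hw 0
    exact congrArg Subtype.val (hh ⟨w, h0⟩ fun a => by simpa using hw a.succ)

lemma exists_separating_of_finrank_le [Nonempty I] (φ : I → V →ₗ[ℂ] ℂ) {m : ℕ}
    (hm : Module.finrank ℂ V ≤ m) (hφ : ∀ v, (∀ i, φ i v = 0) → v = 0) :
    ∃ h : Fin m → I, ∀ v, (∀ a, φ (h a) v = 0) → v = 0 := by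
  obtain ⟨h, hh⟩ := exists_separating_fin (I := I) _ V φ rfl hφ
  refine ⟨fun a => if ha : a.1 < Module.finrank ℂ V then h ⟨a, ha⟩ else Classical.arbitrary I,
    fun v hv => hh v fun a => ?_⟩
  have := hv ⟨a, by omega⟩
  simpa using this

lemma finrank_le_of_separating [Fintype I] (φ : I → V →ₗ[ℂ] ℂ)
    (hφ : ∀ v, (∀ i, φ i v = 0) → v = 0) : Module.finrank ℂ V ≤ Fintype.card I := by
  have := LinearMap.finrank_le_finrank_of_injective (f := LinearMap.pi φ)
    (LinearMap.ker_eq_bot.mp (LinearMap.ker_eq_bot'.mpr fun v hv =>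
      hφ v fun i => congrFun hv i))
  simpa using this

/-- If functionals depending polynomially on `t` separate points at one parameter, they do so
for all but finitely many parameters. -/
lemma finite_not_separating (φ : ℂ → I → V →ₗ[ℂ] ℂ)
    (hφ : ∀ i v, ∃ P : Polynomial ℂ, ∀ t, φ t i v = P.eval t) (t₀ : ℂ)
    (h₀ : ∀ v, (∀ i, φ t₀ i v = 0) → v = 0) :
    {t | ¬ ∀ v, (∀ i, φ t i v = 0) → v = 0}.Finite := by
  classical
  obtain ⟨h, hh⟩ := exists_separating_fin (I := I) _ V (φ t₀) rfl h₀
  choose P hP using hφ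
  let b := Module.finBasis ℂ V
  let M : Matrix (Fin (Module.finrank ℂ V)) (Fin (Module.finrank ℂ V)) (Polynomial ℂ) :=
    Matrix.of fun a c => P (h a) (b c)
  have hM : ∀ t x a, ((M.map (Polynomial.eval t)).mulVec x) a
      = φ t (h a) (∑ c, x c • b c) := by
    intro t x a
    simp only [Matrix.mulVec, dotProduct, Matrix.map_apply, M, Matrix.of_apply, ← hP, map_sum,
      map_smul, smul_eq_mul, mul_comm]
  have hdet : ∀ t, M.det.eval t = (M.map (Polynomial.eval t)).det := fun t =>
    RingHom.map_det (Polynomial.evalRingHom t) M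
  have hM0 : M.det ≠ 0 := by
    intro h0
    have h1 : (M.map (Polynomial.eval t₀)).det = 0 := by rw [← hdet, h0, Polynomial.eval_zero]
    obtain ⟨x, hx, hx0⟩ := Matrix.exists_mulVec_eq_zero_iff.mpr h1
    refine hx ?_
    have h2 := hh (∑ c, x c • b c) fun a => by rw [← hM, hx0]; rfl
    funext c
    exact Fintype.linearIndependent_iff.mp b.linearIndependent x h2 c
  refine (Polynomial.finite_setOfPred_isRoot hM0).subset fun t ht => ?_
  simp only [Set.mem_ofPred_eq, Polynomial.IsRoot.def] at ht ⊢
  by_contra hne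
  refine ht fun v hv => ?_
  by_contra hv0
  refine hne ?_
  rw [hdet]
  refine Matrix.exists_mulVec_eq_zero_iff.mp ⟨b.repr v, fun h0 => hv0 ?_, ?_⟩
  · exact b.repr.map_eq_zero_iff.mp (Finsupp.ext fun c => congrFun h0 c)
  · funext a
    rw [hM, b.sum_repr]
    exact hv (h a)

end Separation

section Lines

/-- A set whose trace on every line through one of its points is cofinite. -/
def LineCofinite {E : Type*} [AddCommGroup E] [Module ℂ E] (U : Set E) : Prop :=
  ∀ x ∈ U, ∀ y, {t : ℂ | x + t • (y - x) ∉ U}.Finite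

/-- Compatibility with the affine parametrization of lines. -/
def LineMap {E F : Type*} [AddCommGroup E] [Module ℂ E] [AddCommGroup F] [Module ℂ F]
    (g : E → F) : Prop :=
  ∀ x y (t : ℂ), g (x + t • (y - x)) = g x + t • (g y - g x)

variable {E F : Type*} [AddCommGroup E] [Module ℂ E] [AddCommGroup F] [Module ℂ F]

lemma LineCofinite.inter {U V : Set E} (hU : LineCofinite U) (hV : LineCofinite V) :
    LineCofinite (U ∩ V) := by
  intro x hx y
  refine ((hU x hx.1 y).union (hV x hx.2 y)).subset fun t ht => ?_
  by_contra hcon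
  simp only [Set.mem_union, Set.mem_ofPred_eq, not_or, not_not] at hcon
  exact ht ⟨hcon.1, hcon.2⟩

lemma LineCofinite.inter_nonempty {U V : Set E} (hU : LineCofinite U) (hV : LineCofinite V)
    (hU' : U.Nonempty) (hV' : V.Nonempty) : (U ∩ V).Nonempty := by
  obtain ⟨x, hx⟩ := hU'
  obtain ⟨y, hy⟩ := hV'
  have h1 := hU x hx y
  have h2 : {t : ℂ | x + t • (y - x) ∉ V}.Finite := by
    refine ((hV y hy x).image fun t => 1 - t).subset fun t ht => ⟨1 - t, ?_, by ring⟩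
    have : y + (1 - t) • (x - y) = x + t • (y - x) := by module
    simpa [this] using ht
  obtain ⟨t, ht⟩ := (h1.union h2).infinite_compl.nonempty
  simp only [Set.mem_compl_iff, Set.mem_union, Set.mem_ofPred_eq, not_or, not_not] at ht
  exact ⟨_, ht⟩

lemma lineCofinite_ne_zero {g : E → ℂ} (hg : LineMap g) : LineCofinite {x | g x ≠ 0} := by
  intro x hx y
  simp only [Set.mem_ofPred_eq, not_not, hg x y] at hx ⊢
  refine Set.Subsingleton.finite fun s hs t ht => ?_
  simp only [Set.mem_ofPred_eq, smul_eq_mul] at hs ht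
  have h1 : (s - t) * (g y - g x) = 0 := by linear_combination hs - ht
  rcases mul_eq_zero.mp h1 with h | h
  · exact sub_eq_zero.mp h
  · rw [h] at hs
    exact absurd (by simpa using hs) hx

lemma lineCofinite_forall {ι : Type*} [Finite ι] {U : ι → Set E}
    (hU : ∀ i, LineCofinite (U i)) : LineCofinite {x | ∀ i, x ∈ U i} := by
  intro x hx y
  refine (Set.finite_iUnion fun i => hU i x (hx i) y).subset fun t ht => ?_
  simpa using ht

end Lines

section Kill

variable {σ τ : Type*} [Fintype σ] [Fintype τ]

/-- The derivative of `f` at `p` in the direction `w`, as a functional of `f`. -/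
noncomputable def dirD (p w : σ → ℂ) : MvPolynomial σ ℂ →ₗ[ℂ] ℂ :=
  ∑ i, w i • ((aeval p).toLinearMap ∘ₗ (pderiv i).toLinearMap)

lemma dirD_apply (p w : σ → ℂ) (f : MvPolynomial σ ℂ) :
    dirD p w f = ∑ i, w i * eval p (pderiv i f) := by
  simp [dirD, coe_aeval_eq_eval]

/-- All first partial derivatives of `f` vanish at `p`. -/
def Sing (f : MvPolynomial σ ℂ) (p : σ → ℂ) : Prop := ∀ i, eval p (pderiv i f) = 0

lemma Sing.dirD_eq_zero {f : MvPolynomial σ ℂ} {p : σ → ℂ} (h : Sing f p) (w : σ → ℂ) :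
    dirD p w f = 0 := by
  simp [dirD_apply, h _]

lemma sing_iff_dirD [DecidableEq σ] {f : MvPolynomial σ ℂ} {p : σ → ℂ} :
    Sing f p ↔ ∀ i, dirD p (Pi.single i 1) f = 0 := by
  simp [Sing, dirD_apply, Pi.single_apply]

/-- The forms of degree `d`. -/
def degSet (σ : Type*) (d : ℕ) : Set (σ →₀ ℕ) := {μ | μ.degree = d}

/-- No nonzero polynomial supported on `S` is singular at all points of `P` and has vanishing
directional derivatives along all `Q`. -/
def Kill {ι κ : Type*} (S : Set (σ →₀ ℕ)) (P : ι → σ → ℂ) (Q : κ → (σ → ℂ) × (σ → ℂ)) : Prop :=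
  ∀ f ∈ restrictSupport ℂ S, (∀ a, Sing f (P a)) → (∀ b, dirD (Q b).1 (Q b).2 f = 0) → f = 0

lemma degSet_finite (d : ℕ) : (degSet σ d).Finite := by
  classical
  refine (Finset.finite_toSet (Finset.finsuppAntidiag (Finset.univ : Finset σ) d)).subset
    fun μ hμ => ?_
  simp only [degSet, Set.mem_ofPred_eq, Finsupp.degree_eq_sum] at hμ
  simpa [Finset.mem_finsuppAntidiag] using hμ

lemma finiteDimensional_restrictSupport {S : Set (σ →₀ ℕ)} (hS : S.Finite) :
    FiniteDimensional ℂ (restrictSupport ℂ S) := by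
  have := hS.to_subtype
  exact Module.Basis.finiteDimensional_of_finite (basisRestrictSupport ℂ S)

lemma exists_polynomial_eval_line (a b : σ → ℂ) (g : MvPolynomial σ ℂ) :
    ∃ R : Polynomial ℂ, ∀ t, eval (a + t • b) g = R.eval t := by
  refine ⟨aeval (fun i => Polynomial.C (a i) + Polynomial.C (b i) * Polynomial.X) g, fun t => ?_⟩
  induction g using MvPolynomial.induction_on with
  | C c => simp
  | add p q hp hq => simp [hp, hq]
  | mul_X p i hp => simp [hp, mul_comm (b i) t]

lemma exists_polynomial_dirD_line (a b v w : σ → ℂ) (f : MvPolynomial σ ℂ) :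
    ∃ R : Polynomial ℂ, ∀ t : ℂ, dirD (a + t • b) (v + t • w) f = R.eval t := by
  choose R hR using fun i => exists_polynomial_eval_line a b (pderiv i f)
  refine ⟨∑ i, (Polynomial.C (v i) + Polynomial.C (w i) * Polynomial.X) * R i, fun t => ?_⟩
  simp only [dirD_apply, hR, Polynomial.eval_finsetSum, Pi.add_apply, Pi.smul_apply, smul_eq_mul,
    Polynomial.eval_mul, Polynomial.eval_add, Polynomial.eval_C, Polynomial.eval_X, mul_comm t]

lemma lineCofinite_kill {E ι κ : Type*} [AddCommGroup E] [Module ℂ E] {S : Set (σ →₀ ℕ)}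
    (hS : S.Finite) {P : E → ι → σ → ℂ} {Q : E → κ → (σ → ℂ) × (σ → ℂ)}
    (hP : LineMap P) (hQ : LineMap Q) : LineCofinite {x | Kill S (P x) (Q x)} := by
  classical
  intro x hx y
  have := finiteDimensional_restrictSupport hS
  let φ : ℂ → (ι × σ) ⊕ κ → restrictSupport ℂ S →ₗ[ℂ] ℂ := fun t => Sum.elim
    (fun a => (dirD (P (x + t • (y - x)) a.1) (Pi.single a.2 1)).comp (Submodule.subtype _))
    (fun b => (dirD (Q (x + t • (y - x)) b).1 (Q (x + t • (y - x)) b).2).comp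
      (Submodule.subtype _))
  have key : ∀ t, Kill S (P (x + t • (y - x))) (Q (x + t • (y - x))) ↔
      ∀ v, (∀ i, φ t i v = 0) → v = 0 := by
    intro t
    simp only [Kill, φ, Sum.forall, Sum.elim_inl, Sum.elim_inr, Subtype.forall, Prod.forall,
      sing_iff_dirD, LinearMap.comp_apply, Submodule.subtype_apply, and_imp,
      Submodule.mk_eq_zero]
  have := finite_not_separating φ ?_ 0 ((key 0).mp (by simpa using hx))
  · refine this.subset fun t ht => ?_
    simpa only [Set.mem_ofPred_eq, ← key t] using ht
  · rintro (⟨a, i⟩ | b) v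
    · obtain ⟨R, hR⟩ := exists_polynomial_dirD_line (P x a) (P y a - P x a) (Pi.single i 1) 0 v.1
      exact ⟨R, fun t => by simpa [φ, hP x y t] using hR t⟩
    · obtain ⟨R, hR⟩ := exists_polynomial_dirD_line (Q x b).1 ((Q y b).1 - (Q x b).1)
        (Q x b).2 ((Q y b).2 - (Q x b).2) v.1
      exact ⟨R, fun t => by simpa [φ, hQ x y t] using hR t⟩

lemma euler {d : ℕ} {f : MvPolynomial σ ℂ} (hf : f ∈ restrictSupport ℂ (degSet σ d))
    (p : σ → ℂ) : dirD p p f = d * eval p f := by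
  have h1 : f.IsHomogeneous d := by
    intro μ hμ
    have : μ ∈ degSet σ d := hf (mem_support_iff.mpr hμ)
    exact (DFunLike.congr_fun Finsupp.degree_eq_weight_one μ).symm.trans this
  have := congrArg (eval p) h1.sum_X_mul_pderiv
  simpa [dirD_apply] using this

/-- The extension of a vector by zero along `j`. -/
noncomputable def ext (j : τ → σ) (p : τ → ℂ) : σ → ℂ := Function.extend j p 0

lemma eval_killCompl {j : τ → σ} (hj : Function.Injective j) (p : τ → ℂ)
    (f : MvPolynomial σ ℂ) : eval p (killCompl hj f) = eval (ext j p) f := by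
  induction f using MvPolynomial.induction_on with
  | C c => simp
  | add f g hf hg => simp [hf, hg]
  | mul_X f i hf =>
    rw [map_mul, map_mul, hf, map_mul, eval_X]
    congr 1
    by_cases hi : ∃ a, j a = i
    · obtain ⟨a, rfl⟩ := hi
      rw [← rename_X j a, killCompl_rename_app, eval_X, ext, hj.extend_apply]
    · have hi' : i ∉ Set.range j := hi
      simp [killCompl, hi', ext, Function.extend_apply' _ _ _ hi]

lemma pderiv_killCompl {j : τ → σ} (hj : Function.Injective j) (a : τ)
    (f : MvPolynomial σ ℂ) : pderiv a (killCompl hj f) = killCompl hj (pderiv (j a) f) := by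
  classical
  induction f using MvPolynomial.induction_on with
  | C c => simp
  | add f g hf hg => simp [hf, hg]
  | mul_X f i hf =>
    simp only [map_mul, Derivation.leibniz, hf, smul_eq_mul, map_add]
    congr 2
    by_cases hi : ∃ a, j a = i
    · obtain ⟨b, rfl⟩ := hi
      rw [← rename_X j b, killCompl_rename_app, rename_X, pderiv_X, pderiv_X]
      by_cases hab : a = b
      · simp [hab]
      · have : j b ≠ j a := fun h => hab (hj h).symm
        simp [Pi.single_apply, this, hab, Ne.symm hab]
    · have hi' : i ∉ Set.range j := hi
      have hne : i ≠ j a := fun h => hi ⟨a, h.symm⟩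
      have h0 : MvPolynomial.killCompl hj (X i : MvPolynomial σ ℂ) = 0 := by
        rw [MvPolynomial.killCompl, aeval_X, dif_neg hi']
      simp [h0, pderiv_X, Pi.single_apply, hne]

lemma coeff_killCompl {j : τ → σ} (hj : Function.Injective j) (ν : τ →₀ ℕ)
    (f : MvPolynomial σ ℂ) : coeff ν (killCompl hj f) = coeff (ν.mapDomain j) f := by
  classical
  induction f using MvPolynomial.monomial_add_induction_on with
  | C c =>
    rw [killCompl_C, coeff_C, coeff_C]
    congr 1
    exact propext ⟨fun h => by simp [← h], fun h =>
      Finsupp.mapDomain_injective hj (by rw [← h, Finsupp.mapDomain_zero])⟩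
  | monomial_add μ c f _ _ hf =>
    rw [map_add, coeff_add, hf, coeff_add]
    congr 1
    by_cases hμ : ↑μ.support ⊆ Set.range j
    · obtain ⟨ν', rfl⟩ : ∃ ν', Finsupp.mapDomain j ν' = μ :=
        ⟨μ.comapDomain j hj.injOn, Finsupp.mapDomain_comapDomain j hj μ hμ⟩
      rw [← rename_monomial, killCompl_rename_app, rename_monomial, coeff_monomial,
        coeff_monomial]
      simp [(Finsupp.mapDomain_injective hj).eq_iff]
    · obtain ⟨i, hi, hi'⟩ := Set.not_subset.mp hμ
      have h1 : killCompl hj (monomial μ c) = 0 := by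
        rw [killCompl, aeval_monomial, Finsupp.prod, Finset.prod_eq_zero hi, mul_zero]
        rw [dif_neg hi', zero_pow (Finsupp.mem_support_iff.mp hi)]
      rw [h1, coeff_zero, coeff_monomial, if_neg]
      rintro rfl
      have := Finsupp.mapDomain_support hi
      simp only [Finset.mem_image] at this
      obtain ⟨a, -, ha⟩ := this
      exact hi' ⟨a, ha⟩

lemma dirD_killCompl {j : τ → σ} (hj : Function.Injective j) (p w : τ → ℂ)
    (f : MvPolynomial σ ℂ) : dirD p w (killCompl hj f) = dirD (ext j p) (ext j w) f := by
  classical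
  rw [dirD_apply, dirD_apply]
  simp only [pderiv_killCompl, eval_killCompl]
  refine Finset.sum_of_injOn j hj.injOn (by simp) (fun i _ hi => ?_) fun a _ => ?_
  · have : ¬ ∃ a, j a = i := by simpa using hi
    simp [ext, Function.extend_apply' _ _ _ this]
  · simp [ext, hj.extend_apply]

lemma Sing.killCompl {j : τ → σ} (hj : Function.Injective j) {p : τ → ℂ}
    {f : MvPolynomial σ ℂ} (h : Sing f (ext j p)) : Sing (killCompl hj f) p := fun a => by
  rw [pderiv_killCompl, eval_killCompl, h]

/-- Restriction to a coordinate subspace: conditions that kill all forms on the subspace kill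
all coefficients of monomials in its variables. -/
lemma Kill.coeff_eq_zero {ι κ : Type*} {j : τ → σ} (hj : Function.Injective j)
    {T : Set (τ →₀ ℕ)} {P : ι → τ → ℂ} {Q : κ → (τ → ℂ) × (τ → ℂ)} (hK : Kill T P Q)
    {f : MvPolynomial σ ℂ} (hT : ∀ ν : τ →₀ ℕ, coeff (ν.mapDomain j) f ≠ 0 → ν ∈ T)
    (hP : ∀ a, Sing f (ext j (P a)))
    (hQ : ∀ b, dirD (ext j (Q b).1) (ext j (Q b).2) f = 0) (ν : τ →₀ ℕ) :
    coeff (ν.mapDomain j) f = 0 := by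
  rw [← coeff_killCompl hj, hK (MvPolynomial.killCompl hj f) ?_ (fun a => (hP a).killCompl hj)
    (fun b => by rw [dirD_killCompl, hQ]), coeff_zero]
  intro ν hν
  refine hT ν ?_
  rw [← coeff_killCompl hj]
  exact mem_support_iff.mp hν

lemma lineMap_ext (j : τ → σ) (hj : Function.Injective j) : LineMap (ext j) := by
  intro x y t
  funext i
  by_cases hi : ∃ a, j a = i
  · obtain ⟨a, rfl⟩ := hi
    simp [ext, hj.extend_apply]
  · simp [ext, Function.extend_apply' _ _ _ hi]

end Kill

section LinearChange

variable {σ τ : Type*} [Fintype σ] [Fintype τ]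

lemma sing_iff_forall_dirD {f : MvPolynomial σ ℂ} {p : σ → ℂ} :
    Sing f p ↔ ∀ w, dirD p w f = 0 := by
  classical
  exact ⟨fun h w => h.dirD_eq_zero w, fun h => sing_iff_dirD.mpr fun i => h _⟩

lemma dirD_mul (p w : σ → ℂ) (f g : MvPolynomial σ ℂ) :
    dirD p w (f * g) = dirD p w f * eval p g + eval p f * dirD p w g := by
  simp only [dirD_apply, Derivation.leibniz, smul_eq_mul, map_add, map_mul, Finset.sum_mul,
    Finset.mul_sum, ← Finset.sum_add_distrib]
  exact Finset.sum_congr rfl fun i _ => by ring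

lemma dirD_X (p w : σ → ℂ) (i : σ) : dirD p w (X i) = w i := by
  classical
  simp [dirD_apply, pderiv_X, Pi.single_apply, apply_ite]

lemma dirD_C (p w : σ → ℂ) (c : ℂ) : dirD p w (C c) = 0 := by
  simp [dirD_apply]

lemma isHomogeneous_of_mem {d : ℕ} {f : MvPolynomial σ ℂ}
    (hf : f ∈ restrictSupport ℂ (degSet σ d)) : f.IsHomogeneous d := by
  intro μ hμ
  have : μ ∈ degSet σ d := hf (mem_support_iff.mpr hμ)
  exact (DFunLike.congr_fun Finsupp.degree_eq_weight_one μ).symm.trans this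

lemma mem_of_isHomogeneous {d : ℕ} {f : MvPolynomial σ ℂ}
    (hf : f.IsHomogeneous d) : f ∈ restrictSupport ℂ (degSet σ d) := fun μ hμ =>
  (DFunLike.congr_fun Finsupp.degree_eq_weight_one μ).trans (hf (mem_support_iff.mp hμ))

/-- Composition of a polynomial with a linear map. -/
noncomputable def linSubst (A : (τ → ℂ) →ₗ[ℂ] (σ → ℂ)) :
    MvPolynomial σ ℂ →ₐ[ℂ] MvPolynomial τ ℂ := by
  classical
  exact aeval fun i => ∑ j, C (A (Pi.single j 1) i) * X j

lemma linearMap_apply_eq_sum [DecidableEq τ] (A : (τ → ℂ) →ₗ[ℂ] (σ → ℂ)) (p : τ → ℂ) (i : σ) :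
    A p i = ∑ j, A (Pi.single j 1) i * p j := by
  rw [A.pi_apply_eq_sum_univ p]
  simp only [Finset.sum_apply, Pi.smul_apply, smul_eq_mul, mul_comm]
  refine Finset.sum_congr rfl fun j _ => ?_
  have : (fun k => if j = k then (1 : ℂ) else 0) = Pi.single j 1 := by
    funext k
    simp [Pi.single_apply, eq_comm]
  rw [this]

lemma eval_linSubst (A : (τ → ℂ) →ₗ[ℂ] (σ → ℂ)) (p : τ → ℂ) (f : MvPolynomial σ ℂ) :
    eval p (linSubst A f) = eval (A p) f := by
  classical
  induction f using MvPolynomial.induction_on with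
  | C c => simp [linSubst]
  | add f g hf hg => simp [hf, hg]
  | mul_X f i hf =>
    rw [map_mul, map_mul, hf, map_mul, eval_X]
    congr 1
    rw [linearMap_apply_eq_sum A p i]
    simp [linSubst]

lemma dirD_linSubst (A : (τ → ℂ) →ₗ[ℂ] (σ → ℂ)) (p w : τ → ℂ) (f : MvPolynomial σ ℂ) :
    dirD p w (linSubst A f) = dirD (A p) (A w) f := by
  classical
  induction f using MvPolynomial.induction_on with
  | C c => simp [linSubst, dirD_C, algebraMap_eq]
  | add f g hf hg => simp [hf, hg]
  | mul_X f i hf =>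
    rw [map_mul, dirD_mul, dirD_mul, hf, eval_linSubst, eval_linSubst, dirD_X]
    congr 2
    rw [linearMap_apply_eq_sum A w i]
    simp [linSubst, dirD_mul, dirD_X, dirD_C]

lemma linSubst_mem (A : (τ → ℂ) →ₗ[ℂ] (σ → ℂ)) {d : ℕ} {f : MvPolynomial σ ℂ}
    (hf : f ∈ restrictSupport ℂ (degSet σ d)) :
    linSubst A f ∈ restrictSupport ℂ (degSet τ d) := by
  classical
  refine mem_of_isHomogeneous ?_
  have := (isHomogeneous_of_mem hf).aeval (fun i => ∑ j, C (A (Pi.single j 1) i) * X j)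
    (n := 1) (fun i => IsHomogeneous.sum _ _ _ fun j _ => by
      simpa using (isHomogeneous_C _ _).mul (isHomogeneous_X ℂ j))
  simpa [linSubst] using this

lemma Kill.map_linear {ι κ : Type*} {d : ℕ} {P : ι → τ → ℂ} {Q : κ → (τ → ℂ) × (τ → ℂ)}
    (h : Kill (degSet τ d) P Q) (A : (τ → ℂ) →ₗ[ℂ] (σ → ℂ)) (hA : Function.Surjective A) :
    Kill (degSet σ d) (fun a => A (P a)) (fun b => (A (Q b).1, A (Q b).2)) := by
  intro f hf hP hQ
  have h0 := h (linSubst A f) (linSubst_mem A hf)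
    (fun a => sing_iff_forall_dirD.mpr fun w => by
      rw [dirD_linSubst]; exact (hP a).dirD_eq_zero _)
    (fun b => by rw [dirD_linSubst]; exact hQ b)
  refine MvPolynomial.funext fun p => ?_
  obtain ⟨q, rfl⟩ := hA p
  rw [← eval_linSubst, h0, map_zero, map_zero]

end LinearChange

section Existence

variable {σ τ : Type*} [Fintype σ] [Fintype τ]

/-- There are double points indexed by `ι` and simple points indexed by `κ` imposing enough
conditions to kill all forms of degree `d` in the variables `σ`. -/
def KT (σ ι κ : Type*) [Fintype σ] (d : ℕ) : Prop :=
  ∃ (P : ι → σ → ℂ) (Q : κ → σ → ℂ), Kill (degSet σ d) P (fun b => (Q b, Q b))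

/-- `KT` for the standard index types. -/
def K (N d k s : ℕ) : Prop := KT (Fin N) (Fin k) (Fin s) d

lemma KT.of_surjective {ι ι' κ κ' : Type*} {d : ℕ} (h : KT σ ι κ d) (e : τ ≃ σ)
    {i : ι' → ι} (hi : i.Surjective) {j : κ' → κ} (hj : j.Surjective) : KT τ ι' κ' d := by
  obtain ⟨P, Q, h⟩ := h
  have h' := h.map_linear (LinearMap.funLeft ℂ ℂ e)
    (LinearMap.funLeft_surjective_of_injective ℂ ℂ e e.injective)
  refine ⟨fun a => LinearMap.funLeft ℂ ℂ e (P (i a)), fun b => LinearMap.funLeft ℂ ℂ e (Q (j b)),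
    fun f hf hP hQ => h' f hf (fun a => ?_) fun b => ?_⟩
  · obtain ⟨a, rfl⟩ := hi a
    exact hP a
  · obtain ⟨b, rfl⟩ := hj b
    exact hQ b

lemma kT_iff_K {ι κ : Type*} [Fintype ι] [Fintype κ] {d : ℕ} :
    KT σ ι κ d ↔ K (Fintype.card σ) d (Fintype.card ι) (Fintype.card κ) :=
  ⟨fun h => h.of_surjective (Fintype.equivFin σ).symm (Fintype.equivFin ι).symm.surjective
      (Fintype.equivFin κ).symm.surjective,
    fun h => h.of_surjective (Fintype.equivFin σ) (Fintype.equivFin ι).surjective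
      (Fintype.equivFin κ).surjective⟩

lemma K.toKT {ι κ : Type*} [Fintype ι] [Fintype κ] {N d k s : ℕ} (h : K N d k s)
    (hN : Fintype.card σ = N) (hk : Fintype.card ι = k) (hs : Fintype.card κ = s) :
    KT σ ι κ d := by
  subst hN hk hs
  exact kT_iff_K.mpr h

lemma K.mono {N d k s k' s' : ℕ} (h : K N d k s) (hk : k ≤ k') (hs : s ≤ s') : K N d k' s' := by
  obtain ⟨P, Q, h⟩ := h
  refine ⟨fun a => if ha : a.1 < k then P ⟨a, ha⟩ else 0,
    fun b => if hb : b.1 < s then Q ⟨b, hb⟩ else 0, fun f hf hP hQ => h f hf (fun a => ?_)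
    fun b => ?_⟩
  · simpa using hP ⟨a, by omega⟩
  · simpa using hQ ⟨b, by omega⟩

/-- If `m` functionals separate the points of `V`, then any separating family contains a
separating subfamily of size `m`. -/
lemma exists_separating_subfamily {M I κ : Type*} [AddCommGroup M] [Module ℂ M] [Nonempty I]
    [Fintype κ] (V : Submodule ℂ M) [FiniteDimensional ℂ V] (φ : I → M →ₗ[ℂ] ℂ)
    (ψ : κ → M →ₗ[ℂ] ℂ) {m : ℕ} (hm : Fintype.card κ ≤ m)
    (hψ : ∀ f ∈ V, (∀ i, ψ i f = 0) → f = 0) (hφ : ∀ f ∈ V, (∀ i, φ i f = 0) → f = 0) :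
    ∃ h : Fin m → I, ∀ f ∈ V, (∀ a, φ (h a) f = 0) → f = 0 := by
  have h1 : Module.finrank ℂ V ≤ m :=
    (finrank_le_of_separating (fun i => (ψ i).comp V.subtype)
      fun v hv => Subtype.ext (hψ v v.2 hv)).trans hm
  obtain ⟨h, hh⟩ := exists_separating_of_finrank_le (fun i => (φ i).comp V.subtype) h1
    fun v hv => Subtype.ext (hφ v v.2 hv)
  exact ⟨h, fun f hf h0 => congrArg Subtype.val (hh ⟨f, hf⟩ h0)⟩

/-- The polynomials supported in `S`, singular along `P`, with vanishing directional derivatives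
along `Q`. -/
noncomputable def condSpace {ι κ : Type*} (S : Set (σ →₀ ℕ)) (P : ι → σ → ℂ)
    (Q : κ → (σ → ℂ) × (σ → ℂ)) :
    Submodule ℂ (MvPolynomial σ ℂ) :=
  restrictSupport ℂ S ⊓ ((⨅ a, ⨅ w, LinearMap.ker (dirD (P a) w)) ⊓
    ⨅ b, LinearMap.ker (dirD (Q b).1 (Q b).2))

lemma mem_condSpace {ι κ : Type*} {S : Set (σ →₀ ℕ)} {P : ι → σ → ℂ}
    {Q : κ → (σ → ℂ) × (σ → ℂ)} {f : MvPolynomial σ ℂ} :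
    f ∈ condSpace S P Q ↔
      f ∈ restrictSupport ℂ S ∧ (∀ a, Sing f (P a)) ∧ ∀ b, dirD (Q b).1 (Q b).2 f = 0 := by
  simp [condSpace, sing_iff_forall_dirD]

lemma finiteDimensional_condSpace {ι κ : Type*} {S : Set (σ →₀ ℕ)} (hS : S.Finite)
    (P : ι → σ → ℂ) (Q : κ → (σ → ℂ) × (σ → ℂ)) : FiniteDimensional ℂ (condSpace S P Q) := by
  have := finiteDimensional_restrictSupport hS
  exact Submodule.finiteDimensional_of_le (S₂ := restrictSupport ℂ S) inf_le_left

/-- Double points may be traded for simple points. -/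
lemma K.trade {N d k s k' s' : ℕ} (hd : d ≠ 0) (h : K N d k s) (hk : k' ≤ k)
    (hs : N * k + s ≤ N * k' + s') : K N d k' s' := by
  classical
  obtain ⟨P, Q, h⟩ := h
  let P' : Fin k' → Fin N → ℂ := fun a => P (Fin.castLE hk a)
  have := finiteDimensional_condSpace (degSet_finite (σ := Fin N) d) P' Empty.elim
  suffices hs : ∃ q : Fin s' → Fin N → ℂ, ∀ f ∈ condSpace (degSet (Fin N) d) P' Empty.elim,
      (∀ a, dirD (q a) (q a) f = 0) → f = 0 by
    obtain ⟨q, hq⟩ := hs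
    exact ⟨P', q, fun f hf hP hQ => hq f (mem_condSpace.mpr ⟨hf, hP, fun b => b.elim⟩) hQ⟩
  refine exists_separating_subfamily (condSpace (degSet (Fin N) d) P' Empty.elim)
    (fun p : Fin N → ℂ => dirD p p) (m := s') (Sum.elim
      (fun a : Fin (k - k') × Fin N => dirD (P ⟨k' + a.1, by omega⟩) (Pi.single a.2 1))
      fun b => dirD (Q b) (Q b)) ?_ ?_ ?_
  · simp only [Fintype.card_sum, Fintype.card_prod, Fintype.card_fin]
    obtain ⟨e, rfl⟩ := Nat.exists_eq_add_of_le hk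
    rw [Nat.add_sub_cancel_left]
    nlinarith
  · intro f hf hv
    obtain ⟨hf, hP, -⟩ := mem_condSpace.mp hf
    refine h f hf (fun a => ?_) fun b => hv (Sum.inr b)
    by_cases ha : a.1 < k'
    · exact hP ⟨a, ha⟩
    · rw [sing_iff_dirD]
      intro i
      have := hv (Sum.inl (⟨a - k', by omega⟩, i))
      have he : (⟨k' + (a.1 - k'), by omega⟩ : Fin k) = a := Fin.ext (by simp; omega)
      simpa [he] using this
  · intro f hf hv
    obtain ⟨hf, -⟩ := mem_condSpace.mp hf
    refine MvPolynomial.funext fun p => ?_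
    have := hv p
    rw [euler hf] at this
    simpa [hd] using this

end Existence

section Horace

variable {σ : Type*} [Fintype σ]

/-- The point with last coordinate `t` above `q`. -/
def pt (q : σ → ℂ) (t : ℂ) : Option σ → ℂ := fun o => o.elim t q

@[simp] lemma pt_none (q : σ → ℂ) (t : ℂ) : pt q t none = t := rfl

@[simp] lemma pt_some (q : σ → ℂ) (t : ℂ) (i : σ) : pt q t (some i) = q i := rfl

lemma pt_comp_some (q : σ → ℂ) (t : ℂ) : pt q t ∘ some = q := rfl

lemma pt_eq [DecidableEq σ] (q : σ → ℂ) (t : ℂ) :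
    pt q t = pt q 0 + t • (Pi.single none 1 : Option σ → ℂ) := by
  funext o
  cases o <;> simp

lemma lineMap_pt_zero : LineMap fun q : σ → ℂ => pt q 0 := by
  intro x y t
  funext o
  cases o <;> simp

lemma exists_decomp {d : ℕ} {f : MvPolynomial (Option σ) ℂ}
    (hf : f ∈ restrictSupport ℂ (degSet (Option σ) (d + 1))) :
    ∃ a ∈ restrictSupport ℂ (degSet σ (d + 1)), ∃ b ∈ restrictSupport ℂ (degSet (Option σ) d),
      f = rename some a + X none * b := by
  classical
  rw [restrictSupport_eq_span] at hf
  induction hf using Submodule.span_induction with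
  | mem f h =>
    obtain ⟨μ, hμ, rfl⟩ := h
    have hμ' : μ.degree = d + 1 := hμ
    by_cases h0 : μ none = 0
    · have hr : ↑μ.support ⊆ Set.range (some : σ → Option σ) := by
        intro o ho
        cases o with
        | none => exact absurd h0 (Finsupp.mem_support_iff.mp ho)
        | some i => exact ⟨i, rfl⟩
      have he := Finsupp.mapDomain_comapDomain some (Option.some_injective σ) μ hr
      refine ⟨monomial (μ.comapDomain some (Option.some_injective σ).injOn) 1, ?_, 0,
        Submodule.zero_mem _, by rw [rename_monomial, he, mul_zero, add_zero]⟩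
      refine mem_of_isHomogeneous (isHomogeneous_monomial _ ?_)
      rw [← hμ']
      conv_rhs => rw [← he]
      rw [Finsupp.degree_mapDomain]
    · refine ⟨0, Submodule.zero_mem _, monomial (μ - Finsupp.single none 1) 1, ?_, ?_⟩
      · refine mem_of_isHomogeneous (isHomogeneous_monomial _ ?_)
        have h1 : μ - Finsupp.single none 1 + Finsupp.single none 1 = μ :=
          tsub_add_cancel_of_le (by simpa [Nat.one_le_iff_ne_zero] using h0)
        have := congrArg Finsupp.degree h1
        rw [map_add, Finsupp.degree_single, hμ'] at this
        omega
      · rw [map_zero, zero_add, X, monomial_mul, one_mul,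
          add_tsub_cancel_of_le (by simpa [Nat.one_le_iff_ne_zero] using h0)]
  | zero => exact ⟨0, Submodule.zero_mem _, 0, Submodule.zero_mem _, by simp⟩
  | add f g _ _ hf hg =>
    obtain ⟨a, ha, b, hb, rfl⟩ := hf
    obtain ⟨a', ha', b', hb', rfl⟩ := hg
    exact ⟨a + a', Submodule.add_mem _ ha ha', b + b', Submodule.add_mem _ hb hb', by
      rw [map_add]; ring⟩
  | smul c f _ hf =>
    obtain ⟨a, ha, b, hb, rfl⟩ := hf
    exact ⟨c • a, Submodule.smul_mem _ _ ha, c • b, Submodule.smul_mem _ _ hb, by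
      rw [map_smul, smul_add, mul_smul_comm]⟩

lemma eval_pderiv_none (x : Option σ → ℂ) (c : ℂ) (a : MvPolynomial σ ℂ)
    (b : MvPolynomial (Option σ) ℂ) :
    eval x (pderiv none (c • rename some a + X none * b)) =
      eval x b + x none * eval x (pderiv none b) := by
  classical
  have : pderiv none (rename some a) = 0 := by
    refine pderiv_eq_zero_of_notMem_vars fun h => ?_
    have := vars_rename some a h
    simp at this
  simp [this, pderiv_X_self]
  ring

lemma eval_pderiv_some (x : Option σ → ℂ) (c : ℂ) (a : MvPolynomial σ ℂ)
    (b : MvPolynomial (Option σ) ℂ) (i : σ) :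
    eval x (pderiv (some i) (c • rename some a + X none * b)) =
      c * eval (x ∘ some) (pderiv i a) + x none * eval x (pderiv (some i) b) := by
  classical
  rw [map_add, Derivation.map_smul, pderiv_rename (Option.some_injective σ), Derivation.leibniz,
    pderiv_X_of_ne (by simp)]
  simp [eval_rename]

lemma eval_decomp (x : Option σ → ℂ) (c : ℂ) (a : MvPolynomial σ ℂ)
    (b : MvPolynomial (Option σ) ℂ) :
    eval x (c • rename some a + X none * b) = c * eval (x ∘ some) a + x none * eval x b := by
  simp [eval_rename]

lemma eval_euler {d : ℕ} {f : MvPolynomial σ ℂ} (hf : f ∈ restrictSupport ℂ (degSet σ d))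
    (p : σ → ℂ) : ∑ i, p i * eval p (pderiv i f) = d * eval p f := by
  rw [← euler hf, dirD_apply]

/-- A multiple of the last variable that is singular off the hyperplane has singular cofactor. -/
lemma sing_of_sing_X_mul {d : ℕ} {b : MvPolynomial (Option σ) ℂ}
    (hb : b ∈ restrictSupport ℂ (degSet (Option σ) d)) {x : Option σ → ℂ} (hx : x none ≠ 0)
    (h : Sing (X none * b) x) : Sing b x := by
  have h1 : ∀ i, eval x (pderiv (some i) b) = 0 := by
    intro i
    have := h (some i)
    have h2 := eval_pderiv_some x 0 0 b i
    rw [zero_smul, zero_add, this] at h2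
    simpa [hx] using h2.symm
  have h2 := h none
  have h3 := eval_pderiv_none x 0 0 b
  rw [zero_smul, zero_add, h2] at h3
  have h4 := eval_euler hb x
  rw [Fintype.sum_option] at h4
  simp only [h1, mul_zero, Finset.sum_const_zero, add_zero] at h4
  have h5 : ((d : ℂ) + 1) * eval x b = 0 := by linear_combination -h4 - h3
  have h6 : eval x b = 0 := by
    rcases mul_eq_zero.mp h5 with h | h
    · exact absurd h (Nat.cast_add_one_ne_zero d)
    · exact h
  rintro (_ | i)
  · rw [h6, mul_zero] at h4
    simpa [hx] using h4
  · exact h1 i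

lemma exists_polynomial_affine {g : ℂ → ℂ} {a b : ℂ} (h : ∀ t, g t = t * a + b) :
    ∃ R : Polynomial ℂ, ∀ t, g t = R.eval t :=
  ⟨Polynomial.X * Polynomial.C a + Polynomial.C b, fun t => by rw [h]; simp [mul_comm a t]⟩

/-- The differential Horace lemma: specialize the points `(r, t)` to the hyperplane. -/
lemma horace_points {ι κ υ ρ : Type*} {d : ℕ} (P : ι → Option σ → ℂ) (Q : κ → Option σ → ℂ)
    (q : υ → σ → ℂ) (r : ρ → σ → ℂ) (hP : ∀ a, P a none ≠ 0) (hQ : ∀ c, Q c none ≠ 0)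
    (hT : Kill (degSet σ (d + 1)) q (fun c => (r c, r c)))
    (hR : ∀ b ∈ restrictSupport ℂ (degSet (Option σ) d), (∀ a, Sing b (P a)) →
      (∀ c, eval (Q c) b = 0) → (∀ c, eval (pt (q c) 0) b = 0) →
      (∀ c i, eval (pt (r c) 0) (pderiv (some i) b) = 0) → b = 0) :
    ∃ t : ℂ, ∀ f ∈ restrictSupport ℂ (degSet (Option σ) (d + 1)), (∀ a, Sing f (P a)) →
      (∀ c, Sing f (pt (q c) 0)) → (∀ c, Sing f (pt (r c) t)) → (∀ c, eval (Q c) f = 0) →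
      f = 0 := by
  classical
  have := finiteDimensional_restrictSupport (degSet_finite (σ := σ) (d + 1))
  have := finiteDimensional_restrictSupport (degSet_finite (σ := Option σ) d)
  let I := (ι × Option σ) ⊕ κ ⊕ (υ × σ) ⊕ υ ⊕ (ρ × σ) ⊕ ρ
  let Φ : ℂ → I →
      (restrictSupport ℂ (degSet σ (d + 1)) × restrictSupport ℂ (degSet (Option σ) d)) → ℂ :=
    fun t i v => Sum.elim
    (fun a : ι × Option σ => eval (P a.1) (pderiv a.2 (t • rename some v.1.1 + X none * v.2.1)))
    (Sum.elim (fun c => eval (Q c) (t • rename some v.1.1 + X none * v.2.1))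
    (Sum.elim (fun a : υ × σ => eval (q a.1) (pderiv a.2 v.1.1))
    (Sum.elim (fun c => eval (pt (q c) 0) v.2.1)
    (Sum.elim (fun a : ρ × σ => eval (r a.1) (pderiv a.2 v.1.1) +
        eval (pt (r a.1) t) (pderiv (some a.2) v.2.1))
      (fun c => eval (pt (r c) t) v.2.1 + t * eval (pt (r c) t) (pderiv none v.2.1)))))) i
  have hlin : ∀ t i, IsLinearMap ℂ (Φ t i) := by
    intro t i
    rcases i with ⟨a, (_ | o)⟩ | c | ⟨a, o⟩ | c | ⟨a, o⟩ | c <;> constructor <;> intros <;>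
    simp only [Φ, Sum.elim_inl, Sum.elim_inr, eval_pderiv_none, eval_pderiv_some, eval_decomp] <;>
    simp only [Prod.fst_add, Prod.snd_add, Prod.smul_fst, Prod.smul_snd, Submodule.coe_add,
      Submodule.coe_smul, map_add, map_smul, Derivation.map_smul, smul_eval, smul_eq_mul] <;> ring
  let φ : ℂ → I →
      (restrictSupport ℂ (degSet σ (d + 1)) × restrictSupport ℂ (degSet (Option σ) d)) →ₗ[ℂ] ℂ :=
    fun t i => (hlin t i).mk'
  have hfin := finite_not_separating φ ?_ 0 ?_
  · obtain ⟨t, ht⟩ := (hfin.union (Set.finite_singleton 0)).infinite_compl.nonempty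
    simp only [Set.mem_compl_iff, Set.mem_union, Set.mem_ofPred_eq, Set.mem_singleton_iff, not_or,
      not_not] at ht
    obtain ⟨ht, ht0⟩ := ht
    refine ⟨t, fun f hf hfP hfq hfr hfQ => ?_⟩
    obtain ⟨a, ha, b, hb, rfl⟩ := exists_decomp hf
    have he : rename some a = t • rename some (t⁻¹ • a) := by
      rw [map_smul, smul_inv_smul₀ ht0]
    rw [he] at hfP hfq hfr hfQ ⊢
    have h0 := ht (⟨t⁻¹ • a, Submodule.smul_mem _ _ ha⟩, ⟨b, hb⟩) ?_
    · have h1 : t⁻¹ • a = 0 := congrArg (fun v => v.1.1) h0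
      have h2 : b = 0 := congrArg (fun v => v.2.1) h0
      rw [h1, h2, map_zero, smul_zero, mul_zero, add_zero]
    · rintro (⟨a, o⟩ | c | ⟨c, i⟩ | c | ⟨c, i⟩ | c)
      · exact hfP a o
      · exact hfQ c
      · have := hfq c (some i)
        rw [eval_pderiv_some, pt_none, zero_mul, add_zero] at this
        exact (mul_eq_zero.mp this).resolve_left ht0
      · have := hfq c none
        rwa [eval_pderiv_none, pt_none, zero_mul, add_zero] at this
      · have := hfr c (some i)
        rw [eval_pderiv_some, pt_none, pt_comp_some, ← mul_add] at this
        exact (mul_eq_zero.mp this).resolve_left ht0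
      · have := hfr c none
        rwa [eval_pderiv_none] at this
  · rintro (⟨a, (_ | o)⟩ | c | ⟨a, o⟩ | c | ⟨a, o⟩ | c) v
    · exact ⟨Polynomial.C _, fun t => (eval_pderiv_none _ _ _ _).trans Polynomial.eval_C.symm⟩
    · exact exists_polynomial_affine fun t => eval_pderiv_some _ _ _ _ _
    · exact exists_polynomial_affine fun t => eval_decomp _ _ _ _
    · exact ⟨Polynomial.C _, fun t => Polynomial.eval_C.symm⟩
    · exact ⟨Polynomial.C _, fun t => Polynomial.eval_C.symm⟩
    · obtain ⟨R, hR⟩ := exists_polynomial_eval_line (pt (r a) 0) (Pi.single none 1)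
        (pderiv (some o) v.2.1)
      refine ⟨Polynomial.C (eval (r a) (pderiv o v.1.1)) + R, fun t => ?_⟩
      rw [Polynomial.eval_add, Polynomial.eval_C, ← hR, ← pt_eq]
      rfl
    · obtain ⟨R, hR⟩ := exists_polynomial_eval_line (pt (r c) 0) (Pi.single none 1) v.2.1
      obtain ⟨R', hR'⟩ := exists_polynomial_eval_line (pt (r c) 0) (Pi.single none 1)
        (pderiv none v.2.1)
      refine ⟨R + Polynomial.X * R', fun t => ?_⟩
      rw [Polynomial.eval_add, Polynomial.eval_mul, Polynomial.eval_X, ← hR, ← hR', ← pt_eq]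
      rfl
  · rintro ⟨⟨a, ha⟩, b, hb⟩ hv
    have h1 : ∀ a, Sing b (P a) := fun c => sing_of_sing_X_mul hb (hP c) fun o => by
      have : eval (P c) (pderiv o ((0 : ℂ) • rename some a + X none * b)) = 0 := hv (Sum.inl (c, o))
      rwa [zero_smul, zero_add] at this
    have h2 : ∀ c, eval (Q c) b = 0 := fun c => by
      have : eval (Q c) ((0 : ℂ) • rename some a + X none * b) = 0 := hv (Sum.inr (Sum.inl c))
      rw [eval_decomp, zero_mul, zero_add] at this
      exact (mul_eq_zero.mp this).resolve_left (hQ c)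
    have h3 : ∀ c i, eval (q c) (pderiv i a) = 0 := fun c i =>
      hv (Sum.inr (Sum.inr (Sum.inl (c, i))))
    have h4 : ∀ c, eval (pt (q c) 0) b = 0 := fun c =>
      hv (Sum.inr (Sum.inr (Sum.inr (Sum.inl c))))
    have h5 : ∀ c i, eval (r c) (pderiv i a) + eval (pt (r c) 0) (pderiv (some i) b) = 0 :=
      fun c i => hv (Sum.inr (Sum.inr (Sum.inr (Sum.inr (Sum.inl (c, i))))))
    have h6 : ∀ c, eval (pt (r c) 0) b = 0 := fun c => by
      have : eval (pt (r c) 0) b + 0 * eval (pt (r c) 0) (pderiv none b) = 0 :=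
        hv (Sum.inr (Sum.inr (Sum.inr (Sum.inr (Sum.inr c)))))
      simpa using this
    have h7 : a = 0 := hT a ha h3 fun c => by
      rw [dirD_apply]
      have e1 := eval_euler hb (pt (r c) 0)
      rw [h6, mul_zero, Fintype.sum_option] at e1
      simp only [pt_none, zero_mul, zero_add, pt_some] at e1
      have e2 : ∑ i, r c i * (eval (r c) (pderiv i a) + eval (pt (r c) 0) (pderiv (some i) b))
          = 0 := Finset.sum_eq_zero fun i _ => by rw [h5, mul_zero]
      simp only [mul_add, Finset.sum_add_distrib, e1, add_zero] at e2
      exact e2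
    have h8 : b = 0 := hR b hb h1 h2 h4 fun c i => by
      have := h5 c i
      rwa [h7, map_zero, map_zero, zero_add] at this
    subst h7 h8
    rfl

lemma dirD_single {τ : Type*} [Fintype τ] [DecidableEq τ] (p : τ → ℂ) (i : τ)
    (f : MvPolynomial τ ℂ) : dirD p (Pi.single i 1) f = eval p (pderiv i f) := by
  simp [dirD_apply, Pi.single_apply]

/-- Finitely many points, fewer than the number of coordinates, can be moved linearly into the
coordinate hyperplane. -/
lemma exists_linear_into_hyperplane {ρ : Type*} [Fintype ρ] (r : ρ → Option σ → ℂ)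
    (hρ : Fintype.card ρ ≤ Fintype.card σ) :
    ∃ A : (Option σ → ℂ) →ₗ[ℂ] (Option σ → ℂ), Function.Surjective A ∧ ∀ c, A (r c) none = 0 := by
  classical
  obtain ⟨c, hc, hc0⟩ : ∃ c : Option σ → ℂ, c ≠ 0 ∧ ∀ a, ∑ o, c o * r a o = 0 := by
    let L : (Option σ → ℂ) →ₗ[ℂ] (ρ → ℂ) := Matrix.toLin' (Matrix.of fun a o => r a o)
    have hlt : Module.finrank ℂ (ρ → ℂ) < Module.finrank ℂ (Option σ → ℂ) := by
      simp only [Module.finrank_fintype_fun_eq_card, Fintype.card_option]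
      omega
    obtain ⟨c, hc, hc0⟩ := (Submodule.ne_bot_iff _).mp (LinearMap.ker_ne_bot_of_finrank_lt
      (f := L) hlt)
    refine ⟨c, hc0, fun a => ?_⟩
    have := congrFun (LinearMap.mem_ker.mp hc) a
    simpa [L, Matrix.mulVec, dotProduct, mul_comm] using this
  obtain ⟨j, hj⟩ : ∃ j, c j ≠ 0 := Function.ne_iff.mp hc
  let A : (Option σ → ℂ) →ₗ[ℂ] (Option σ → ℂ) := LinearMap.pi fun o => o.elim
    (∑ k, c k • LinearMap.proj k) fun i => LinearMap.proj (Equiv.swap none j (some i))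
  have hA : ∀ v, A v none = ∑ o, c o * v o := fun v => by simp [A]
  refine ⟨A, LinearMap.surjective_of_injective ((injective_iff_map_eq_zero A).mpr fun v hv => ?_),
    fun a => by rw [hA, hc0]⟩
  have h1 : ∀ k, k ≠ j → v k = 0 := by
    intro k hk
    obtain ⟨i, hi⟩ : ∃ i, some i = Equiv.swap none j k := by
      rcases h : Equiv.swap none j k with _ | i
      · rw [Equiv.swap_apply_eq_iff, Equiv.swap_apply_left] at h
        exact absurd h hk
      · exact ⟨i, rfl⟩
    have h3 : A v (some i) = v (Equiv.swap none j (some i)) := rfl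
    rw [hv, hi, Equiv.swap_apply_self] at h3
    exact h3.symm
  have h2 := hA v
  rw [hv, Finset.sum_eq_single j (fun k _ hk => by rw [h1 k hk, mul_zero]) (by simp)] at h2
  funext k
  by_cases hk : k = j
  · subst hk
    simpa [hj] using h2.symm
  · exact h1 k hk

lemma eq_pt_of_none {x : Option σ → ℂ} (hx : x none = 0) : pt (x ∘ some) 0 = x := by
  funext o
  cases o <;> simp [hx]

lemma lineMap_of_linear {E F : Type*} [AddCommGroup E] [Module ℂ E] [AddCommGroup F] [Module ℂ F]
    (g : E → F) (h₁ : ∀ x y, g (x + y) = g x + g y) (h₂ : ∀ (c : ℂ) x, g (c • x) = c • g x) :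
    LineMap g := by
  intro x y t
  have h3 : g (y - x) = g y - g x := eq_sub_of_add_eq (by rw [← h₁, sub_add_cancel])
  rw [h₁, h₂, h3]

lemma pt_add (p q : σ → ℂ) : pt (p + q) 0 = pt p 0 + pt q 0 := by
  funext o
  cases o <;> simp

lemma pt_smul (c : ℂ) (q : σ → ℂ) : pt (c • q) 0 = c • pt q 0 := by
  funext o
  cases o <;> simp

/-- The Horace step, with generic choices made. -/
theorem horace {N d u ε k s s' : ℕ} (hT : K N (d + 2) u ε) (hC : K (N + 1) (d + 1) (k + ε) s')
    (hL : K (N + 1) d k s) (hs : s ≤ s') (hu : ε + s' ≤ u + s) (hε : ε ≤ N) :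
    K (N + 1) (d + 2) (k + u + ε) s := by
  classical
  let σ := Fin N
  obtain ⟨q₀, r₀, hqr₀⟩ := hT
  let E := (Fin k → Option σ → ℂ) × (Fin ε → σ → ℂ) × (Fin s' → Option σ → ℂ)
  let U₁ : Set E := {x | Kill (degSet (Option σ) (d + 1))
    (Sum.elim x.1 fun c => pt (x.2.1 c) 0) (fun b => (x.2.2 b, x.2.2 b))}
  have hU₁ : LineCofinite U₁ := by
    refine lineCofinite_kill (degSet_finite _) (lineMap_of_linear _ ?_ ?_)
      (lineMap_of_linear _ ?_ ?_)
    · intro x y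
      funext a
      cases a with
      | inl a => rfl
      | inr a => exact pt_add _ _
    · intro c x
      funext a
      cases a with
      | inl a => rfl
      | inr a => exact pt_smul _ _
    · intro x y
      rfl
    · intro c x
      rfl
  have hU₁' : U₁.Nonempty := by
    obtain ⟨P, Q, h⟩ := hC.toKT (σ := Option σ) (ι := Fin k ⊕ Fin ε) (κ := Fin s')
      (by simp [σ]) (by simp) (by simp)
    obtain ⟨A, hA, hA0⟩ := exists_linear_into_hyperplane (fun c : Fin ε => P (Sum.inr c))
      (by simpa [σ] using hε)
    refine ⟨(fun a => A (P (Sum.inl a)), fun c => A (P (Sum.inr c)) ∘ some, fun b => A (Q b)), ?_⟩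
    have := h.map_linear A hA
    simp only [U₁, Set.mem_ofPred_eq]
    convert this using 1
    funext a
    cases a with
    | inl a => rfl
    | inr c => exact eq_pt_of_none (hA0 c)
  let U₂ : Set E := {x | Kill (degSet (Option σ) d) x.1
    (fun b => (x.2.2 (Fin.castLE hs b), x.2.2 (Fin.castLE hs b)))}
  have hU₂ : LineCofinite U₂ := lineCofinite_kill (degSet_finite _)
    (lineMap_of_linear _ (fun _ _ => rfl) fun _ _ => rfl)
    (lineMap_of_linear _ (fun _ _ => rfl) fun _ _ => rfl)
  have hU₂' : U₂.Nonempty := by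
    obtain ⟨P, Q, h⟩ := hL.toKT (σ := Option σ) (ι := Fin k) (κ := Fin s)
      (by simp [σ]) (by simp) (by simp)
    refine ⟨(P, 0, fun b => if hb : b.1 < s then Q ⟨b, hb⟩ else 0), ?_⟩
    simpa [U₂] using h
  let U₃ : Set E := {x | ∀ a : Fin k ⊕ Fin s', x ∈ ({x | Sum.elim x.1 x.2.2 a none ≠ 0} : Set E)}
  have hU₃ : LineCofinite U₃ := lineCofinite_forall fun a => lineCofinite_ne_zero
    (lineMap_of_linear _ (by intro x y; cases a <;> rfl) (by intro x y; cases a <;> rfl))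
  have hU₃' : U₃.Nonempty := by
    refine ⟨(fun _ _ => 1, 0, fun _ _ => 1), fun a => ?_⟩
    cases a <;> simp
  let U₄ : Set E := {x | Kill (degSet σ (d + 2)) q₀ (fun c => (x.2.1 c, x.2.1 c))}
  have hU₄ : LineCofinite U₄ := lineCofinite_kill (degSet_finite _)
    (by intro x y t; simp) (lineMap_of_linear _ (fun _ _ => rfl) fun _ _ => rfl)
  have hU₄' : U₄.Nonempty := ⟨(0, r₀, 0), hqr₀⟩
  obtain ⟨⟨P, r, Q⟩, ⟨h1, h2⟩, h3, h4⟩ := (hU₁.inter hU₂).inter_nonempty (hU₃.inter hU₄)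
    (hU₁.inter_nonempty hU₂ hU₁' hU₂') (hU₃.inter_nonempty hU₄ hU₃' hU₄')
  have hP : ∀ a, P a none ≠ 0 := fun a => h3 (Sum.inl a)
  have hQ : ∀ a, Q a none ≠ 0 := fun a => h3 (Sum.inr a)
  let Qs : Fin s → Option σ → ℂ := fun b => Q (Fin.castLE hs b)
  let D : (Fin s) ⊕ (Fin ε × σ) → (Option σ → ℂ) × (Option σ → ℂ) := Sum.elim
    (fun b => (Qs b, Qs b)) (fun a => (pt (r a.1) 0, Pi.single (some a.2) 1))
  have := finiteDimensional_condSpace (degSet_finite (σ := Option σ) (d + 1)) P D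
  have hq : ∃ q : Fin u → σ → ℂ, ∀ f ∈ condSpace (degSet (Option σ) (d + 1)) P D,
      (∀ a, dirD (pt (q a) 0) (pt (q a) 0) f = 0) → f = 0 := by
    refine exists_separating_subfamily (condSpace (degSet (Option σ) (d + 1)) P D)
      (fun p : σ → ℂ => dirD (pt p 0) (pt p 0)) (m := u)
      (Sum.elim (fun c : Fin ε => dirD (pt (r c) 0) (Pi.single none 1))
        fun b : Fin (s' - s) => dirD (Q ⟨s + b, by omega⟩) (Q ⟨s + b, by omega⟩)) ?_ ?_ ?_
    · simp
      omega
    · intro f hf hv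
      obtain ⟨hf, hfP, hfD⟩ := mem_condSpace.mp hf
      refine h1 f hf ?_ fun b => ?_
      · rintro (a | c)
        · exact hfP a
        · refine sing_iff_dirD.mpr ?_
          rintro (_ | i)
          · exact hv (Sum.inl c)
          · exact hfD (Sum.inr (c, i))
      · by_cases hb : b.1 < s
        · exact hfD (Sum.inl ⟨b, hb⟩)
        · have := hv (Sum.inr ⟨b - s, by omega⟩)
          have he : (⟨s + (b.1 - s), by omega⟩ : Fin s') = b := Fin.ext (by simp; omega)
          simpa [he] using this
    · intro f hf hv
      obtain ⟨hf, hfP, hfD⟩ := mem_condSpace.mp hf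
      obtain ⟨a, ha, b, hb, rfl⟩ := exists_decomp hf
      have ha0 : a = 0 := by
        refine MvPolynomial.funext fun p => ?_
        have := hv p
        rw [euler hf] at this
        have h5 := (mul_eq_zero.mp this).resolve_left (Nat.cast_ne_zero.mpr (Nat.succ_ne_zero d))
        have h6 := eval_decomp (pt p 0) 1 a b
        rw [one_smul, h5, pt_none, pt_comp_some] at h6
        simpa using h6.symm
      subst ha0
      rw [map_zero, zero_add] at hf hfP hfD ⊢
      rw [h2 b hb (fun a => sing_of_sing_X_mul hb (hP a) (hfP a)) fun c => ?_, mul_zero]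
      have h5 : dirD (Qs c) (Qs c) (X none * b) = 0 := hfD (Sum.inl c)
      rw [euler hf] at h5
      have h6 := (mul_eq_zero.mp h5).resolve_left (Nat.cast_ne_zero.mpr (Nat.succ_ne_zero d))
      have h7 : eval (Qs c) b = 0 := by simpa [hQ, Qs] using h6
      show dirD (Qs c) (Qs c) b = 0
      rw [euler hb, h7, mul_zero]
  obtain ⟨q₁, hq₁⟩ := hq
  let F := Fin u → σ → ℂ
  let U₅ : Set F := {q | Kill (degSet σ (d + 2)) q (fun c => (r c, r c))}
  have hU₅ : LineCofinite U₅ := lineCofinite_kill (degSet_finite _)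
    (lineMap_of_linear _ (fun _ _ => rfl) fun _ _ => rfl) (by intro x y t; simp)
  let U₆ : Set F := {q | Kill (degSet (Option σ) (d + 1)) P
    (Sum.elim D fun a => (pt (q a) 0, pt (q a) 0))}
  have hU₆ : LineCofinite U₆ := by
    refine lineCofinite_kill (degSet_finite _) (by intro x y t; simp) fun x y t => ?_
    funext a
    cases a with
    | inl a => simp
    | inr a =>
      exact congrArg (fun z => (z, z)) (lineMap_pt_zero (x a) (y a) t)
  obtain ⟨q, hqT, hqR⟩ := hU₅.inter_nonempty hU₆ ⟨q₀, h4⟩ ⟨q₁, fun f hf hfP hfD => hq₁ f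
    (mem_condSpace.mpr ⟨hf, hfP, fun b => hfD (Sum.inl b)⟩) fun a => hfD (Sum.inr a)⟩
  obtain ⟨t, ht⟩ := horace_points (d := d + 1) P Qs q r hP (fun c => hQ _) hqT
    fun b hb hbP hbQ hbq hbr => hqR b hb hbP <| by
      rintro ((c | ⟨c, i⟩) | c)
      · show dirD (Qs c) (Qs c) b = 0
        rw [euler hb, hbQ, mul_zero]
      · show dirD (pt (r c) 0) (Pi.single (some i) 1) b = 0
        rw [dirD_single]
        exact hbr c i
      · show dirD (pt (q c) 0) (pt (q c) 0) b = 0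
        rw [euler hb, hbq, mul_zero]
  have hfinal : KT (Option σ) ((Fin k ⊕ Fin u) ⊕ Fin ε) (Fin s) (d + 2) := by
    refine ⟨Sum.elim (Sum.elim P fun c => pt (q c) 0) fun c => pt (r c) t, Qs,
      fun f hf hfP hfQ => ht f hf (fun a => hfP (Sum.inl (Sum.inl a)))
        (fun a => hfP (Sum.inl (Sum.inr a))) (fun a => hfP (Sum.inr a)) fun c => ?_⟩
    have := hfQ c
    rw [euler hf] at this
    exact (mul_eq_zero.mp this).resolve_left (Nat.cast_ne_zero.mpr (Nat.succ_ne_zero _))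
  simpa [σ] using kT_iff_K.mp hfinal

end Horace

section Cubics

variable {σ τ υ : Type*} [Fintype σ] [Fintype τ] [Fintype υ]

lemma ext_ext {j : τ → σ} (hj : j.Injective) {i : υ → τ} (hi : i.Injective) (p : υ → ℂ) :
    ext j (ext i p) = ext (j ∘ i) p := by
  funext a
  by_cases ha : ∃ b, j b = a
  · obtain ⟨b, rfl⟩ := ha
    rw [ext, hj.extend_apply]
    by_cases hb : ∃ c, i c = b
    · obtain ⟨c, rfl⟩ := hb
      rw [ext, ext, hi.extend_apply, ← Function.comp_apply (f := j), (hj.comp hi).extend_apply]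
    · have hb' : ¬ ∃ c, (j ∘ i) c = j b := fun ⟨c, hc⟩ => hb ⟨c, hj hc⟩
      rw [ext, ext, Function.extend_apply' _ _ _ hb, Function.extend_apply' _ _ _ hb']
      rfl
  · have hb' : ¬ ∃ c, (j ∘ i) c = a := fun ⟨c, hc⟩ => ha ⟨i c, hc⟩
    change Function.extend j (ext i p) (0 : σ → ℂ) a = Function.extend (j ∘ i) p (0 : σ → ℂ) a
    rw [Function.extend_apply' _ _ _ ha, Function.extend_apply' _ _ _ hb']

lemma lineMap_const {E F : Type*} [AddCommGroup E] [Module ℂ E] [AddCommGroup F] [Module ℂ F]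
    (c : F) : LineMap fun _ : E => c := by
  intro x y t
  simp

lemma lineMap_id {E : Type*} [AddCommGroup E] [Module ℂ E] : LineMap fun x : E => x :=
  fun _ _ _ => rfl

lemma LineMap.sumElim {E ι κ : Type*} [AddCommGroup E] [Module ℂ E] {f : E → ι → σ → ℂ}
    {g : E → κ → σ → ℂ} (hf : LineMap f) (hg : LineMap g) :
    LineMap fun x => Sum.elim (f x) (g x) := by
  intro x y t
  funext a
  cases a with
  | inl a => exact congrFun (hf x y t) a
  | inr a => exact congrFun (hg x y t) a

lemma LineMap.ext {E ι : Type*} [AddCommGroup E] [Module ℂ E] {f : E → ι → τ → ℂ}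
    (hf : LineMap f) {j : τ → σ} (hj : j.Injective) : LineMap fun x a => ext j (f x a) := by
  intro x y t
  funext a
  have := congrFun (hf x y t) a
  simp only at this ⊢
  rw [this]
  exact lineMap_ext j hj _ _ _

lemma lineCofinite_kill_const {E ι κ : Type*} [AddCommGroup E] [Module ℂ E]
    {S : Set (σ →₀ ℕ)} (hS : S.Finite) {P : E → ι → σ → ℂ} (hP : LineMap P)
    (Q : κ → (σ → ℂ) × (σ → ℂ)) : LineCofinite {x | Kill S (P x) Q} :=
  lineCofinite_kill hS hP (lineMap_const Q)

lemma exists_mapDomain_eq {j : τ → σ} (hj : j.Injective) {μ : σ →₀ ℕ}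
    (hμ : ∀ i, (∀ a, j a ≠ i) → μ i = 0) : ∃ ν : τ →₀ ℕ, ν.mapDomain j = μ :=
  ⟨μ.comapDomain j hj.injOn, Finsupp.mapDomain_comapDomain j hj μ fun i hi => by
    by_contra hcon
    exact Finsupp.mem_support_iff.mp hi (hμ i fun a ha => hcon ⟨a, ha⟩)⟩

lemma mem_restrictSupport_iff {S : Set (σ →₀ ℕ)} {f : MvPolynomial σ ℂ} :
    f ∈ restrictSupport ℂ S ↔ ∀ μ, coeff μ f ≠ 0 → μ ∈ S :=
  ⟨fun h _ hμ => h (mem_support_iff.mpr hμ), fun h μ hμ => h μ (mem_support_iff.mp hμ)⟩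

lemma degree_eq_of_coeff_ne_zero {S : Set (σ →₀ ℕ)} {d : ℕ} {j : τ → σ}
    (hS : S ⊆ degSet σ d) {f : MvPolynomial σ ℂ} (hf : f ∈ restrictSupport ℂ S) {ν : τ →₀ ℕ}
    (hν : coeff (ν.mapDomain j) f ≠ 0) : ν ∈ degSet τ d := by
  have : (ν.mapDomain j).degree = d := hS (mem_restrictSupport_iff.mp hf _ hν)
  rwa [Finsupp.degree_mapDomain] at this

/-- Transport along a surjective injection. -/
lemma Kill.transport {ι κ : Type*} {S : Set (σ →₀ ℕ)} {T : Set (τ →₀ ℕ)} {P : ι → τ → ℂ}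
    {Q : κ → (τ → ℂ) × (τ → ℂ)} (h : Kill T P Q) {j : τ → σ} (hj : j.Injective)
    (hST : ∀ μ ∈ S, ∃ ν ∈ T, ν.mapDomain j = μ) :
    Kill S (fun a => ext j (P a)) (fun b => (ext j (Q b).1, ext j (Q b).2)) := by
  intro f hf hP hQ
  rw [mem_restrictSupport_iff] at hf
  have h1 := h.coeff_eq_zero hj (f := f) (fun ν hν => by
    obtain ⟨ν', hν', he⟩ := hST _ (hf _ hν)
    rwa [← Finsupp.mapDomain_injective hj he]) hP hQ
  ext μ
  rw [coeff_zero]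
  by_contra hμ
  obtain ⟨ν, -, rfl⟩ := hST _ (hf _ hμ)
  exact hμ (h1 ν)

/-- Cubic monomials involving the last block of variables. -/
def oneBlock (W : Type*) : Set (W ⊕ Fin 3 →₀ ℕ) :=
  {μ | μ.degree = 3 ∧ ∃ x, μ (Sum.inr x) ≠ 0}

/-- Cubic monomials involving both distinguished blocks of variables. -/
def twoBlock (W : Type*) : Set (W ⊕ (Fin 3 ⊕ Fin 3) →₀ ℕ) :=
  {μ | μ.degree = 3 ∧ (∃ x, μ (Sum.inr (Sum.inl x)) ≠ 0) ∧ ∃ y, μ (Sum.inr (Sum.inr y)) ≠ 0}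

/-- Cubic monomials involving three distinguished blocks of variables. -/
def threeBlock (W : Type*) : Set ((W ⊕ Fin 3) ⊕ (Fin 3 ⊕ Fin 3) →₀ ℕ) :=
  {μ | μ.degree = 3 ∧ (∃ x, μ (Sum.inr (Sum.inl x)) ≠ 0) ∧ (∃ y, μ (Sum.inr (Sum.inr y)) ≠ 0) ∧
    ∃ z, μ (Sum.inl (Sum.inr z)) ≠ 0}

lemma oneBlock_subset (W : Type*) : oneBlock W ⊆ degSet _ 3 := fun _ h => h.1
lemma twoBlock_subset (W : Type*) : twoBlock W ⊆ degSet _ 3 := fun _ h => h.1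
lemma threeBlock_subset (W : Type*) : threeBlock W ⊆ degSet _ 3 := fun _ h => h.1

/-- Cubics vanishing on a codimension three subspace `L` are killed by double points in `L`
indexed by `ι`, general double points, and simple points indexed by `κ`. -/
def OneKill (W ι κ : Type*) [Fintype W] : Prop :=
  ∃ (p : ι → W → ℂ) (g : W ⊕ Fin 3 → W ⊕ Fin 3 → ℂ) (Q : κ → W ⊕ Fin 3 → ℂ),
    Kill (oneBlock W) (Sum.elim (fun a => ext Sum.inl (p a)) g) (fun b => (Q b, Q b))

/-- Cubics vanishing on two codimension three subspaces are killed by double points in these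
subspaces and three general ones. -/
def TwoKill (W : Type*) [Fintype W] : Prop :=
  ∃ (l m : W ⊕ Fin 3 → W ⊕ Fin 3 → ℂ) (g : Fin 3 → W ⊕ (Fin 3 ⊕ Fin 3) → ℂ),
    Kill (twoBlock W) (Sum.elim (Sum.elim (fun a => ext (Sum.map id Sum.inr) (l a))
      (fun a => ext (Sum.map id Sum.inl) (m a))) g)
      (Empty.elim : Empty → (W ⊕ (Fin 3 ⊕ Fin 3) → ℂ) × (W ⊕ (Fin 3 ⊕ Fin 3) → ℂ))

/-- Cubics vanishing on three codimension three subspaces are killed by three double points in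
each of them. -/
def ThreeKill : Prop :=
  ∃ (l m n : Fin 3 → Fin 3 ⊕ Fin 3 → ℂ),
    Kill {μ : Fin 3 ⊕ (Fin 3 ⊕ Fin 3) →₀ ℕ | μ.degree = 3 ∧ (∃ x, μ (Sum.inr (Sum.inl x)) ≠ 0) ∧
        (∃ y, μ (Sum.inr (Sum.inr y)) ≠ 0) ∧ ∃ z, μ (Sum.inl z) ≠ 0}
      (Sum.elim (Sum.elim (fun a => ext (Sum.map id Sum.inr) (l a))
        (fun a => ext (Sum.map id Sum.inl) (m a))) fun a => ext Sum.inr (n a))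
      (Empty.elim : Empty → (Fin 3 ⊕ (Fin 3 ⊕ Fin 3) → ℂ) × (Fin 3 ⊕ (Fin 3 ⊕ Fin 3) → ℂ))

variable {W : Type} [Fintype W]

lemma OneKill.of_surjective {ι ι' κ κ' : Type*} (h : OneKill W ι κ) {i : ι' → ι}
    (hi : i.Surjective) {j : κ' → κ} (hj : j.Surjective) : OneKill W ι' κ' := by
  obtain ⟨p, g, Q, h⟩ := h
  refine ⟨p ∘ i, g, Q ∘ j, fun f hf hP hQ => h f hf ?_ fun b => ?_⟩
  · rintro (a | a)
    · obtain ⟨a, rfl⟩ := hi a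
      exact hP (Sum.inl a)
    · exact hP (Sum.inr a)
  · obtain ⟨b, rfl⟩ := hj b
    exact hQ b

lemma OneKill.congr {W' ι κ : Type*} [Fintype W'] (h : OneKill W ι κ) (e : W ≃ W') :
    OneKill W' ι κ := by
  obtain ⟨p, g, Q, h⟩ := h
  let e' : W ⊕ Fin 3 ≃ W' ⊕ Fin 3 := Equiv.sumCongr e (Equiv.refl _)
  have h' := h.transport (S := oneBlock W') e'.injective fun μ hμ => by
    obtain ⟨ν, rfl⟩ := exists_mapDomain_eq e'.injective (μ := μ)
      fun i hi => absurd (e'.apply_symm_apply i) (hi _)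
    refine ⟨ν, ⟨by simpa using hμ.1, ?_⟩, rfl⟩
    obtain ⟨x, hx⟩ := hμ.2
    exact ⟨x, by rwa [← Finsupp.mapDomain_apply e'.injective]⟩
  refine ⟨fun a => ext e (p a), fun a => ext e' (g (e'.symm a)), fun b => ext e' (Q b),
    fun f hf hP hQ => h' f hf ?_ hQ⟩
  rintro (a | a)
  · have := hP (Sum.inl a)
    simp only [Sum.elim_inl] at this ⊢
    rw [ext_ext Sum.inl_injective e.injective] at this
    rw [ext_ext e'.injective Sum.inl_injective]
    exact this
  · simpa using hP (Sum.inr (e' a))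

lemma kT_step {ι κ κ' : Type*} (hK : KT W ι κ 3) (hB : OneKill W ι κ') :
    KT (W ⊕ Fin 3) (ι ⊕ (W ⊕ Fin 3)) (κ ⊕ κ') 3 := by
  obtain ⟨p₁, r, hK⟩ := hK
  obtain ⟨p₂, g, Q, hB⟩ := hB
  have hfin := (degSet_finite (σ := W ⊕ Fin 3) 3).subset (oneBlock_subset W)
  obtain ⟨p, h1, h2⟩ := (lineCofinite_kill_const (degSet_finite 3) lineMap_id
    (fun b => (r b, r b))).inter_nonempty (lineCofinite_kill_const hfin
    ((lineMap_id.ext (j := (Sum.inl : W → W ⊕ Fin 3)) Sum.inl_injective).sumElim (lineMap_const g))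
    (fun b => (Q b, Q b))) ⟨p₁, hK⟩ ⟨p₂, hB⟩
  refine ⟨Sum.elim (fun a => ext Sum.inl (p a)) g, Sum.elim (fun b => ext Sum.inl (r b)) Q,
    fun f hf hP hQ => h2 f ?_ hP fun b => hQ (Sum.inr b)⟩
  have h3 := h1.coeff_eq_zero Sum.inl_injective (f := f)
    (fun ν hν => degree_eq_of_coeff_ne_zero subset_rfl hf hν) (fun a => hP (Sum.inl a))
    (fun b => hQ (Sum.inl b))
  rw [mem_restrictSupport_iff] at hf ⊢
  refine fun μ hμ => ⟨hf μ hμ, ?_⟩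
  by_contra! hcon
  obtain ⟨ν, rfl⟩ := exists_mapDomain_eq (Sum.inl_injective (β := Fin 3)) (μ := μ) (by
    rintro (w | x) h
    · exact absurd rfl (h w)
    · exact hcon x)
  exact hμ (h3 ν)

lemma oneKill_step {ι κ : Type*} (hB : OneKill W ι κ) (hC : TwoKill W) :
    OneKill (W ⊕ Fin 3) (ι ⊕ (W ⊕ Fin 3)) κ := by
  obtain ⟨p, m₁, Q, hB⟩ := hB
  obtain ⟨l, m₂, g, hC⟩ := hC
  have hfin := (degSet_finite (σ := W ⊕ Fin 3) 3).subset (oneBlock_subset W)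
  have hfin' := (degSet_finite (σ := W ⊕ (Fin 3 ⊕ Fin 3)) 3).subset (twoBlock_subset W)
  have hL : Function.Injective (Sum.map id Sum.inr : W ⊕ Fin 3 → W ⊕ (Fin 3 ⊕ Fin 3)) :=
    Function.injective_id.sumMap Sum.inr_injective
  have hM : Function.Injective (Sum.map id Sum.inl : W ⊕ Fin 3 → W ⊕ (Fin 3 ⊕ Fin 3)) :=
    Function.injective_id.sumMap Sum.inl_injective
  obtain ⟨m, h1, h2⟩ := (lineCofinite_kill_const hfin
    ((lineMap_const fun a => ext (Sum.inl : W → W ⊕ Fin 3) (p a)).sumElim lineMap_id)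
    (fun b => (Q b, Q b))).inter_nonempty (lineCofinite_kill_const hfin'
    (((lineMap_const fun a => ext (Sum.map id Sum.inr : W ⊕ Fin 3 → W ⊕ (Fin 3 ⊕ Fin 3))
      (l a)).sumElim (lineMap_id.ext hM)).sumElim (lineMap_const g)) Empty.elim)
    ⟨m₁, hB⟩ ⟨m₂, hC⟩
  let jM : W ⊕ Fin 3 → (W ⊕ Fin 3) ⊕ Fin 3 := Sum.map Sum.inl id
  have hjM : jM.Injective := Sum.inl_injective.sumMap Function.injective_id
  let e : W ⊕ (Fin 3 ⊕ Fin 3) ≃ (W ⊕ Fin 3) ⊕ Fin 3 :=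
    (Equiv.sumCongr (Equiv.refl W) (Equiv.sumComm _ _)).trans (Equiv.sumAssoc _ _ _).symm
  have heL : e ∘ Sum.map id Sum.inr = Sum.inl := by
    funext a
    rcases a with a | a <;> rfl
  have heM : e ∘ Sum.map id Sum.inl = jM := by
    funext a
    rcases a with a | a <;> rfl
  refine ⟨Sum.elim (fun a => ext Sum.inl (p a)) l,
    Sum.elim (fun a => ext jM (m a)) (fun c => ext e (g c)), fun b => ext jM (Q b),
    fun f hf hP hQ => ?_⟩
  have hf' := mem_restrictSupport_iff.mp hf
  have h3 := h1.coeff_eq_zero hjM (f := f)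
    (fun ν hν => ⟨degree_eq_of_coeff_ne_zero (oneBlock_subset _) hf hν, by
      obtain ⟨x, hx⟩ := (hf' _ hν).2
      exact ⟨x, by rwa [← Finsupp.mapDomain_apply hjM]⟩⟩)
    (by
      rintro (a | a)
      · have := hP (Sum.inl (Sum.inl a))
        simp only [Sum.elim_inl] at this ⊢
        rw [ext_ext Sum.inl_injective Sum.inl_injective] at this
        rw [ext_ext hjM Sum.inl_injective]
        exact this
      · exact hP (Sum.inr (Sum.inl a))) hQ
  have h4 := h2.coeff_eq_zero e.injective (f := f)
    (fun ν hν => ⟨degree_eq_of_coeff_ne_zero (oneBlock_subset _) hf hν, by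
      obtain ⟨x, hx⟩ := (hf' _ hν).2
      refine ⟨x, ?_⟩
      rwa [← Finsupp.mapDomain_apply e.injective], by
      by_contra! hcon
      obtain ⟨ν', he⟩ := exists_mapDomain_eq hjM (μ := ν.mapDomain e) (by
        rintro ((w | y) | x) h
        · exact absurd rfl (h (Sum.inl w))
        · have := hcon y
          rwa [← Finsupp.mapDomain_apply e.injective] at this
        · exact absurd rfl (h (Sum.inr x)))
      rw [← he] at hν
      exact hν (h3 ν')⟩)
    (by
      rintro ((a | a) | c)
      · simp only [Sum.elim_inl]
        rw [ext_ext e.injective hL, heL]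
        exact hP (Sum.inl (Sum.inr a))
      · simp only [Sum.elim_inl, Sum.elim_inr]
        rw [ext_ext e.injective hM, heM]
        exact hP (Sum.inr (Sum.inl a))
      · exact hP (Sum.inr (Sum.inr c))) (fun b => b.elim)
  ext μ
  obtain ⟨ν, rfl⟩ := exists_mapDomain_eq e.injective (μ := μ)
    fun i hi => absurd (e.apply_symm_apply i) (hi _)
  rw [h4, coeff_zero]

lemma twoKill_step (hC : TwoKill W) (hD : ThreeKill) : TwoKill (W ⊕ Fin 3) := by
  obtain ⟨l, m, g₁, hC⟩ := hC
  obtain ⟨l', m', n', hD⟩ := hD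
  have hfin := (degSet_finite (σ := W ⊕ (Fin 3 ⊕ Fin 3)) 3).subset (twoBlock_subset W)
  have hfin' := (degSet_finite (σ := (W ⊕ Fin 3) ⊕ (Fin 3 ⊕ Fin 3)) 3).subset
    (threeBlock_subset W)
  have hL : ∀ V : Type _, Function.Injective
      (Sum.map id Sum.inr : V ⊕ Fin 3 → V ⊕ (Fin 3 ⊕ Fin 3)) :=
    fun V => Function.injective_id.sumMap Sum.inr_injective
  have hM : ∀ V : Type _, Function.Injective
      (Sum.map id Sum.inl : V ⊕ Fin 3 → V ⊕ (Fin 3 ⊕ Fin 3)) :=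
    fun V => Function.injective_id.sumMap Sum.inl_injective
  have hl : ∀ V : Type _, Function.Injective (Sum.map Sum.inl id : W ⊕ V → (W ⊕ Fin 3) ⊕ V) :=
    fun V => Sum.inl_injective.sumMap Function.injective_id
  have hr : ∀ V : Type, Function.Injective
      (Sum.map Sum.inr id : Fin 3 ⊕ V → (W ⊕ Fin 3) ⊕ V) :=
    fun V => Sum.inr_injective.sumMap Function.injective_id
  have hD' := hD.transport (S := threeBlock W) (hr (Fin 3 ⊕ Fin 3)) fun μ hμ => by
    obtain ⟨hμ, ⟨x, hx⟩, ⟨y, hy⟩, z, hz⟩ := hμ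
    have hdeg : μ.degree = 3 := hμ
    obtain ⟨ν, rfl⟩ := exists_mapDomain_eq (hr (Fin 3 ⊕ Fin 3)) (μ := μ) (by
      rintro ((w | z') | c) h
      · rw [Finsupp.degree_eq_sum, Fintype.sum_sum_type, Fintype.sum_sum_type,
          Fintype.sum_sum_type] at hdeg
        have h1 := Finset.single_le_sum (f := fun w => μ (Sum.inl (Sum.inl w)))
          (fun _ _ => Nat.zero_le _) (Finset.mem_univ w)
        have h2 := Finset.single_le_sum (f := fun w => μ (Sum.inl (Sum.inr w)))
          (fun _ _ => Nat.zero_le _) (Finset.mem_univ z)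
        have h3 := Finset.single_le_sum (f := fun w => μ (Sum.inr (Sum.inl w)))
          (fun _ _ => Nat.zero_le _) (Finset.mem_univ x)
        have h4 := Finset.single_le_sum (f := fun w => μ (Sum.inr (Sum.inr w)))
          (fun _ _ => Nat.zero_le _) (Finset.mem_univ y)
        omega
      · exact absurd rfl (h (Sum.inl z'))
      · exact absurd rfl (h (Sum.inr c)))
    refine ⟨ν, ⟨by simpa using hμ, ⟨x, ?_⟩, ⟨y, ?_⟩, z, ?_⟩, rfl⟩ <;>
      rwa [← Finsupp.mapDomain_apply (hr (Fin 3 ⊕ Fin 3))]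
  let P : (Fin 3 → W ⊕ (Fin 3 ⊕ Fin 3) → ℂ) →
      (Fin 3 ⊕ Fin 3) ⊕ Fin 3 → (W ⊕ Fin 3) ⊕ (Fin 3 ⊕ Fin 3) → ℂ := fun g =>
    Sum.elim (Sum.elim (fun a => ext (Sum.map id Sum.inr) (ext (Sum.map Sum.inr id) (l' a)))
      (fun a => ext (Sum.map id Sum.inl) (ext (Sum.map Sum.inr id) (m' a))))
      (fun a => ext (Sum.map Sum.inl id) (g a))
  obtain ⟨g, h1, h2⟩ := (lineCofinite_kill_const hfin
    ((lineMap_const (Sum.elim (fun a => ext (Sum.map id Sum.inr) (l a))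
      (fun a => ext (Sum.map id Sum.inl) (m a)))).sumElim lineMap_id)
    (Empty.elim : Empty → _)).inter_nonempty
    (lineCofinite_kill_const hfin' (P := P)
      ((lineMap_const _).sumElim (lineMap_id.ext (hl _))) (Empty.elim : Empty → _))
    ⟨g₁, hC⟩ ⟨fun a => ext Sum.inr (n' a), fun f hf hP _ => hD' f hf (by
      rintro ((a | a) | a)
      · have := hP (Sum.inl (Sum.inl a))
        simp only [P, Sum.elim_inl] at this ⊢
        rw [ext_ext (hL _) (hr _)] at this
        rw [ext_ext (hr _) (hL _)]
        convert this using 2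
        funext c
        rcases c with c | c <;> rfl
      · have := hP (Sum.inl (Sum.inr a))
        simp only [P, Sum.elim_inl, Sum.elim_inr] at this ⊢
        rw [ext_ext (hM _) (hr _)] at this
        rw [ext_ext (hr _) (hM _)]
        convert this using 2
        funext c
        rcases c with c | c <;> rfl
      · have := hP (Sum.inr a)
        simp only [P, Sum.elim_inr] at this ⊢
        rw [ext_ext (hl _) Sum.inr_injective] at this
        rw [ext_ext (hr _) Sum.inr_injective]
        exact this) fun b => b.elim⟩
  refine ⟨Sum.elim (fun a => ext (Sum.map Sum.inl id) (l a))
      (fun a => ext (Sum.map Sum.inr id) (l' a)),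
    Sum.elim (fun a => ext (Sum.map Sum.inl id) (m a)) (fun a => ext (Sum.map Sum.inr id) (m' a)),
    fun a => ext (Sum.map Sum.inl id) (g a), fun f hf hP _ => ?_⟩
  have hf' := mem_restrictSupport_iff.mp hf
  have h3 := h1.coeff_eq_zero (hl _) (f := f)
    (fun ν hν => ⟨degree_eq_of_coeff_ne_zero (twoBlock_subset _) hf hν, by
      obtain ⟨x, hx⟩ := (hf' _ hν).2.1
      exact ⟨x, by rwa [← Finsupp.mapDomain_apply (hl (Fin 3 ⊕ Fin 3))]⟩, by
      obtain ⟨x, hx⟩ := (hf' _ hν).2.2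
      exact ⟨x, by rwa [← Finsupp.mapDomain_apply (hl (Fin 3 ⊕ Fin 3))]⟩⟩)
    (by
      rintro ((a | a) | c)
      · have := hP (Sum.inl (Sum.inl (Sum.inl a)))
        simp only [Sum.elim_inl] at this ⊢
        rw [ext_ext (hL _) (hl _)] at this
        rw [ext_ext (hl _) (hL _)]
        convert this using 2
        funext c
        rcases c with c | c <;> rfl
      · have := hP (Sum.inl (Sum.inr (Sum.inl a)))
        simp only [Sum.elim_inl, Sum.elim_inr] at this ⊢
        rw [ext_ext (hM _) (hl _)] at this
        rw [ext_ext (hl _) (hM _)]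
        convert this using 2
        funext c
        rcases c with c | c <;> rfl
      · exact hP (Sum.inr c)) (fun b => b.elim)
  refine h2 f (mem_restrictSupport_iff.mpr fun μ hμ =>
    ⟨(hf' μ hμ).1, (hf' μ hμ).2.1, (hf' μ hμ).2.2, ?_⟩) (by
      rintro ((a | a) | a)
      · exact hP (Sum.inl (Sum.inl (Sum.inr a)))
      · exact hP (Sum.inl (Sum.inr (Sum.inr a)))
      · exact hP (Sum.inr a)) fun b => b.elim
  by_contra! hcon
  obtain ⟨ν, rfl⟩ := exists_mapDomain_eq (hl (Fin 3 ⊕ Fin 3)) (μ := μ) (by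
    rintro ((w | z) | x) h
    · exact absurd rfl (h (Sum.inl w))
    · exact hcon z
    · exact absurd rfl (h (Sum.inr x)))
  exact hμ (h3 ν)

end Cubics

section Elimination

/-- Call-by-value application, making kernel evaluation eager. -/
noncomputable def strict (n : ℕ) (k : ℕ → Bool) : Bool :=
  Nat.rec (k 0) (fun m _ => k (Nat.succ m)) n

lemma strict_eq (n : ℕ) (k : ℕ → Bool) : strict n k = k n := by cases n <;> rfl

/-- The linear combination `a • xs + b • ys` modulo `10007`, passed to a continuation. -/
noncomputable def combK (a b : ℕ) (xs : List ℕ) : List ℕ → (List ℕ → Bool) → Bool :=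
  List.rec (motive := fun _ => List ℕ → (List ℕ → Bool) → Bool) (fun _ k => k [])
    (fun x _ ih ys k => List.rec (motive := fun _ => Bool) (k []) (fun y ys _ => ih ys fun r =>
      Nat.rec (motive := fun _ => Bool) (k (0 :: r)) (fun m _ => k (Nat.succ m :: r))
        (Nat.mod (Nat.add (Nat.mul a x) (Nat.mul b y)) 10007)) ys) xs

/-- Clear the leading entries of all rows with the pivot row `a :: t`. -/
noncomputable def reduceK (a : ℕ) (t : List ℕ) :
    List (List ℕ) → (List (List ℕ) → Bool) → Bool
  | [], k => k []
  | [] :: _, _ => false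
  | (b :: s) :: rows, k => reduceK a t rows fun rs =>
      cond (Nat.beq b 0) (k (s :: rs))
        (strict (Nat.mod (Nat.mul 10006 b) 10007) fun b' => combK a b' s t fun r => k (r :: rs))

/-- Look for a row with nonzero leading entry. -/
def pivotK : List (List ℕ) → List (List ℕ) → (ℕ → List ℕ → List (List ℕ) → Bool) → Bool
  | [], _, _ => false
  | [] :: _, _, _ => false
  | (a :: t) :: rows, acc, k =>
    cond (Nat.beq (Nat.mod a 10007) 0) (pivotK rows ((a :: t) :: acc) k) (k a t (acc ++ rows))

/-- Gaussian elimination modulo `10007`: whether `n` columns are independent. -/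
noncomputable def elimK : ℕ → List (List ℕ) → Bool
  | 0, _ => true
  | n + 1, rows => pivotK rows [] fun a t rest => reduceK a t rest (elimK n)

/-- Evaluate all entries of a list before passing it on. -/
noncomputable def forceRow : List ℕ → (List ℕ → Bool) → Bool
  | [], k => k []
  | x :: xs, k => forceRow xs fun r => strict (Nat.mod x 10007) fun v => k (v :: r)

/-- Evaluate all entries of a list of rows before passing it on. -/
noncomputable def forceRows : List (List ℕ) → (List (List ℕ) → Bool) → Bool
  | [], k => k []
  | x :: xs, k => forceRows xs fun r => forceRow x fun v => k (v :: r)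

instance : Fact (Nat.Prime 10007) := ⟨by norm_num⟩

/-- The pairing of a row of natural numbers with a vector. -/
def dot {R : Type*} [CommSemiring R] : List ℕ → List R → R
  | a :: r, x :: c => a * x + dot r c
  | _, _ => 0

/-- The rows have trivial common kernel among vectors of length `n` modulo `10007`. -/
def Indep (n : ℕ) (rows : List (List ℕ)) : Prop :=
  ∀ c : List (ZMod 10007), c.length = n → (∀ r ∈ rows, dot r c = 0) → ∀ x ∈ c, x = 0

lemma exists_of_combK (a b : ℕ) (xs : List ℕ) : ∀ (ys : List ℕ) (k : List ℕ → Bool),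
    xs.length = ys.length → combK a b xs ys k = true →
    ∃ r, k r = true ∧ r.length = xs.length ∧
      ∀ c : List (ZMod 10007), dot r c = a * dot xs c + b * dot ys c := by
  induction xs with
  | nil =>
    intro ys k hl h
    obtain rfl : ys = [] := List.length_eq_zero_iff.mp hl.symm
    exact ⟨[], h, rfl, fun c => by simp [dot]⟩
  | cons x xs ih =>
    intro ys k hl h
    cases ys with
    | nil => simp at hl
    | cons y ys =>
      obtain ⟨r, hr, hlr, hc⟩ := ih ys _ (by simpa using hl) h
      change strict ((a * x + b * y) % 10007) (fun v => k (v :: r)) = true at hr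
      rw [strict_eq] at hr
      refine ⟨_, hr, by simp [hlr], fun c => ?_⟩
      cases c with
      | nil => simp [dot]
      | cons z c =>
        simp only [dot, hc, ZMod.natCast_mod, Nat.cast_add, Nat.cast_mul]
        ring

lemma exists_of_reduceK {n a : ℕ} {t : List ℕ} (ht : t.length = n) (rows : List (List ℕ)) :
    ∀ k : List (List ℕ) → Bool, (∀ r ∈ rows, r.length = n + 1) → reduceK a t rows k = true →
    ∃ rs, k rs = true ∧ (∀ r ∈ rs, r.length = n) ∧ ∀ (x : ZMod 10007) (c : List (ZMod 10007)),
      dot (a :: t) (x :: c) = 0 → (∀ r ∈ rows, dot r (x :: c) = 0) → ∀ r ∈ rs, dot r c = 0 := by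
  induction rows with
  | nil => exact fun k _ h => ⟨[], h, by simp, by simp⟩
  | cons row rows ih =>
    intro k hl h
    match row with
    | [] => simpa using hl []
    | b :: s =>
      have hs : s.length = n := by simpa using hl (b :: s) (by simp)
      obtain ⟨rs, hk, hlr, hrs⟩ := ih _ (fun r hr => hl r (by simp [hr])) h
      rcases Nat.eq_zero_or_pos b with rfl | hb
      · refine ⟨s :: rs, hk, by simpa [hs] using hlr, fun x c h0 h1 => ?_⟩
        rw [List.forall_mem_cons] at h1 ⊢
        exact ⟨by simpa [dot] using h1.1, hrs x c h0 h1.2⟩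
      · have hbeq : Nat.beq b 0 = false := by
          cases b with
          | zero => omega
          | succ b => rfl
        rw [hbeq, cond_false, strict_eq] at hk
        obtain ⟨r, hk, hlen, hr⟩ := exists_of_combK _ _ _ _ _ (hs.trans ht.symm) hk
        refine ⟨r :: rs, hk, by simpa [hs, hlen] using hlr, fun x c h0 h1 => ?_⟩
        rw [List.forall_mem_cons] at h1 ⊢
        refine ⟨?_, hrs x c h0 h1.2⟩
        have hcast : ((Nat.mod (Nat.mul 10006 b) 10007 : ℕ) : ZMod 10007) = - b := by
          change ((10006 * b % 10007 : ℕ) : ZMod 10007) = -b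
          rw [ZMod.natCast_mod, Nat.cast_mul]
          have : ((10006 : ℕ) : ZMod 10007) = -1 := by decide
          rw [this]
          ring
        rw [hr, hcast]
        have h2 := h1.1
        simp only [dot] at h0 h2
        linear_combination (a : ZMod 10007) * h2 - b * h0

lemma exists_of_pivotK (rows : List (List ℕ)) : ∀ (acc : List (List ℕ))
    (k : ℕ → List ℕ → List (List ℕ) → Bool), pivotK rows acc k = true →
    ∃ a t rest, k a t rest = true ∧ (a : ZMod 10007) ≠ 0 ∧
      ∀ r, r ∈ (a :: t) :: rest ↔ r ∈ rows ∨ r ∈ acc := by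
  induction rows with
  | nil => exact fun acc k h => by simp [pivotK] at h
  | cons row rows ih =>
    intro acc k h
    match row with
    | [] => simp [pivotK] at h
    | a :: t =>
      rw [pivotK] at h
      cases hb : Nat.beq (Nat.mod a 10007) 0 with
      | true =>
        rw [hb, cond_true] at h
        obtain ⟨a', t', rest, h1, h2, h3⟩ := ih _ _ h
        refine ⟨a', t', rest, h1, h2, fun r => (h3 r).trans ?_⟩
        simp only [List.mem_cons]
        tauto
      | false =>
        rw [hb, cond_false] at h
        refine ⟨a, t, acc ++ rows, h, fun h0 => ?_, fun r => ?_⟩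
        · have : Nat.mod a 10007 = 0 := Nat.mod_eq_zero_of_dvd
            ((ZMod.natCast_eq_zero_iff _ _).mp h0)
          rw [this] at hb
          exact absurd hb (by decide)
        · simp only [List.mem_cons, List.mem_append]
          tauto

lemma indep_of_elimK (n : ℕ) : ∀ rows : List (List ℕ), (∀ r ∈ rows, r.length = n) →
    elimK n rows = true → Indep n rows := by
  induction n with
  | zero =>
    intro rows _ _ c hc _
    simp [List.length_eq_zero_iff.mp hc]
  | succ n ih =>
    intro rows hl h c hc hrow
    rw [elimK] at h
    obtain ⟨a, t, rest, h1, ha, hr⟩ := exists_of_pivotK _ _ _ h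
    have hl' : ∀ r ∈ (a :: t) :: rest, r.length = n + 1 := fun r hr' =>
      hl r (((hr r).mp hr').resolve_right (by simp))
    have hrow' : ∀ r ∈ (a :: t) :: rest, dot r c = 0 := fun r hr' =>
      hrow r (((hr r).mp hr').resolve_right (by simp))
    rw [List.forall_mem_cons] at hl' hrow'
    obtain ⟨rs, h2, h3, h4⟩ := exists_of_reduceK (by simpa using hl'.1) rest _ hl'.2 h1
    match c with
    | [] => simp at hc
    | x :: c =>
      have h5 := ih rs h3 h2 c (by simpa using hc) (h4 x c hrow'.1 hrow'.2)
      rw [List.forall_mem_cons]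
      refine ⟨?_, h5⟩
      have h6 : ∀ (t : List ℕ) (c : List (ZMod 10007)), (∀ x ∈ c, x = 0) → dot t c = 0 := by
        intro t
        induction t with
        | nil => exact fun c _ => by simp [dot]
        | cons a t ih =>
          intro c hc
          cases c with
          | nil => simp [dot]
          | cons z c =>
            rw [List.forall_mem_cons] at hc
            simp [dot, hc.1, ih c hc.2]
      have h7 := hrow'.1
      rw [dot, h6 t c h5, add_zero] at h7
      exact (mul_eq_zero.mp h7).resolve_left ha

lemma dot_ofFn {R : Type*} [CommSemiring R] : ∀ (n : ℕ) (r : List ℕ) (v : Fin n → R), r.length = n →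
    dot r (List.ofFn v) = ∑ j : Fin n, ((r.getD j 0 : ℕ) : R) * v j := by
  intro n
  induction n with
  | zero =>
    intro r v hr
    simp [List.length_eq_zero_iff.mp hr, dot]
  | succ n ih =>
    intro r v hr
    match r with
    | [] => simp at hr
    | a :: r =>
      rw [List.ofFn_succ, dot, ih r _ (by simpa using hr), Fin.sum_univ_succ]
      simp

lemma Indep.complex {n : ℕ} {rows : List (List ℕ)} (hl : ∀ r ∈ rows, r.length = n)
    (h : Indep n rows) (v : Fin n → ℂ) (hv : ∀ r ∈ rows, dot r (List.ofFn v) = 0) : v = 0 := by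
  let M : Matrix (Fin rows.length) (Fin n) ℤ :=
    Matrix.of fun i j => (((rows.get i).getD j 0 : ℕ) : ℤ)
  let f := Int.castRingHom (ZMod 10007)
  have hinj : LinearMap.ker (Matrix.toLin' (M.map f)) = ⊥ := by
    rw [LinearMap.ker_eq_bot']
    intro w hw
    have := h (List.ofFn w) (by simp) fun r hr => by
      obtain ⟨i, rfl⟩ := List.get_of_mem hr
      rw [dot_ofFn _ _ _ (hl _ (List.get_mem _ _))]
      have := congrFun hw i
      simpa [Matrix.mulVec, dotProduct, M, f] using this
    funext j
    exact this _ (by simp [List.mem_ofFn])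
  obtain ⟨g, hg⟩ := LinearMap.exists_leftInverse_of_injective _ hinj
  let B : Matrix (Fin n) (Fin rows.length) ℤ := (LinearMap.toMatrix' g).map fun x => (x.val : ℤ)
  have hB : B.map f = LinearMap.toMatrix' g := by
    ext i j
    simp [B, f]
  have hBM : (B * M).map f = 1 := by
    rw [Matrix.map_mul, hB, ← LinearMap.toMatrix'_toLin' (M.map f), ← LinearMap.toMatrix'_comp, hg,
      LinearMap.toMatrix'_id]
  have hdet : (B * M).det ≠ 0 := by
    intro h0
    have := congrArg Matrix.det hBM
    rw [← RingHom.mapMatrix_apply, ← RingHom.map_det, h0, map_zero, Matrix.det_one] at this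
    exact zero_ne_one this
  let φ := Int.castRingHom ℂ
  have hdet' : ((B * M).map φ).det ≠ 0 := by
    rw [← RingHom.mapMatrix_apply, ← RingHom.map_det]
    simpa [φ] using hdet
  refine Matrix.eq_zero_of_mulVec_eq_zero hdet' ?_
  rw [Matrix.map_mul, ← Matrix.mulVec_mulVec]
  have : (M.map φ).mulVec v = 0 := by
    funext i
    have := hv _ (List.get_mem rows i)
    rw [dot_ofFn _ _ _ (hl _ (List.get_mem _ _))] at this
    simpa [Matrix.mulVec, dotProduct, M, φ] using this
  rw [this, Matrix.mulVec_zero]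

lemma forceRow_eq (xs : List ℕ) : ∀ k, forceRow xs k = k (xs.map (· % 10007)) := by
  induction xs with
  | nil => exact fun k => rfl
  | cons x xs ih =>
    intro k
    rw [forceRow, ih, strict_eq]
    rfl

lemma forceRows_eq (xs : List (List ℕ)) :
    ∀ k, forceRows xs k = k (xs.map fun r => r.map (· % 10007)) := by
  induction xs with
  | nil => exact fun k => rfl
  | cons x xs ih =>
    intro k
    rw [forceRows, ih, forceRow_eq]
    rfl

lemma dot_map_mod (r : List ℕ) : ∀ c : List (ZMod 10007), dot (r.map (· % 10007)) c = dot r c := by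
  induction r with
  | nil => exact fun c => by simp [dot]
  | cons a r ih =>
    intro c
    cases c with
    | nil => simp [dot]
    | cons x c =>
      rw [List.map_cons, dot, dot, ih, ZMod.natCast_mod]

lemma indep_of_forceRows {n : ℕ} {rows : List (List ℕ)} (hl : ∀ r ∈ rows, r.length = n)
    (h : forceRows rows (elimK n) = true) : Indep n rows := by
  rw [forceRows_eq] at h
  refine fun c hc hr => indep_of_elimK n _ ?_ h c hc ?_
  · simp only [List.mem_map, forall_exists_index, and_imp, forall_apply_eq_imp_iff₂,
      List.length_map]
    exact hl
  · simp only [List.mem_map, forall_exists_index, and_imp, forall_apply_eq_imp_iff₂, dot_map_mod]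
    exact hr

lemma eq_zero_of_elimK {n : ℕ} {rows : List (List ℕ)} (hl : ∀ r ∈ rows, r.length = n)
    (h : forceRows rows (elimK n) = true) (v : Fin n → ℂ)
    (hv : ∀ r ∈ rows, dot r (List.ofFn v) = 0) : v = 0 :=
  Indep.complex hl (indep_of_forceRows hl h) v hv

end Elimination

section Checker

/-- The vector with the given natural numbers as coordinates. -/
def vec (N : ℕ) (l : List ℕ) : Fin N → ℂ := fun i => (l.getD i 0 : ℕ)

/-- The exponent vector with the given entries. -/
noncomputable def mono (N : ℕ) (m : List ℕ) : Fin N →₀ ℕ :=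
  Finsupp.equivFunOnFinite.symm fun i => m.getD i 0

/-- All exponent vectors of degree `d` in `N` variables. -/
def monos : ℕ → ℕ → List (List ℕ)
  | 0, 0 => [[]]
  | 0, _ + 1 => []
  | N + 1, d => (List.range (d + 1)).flatMap fun a => (monos N (d - a)).map (a :: ·)

/-- The value of a monomial at a point. -/
def monEval : ℕ → List ℕ → List ℕ → ℕ
  | 0, _, _ => 1
  | N + 1, p, m => Nat.mul (Nat.pow (p.headD 0) (m.headD 0)) (monEval N p.tail m.tail)

/-- The value of a partial derivative of a monomial at a point. -/
def derEval : ℕ → ℕ → List ℕ → List ℕ → ℕ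
  | 0, _, _, _ => 0
  | N + 1, 0, p, m => Nat.mul (Nat.mul (m.headD 0) (Nat.pow (p.headD 0) (Nat.pred (m.headD 0))))
      (monEval N p.tail m.tail)
  | N + 1, i + 1, p, m => Nat.mul (Nat.pow (p.headD 0) (m.headD 0)) (derEval N i p.tail m.tail)

lemma getD_zero (l : List ℕ) : l.getD 0 0 = l.headD 0 := by cases l <;> rfl
lemma getD_add_one (l : List ℕ) (i : ℕ) : l.getD (i + 1) 0 = l.tail.getD i 0 := by
  cases l <;> simp

lemma monEval_eq (N : ℕ) : ∀ p m : List ℕ,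
    monEval N p m = ∏ i : Fin N, p.getD i 0 ^ m.getD i 0 := by
  induction N with
  | zero => exact fun p m => by simp [monEval]
  | succ N ih =>
    intro p m
    rw [monEval, ih, Fin.prod_univ_succ]
    simp only [Fin.val_zero, Fin.val_succ, getD_zero, getD_add_one]
    rfl

lemma derEval_eq (N : ℕ) : ∀ (i : Fin N) (p m : List ℕ),
    derEval N i p m =
      m.getD i 0 * ∏ j : Fin N, p.getD j 0 ^ (m.getD j 0 - if j = i then 1 else 0) := by
  induction N with
  | zero => exact fun i => i.elim0
  | succ N ih =>
    intro i p m
    rw [Fin.prod_univ_succ]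
    refine Fin.cases ?_ (fun i => ?_) i
    · rw [Fin.val_zero, derEval, monEval_eq]
      simp only [if_true, Fin.succ_ne_zero, if_false, Nat.sub_zero, Fin.val_succ, getD_zero,
        getD_add_one, Fin.val_zero, Nat.mul_eq, Nat.pow_eq, Nat.pred_eq_sub_one, mul_assoc]
    · rw [Fin.val_succ, derEval, ih]
      simp only [Fin.succ_inj, (Fin.succ_ne_zero _).symm, if_false, Nat.sub_zero, Fin.val_succ,
        getD_zero, getD_add_one, Fin.val_zero, Nat.mul_eq, Nat.pow_eq]
      ring

lemma eval_monomial_mono {N : ℕ} (p m : List ℕ) (c : ℂ) :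
    eval (vec N p) (monomial (mono N m) c) = (monEval N p m : ℕ) * c := by
  rw [eval_monomial, monEval_eq, Finsupp.prod_fintype _ _ fun _ => pow_zero _]
  simp [vec, mono, mul_comm]

lemma eval_pderiv_monomial_mono {N : ℕ} (i : Fin N) (p m : List ℕ) (c : ℂ) :
    eval (vec N p) (pderiv i (monomial (mono N m) c)) = (derEval N i p m : ℕ) * c := by
  rw [pderiv_monomial, eval_monomial, derEval_eq, Finsupp.prod_fintype _ _ fun _ => pow_zero _]
  simp only [Finsupp.tsub_apply, vec, mono, Finsupp.coe_equivFunOnFinite_symm, Nat.cast_mul,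
    Nat.cast_prod, Nat.cast_pow, Finsupp.single_apply, eq_comm (a := i)]
  ring

lemma mono_cons (N a : ℕ) (m : List ℕ) : mono (N + 1) (a :: m) = Finsupp.cons a (mono N m) := by
  ext i
  refine Fin.cases ?_ (fun i => ?_) i <;> simp [mono]

lemma mono_ofFn {N : ℕ} (μ : Fin N →₀ ℕ) : mono N (List.ofFn μ) = μ := by
  ext i
  simp [mono]

lemma nodup_monos (N : ℕ) : ∀ d, ((monos N d).map (mono N)).Nodup := by
  induction N with
  | zero =>
    intro d
    cases d <;> simp [monos]
  | succ N ih =>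
    intro d
    rw [monos, List.map_flatMap, List.nodup_flatMap]
    have hmap : ∀ a, ((monos N (d - a)).map (a :: ·)).map (mono (N + 1)) =
        ((monos N (d - a)).map (mono N)).map (Finsupp.cons a) := by
      intro a
      simp [List.map_map, Function.comp_def, mono_cons]
    refine ⟨fun a _ => ?_, List.Pairwise.imp ?_ List.nodup_range⟩
    · rw [hmap]
      exact (ih _).map (Finsupp.cons_right_injective a)
    · intro a b hab
      rw [Function.onFun, hmap, hmap]
      intro μ hμ hμ'
      obtain ⟨ν, -, rfl⟩ := List.mem_map.mp hμ
      obtain ⟨ν', -, h⟩ := List.mem_map.mp hμ'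
      exact hab (by simpa using (congrArg (fun f => f 0) h).symm)

lemma ofFn_mem_monos {N : ℕ} : ∀ {d : ℕ} (μ : Fin N →₀ ℕ), μ.degree = d →
    List.ofFn μ ∈ monos N d := by
  induction N with
  | zero =>
    intro d μ h
    rw [Finsupp.degree_eq_sum] at h
    obtain rfl : 0 = d := by simpa using h
    simp [monos]
  | succ N ih =>
    intro d μ h
    rw [Finsupp.degree_eq_sum, Fin.sum_univ_succ] at h
    rw [monos, List.mem_flatMap]
    refine ⟨μ 0, List.mem_range.mpr (by omega), List.mem_map.mpr ⟨_, ih μ.tail ?_, ?_⟩⟩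
    · rw [Finsupp.degree_eq_sum]
      simp only [Finsupp.tail_apply]
      omega
    · rw [List.ofFn_succ]
      rfl

/-- The conditions imposed on the coefficients at the monomials `ms` by double points `P` and simple
points `Q`. -/
def condRows (N : ℕ) (ms P Q : List (List ℕ)) : List (List ℕ) :=
  (P.flatMap fun p => (List.range N).map fun i => ms.map (derEval N i p)) ++
    Q.map fun q => ms.map (monEval N q)

/-- Forms with monomials selected by `pred` are determined by the given conditions. -/
noncomputable def check (N d : ℕ) (pred : List ℕ → Bool) (P Q : List (List ℕ)) : Bool :=
  (fun ms => forceRows (condRows N ms P Q) (elimK ms.length)) ((monos N d).filter pred)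

lemma dot_map {α R : Type*} [CommSemiring R] (g : α → ℕ) (c : α → R) (l : List α) :
    dot (l.map g) (l.map c) = (l.map fun a => (g a : R) * c a).sum := by
  induction l with
  | nil => simp [dot]
  | cons a l ih => simp [dot, ih]

lemma eq_zero_of_check {N d : ℕ} {pred : List ℕ → Bool} {P Q : List (List ℕ)}
    (h : check N d pred P Q = true) {f : MvPolynomial (Fin N) ℂ}
    (hf : ∀ μ, coeff μ f ≠ 0 → μ.degree = d ∧ pred (List.ofFn μ) = true)
    (hP : ∀ p ∈ P, Sing f (vec N p)) (hQ : ∀ q ∈ Q, eval (vec N q) f = 0) : f = 0 := by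
  set ms := (monos N d).filter pred with hms
  have hnodup : (ms.map (mono N)).Nodup := (nodup_monos N d).sublist (List.filter_sublist.map _)
  have hmem : ∀ μ, coeff μ f ≠ 0 → List.ofFn μ ∈ ms := fun μ hμ =>
    List.mem_filter.mpr ⟨ofFn_mem_monos μ (hf μ hμ).1, (hf μ hμ).2⟩
  have hsum : f = (ms.map fun m => monomial (mono N m) (coeff (mono N m) f)).sum := by
    conv_lhs => rw [f.as_sum]
    rw [← Function.comp_def (fun μ => monomial μ (coeff μ f)) (mono N), ← List.map_map,
      ← List.sum_toFinset _ hnodup]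
    refine Finset.sum_subset (fun μ hμ => ?_) fun μ _ hμ => ?_
    · rw [List.mem_toFinset, List.mem_map]
      exact ⟨_, hmem μ (mem_support_iff.mp hμ), mono_ofFn μ⟩
    · rw [notMem_support_iff.mp hμ, monomial_zero]
  have hv : (fun j : Fin ms.length => coeff (mono N (ms.get j)) f) = 0 := by
    have hofFn : List.ofFn (fun j : Fin ms.length => coeff (mono N (ms.get j)) f) =
        ms.map fun m => coeff (mono N m) f := by
      conv_rhs => rw [← List.ofFn_get ms, List.map_ofFn]
      rfl
    refine eq_zero_of_elimK (rows := condRows N ms P Q) ?_ h _ ?_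
    · intro r hr
      rw [condRows, List.mem_append, List.mem_flatMap, List.mem_map] at hr
      rcases hr with ⟨p, -, hr⟩ | ⟨q, -, rfl⟩
      · obtain ⟨i, -, rfl⟩ := List.mem_map.mp hr
        simp [ms]
      · simp [ms]
    · intro r hr
      rw [hofFn]
      rw [condRows, List.mem_append, List.mem_flatMap, List.mem_map] at hr
      rcases hr with ⟨p, hp, hr⟩ | ⟨q, hq, rfl⟩
      · obtain ⟨i, hi, rfl⟩ := List.mem_map.mp hr
        have h1 := hP p hp ⟨i, List.mem_range.mp hi⟩
        rw [hsum, map_list_sum, map_list_sum, List.map_map, List.map_map] at h1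
        rw [dot_map, ← h1]
        congr 1
        refine List.map_congr_left fun m _ => ?_
        exact (eval_pderiv_monomial_mono ⟨i, List.mem_range.mp hi⟩ p m _).symm
      · have h1 := hQ q hq
        rw [hsum, map_list_sum, List.map_map] at h1
        rw [dot_map, ← h1]
        congr 1
        exact List.map_congr_left fun m _ => (eval_monomial_mono q m _).symm
  ext μ
  rw [coeff_zero]
  by_contra hμ
  obtain ⟨j, hj⟩ := List.get_of_mem (hmem μ hμ)
  have := congrFun hv j
  rw [hj, mono_ofFn] at this
  exact hμ this

/-- A double point at a coordinate point kills the coefficients at monomials with a large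
exponent. -/
lemma Sing.coeff_eq_zero {σ : Type*} [Fintype σ] [DecidableEq σ] {d : ℕ} {f : MvPolynomial σ ℂ}
    (hf : f ∈ restrictSupport ℂ (degSet σ (d + 1))) {i : σ} (h : Sing f (Pi.single i 1))
    {μ : σ →₀ ℕ} (hμ : d ≤ μ i) : coeff μ f = 0 := by
  by_contra hcon
  rw [mem_restrictSupport_iff] at hf
  have hdeg : μ.degree = d + 1 := hf μ hcon
  obtain ⟨j, rfl⟩ : ∃ j, μ = Finsupp.single i d + Finsupp.single j 1 := by
    have hle : Finsupp.single i d ≤ μ := by simpa using hμ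
    obtain ⟨ν, rfl⟩ := exists_add_of_le hle
    have : ν.degree = 1 := by
      rw [map_add, Finsupp.degree_single] at hdeg
      omega
    obtain ⟨j, hj⟩ : ∃ j, ν j ≠ 0 := by
      by_contra! h0
      obtain rfl : ν = 0 := Finsupp.ext h0
      simp at this
    obtain ⟨ν, rfl⟩ := exists_add_of_le (show Finsupp.single j 1 ≤ ν by
      simpa using Nat.one_le_iff_ne_zero.mpr hj)
    rw [map_add, Finsupp.degree_single, Nat.add_eq_left, Finsupp.degree_eq_zero_iff] at this
    exact ⟨j, by rw [this, add_zero]⟩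
  have h1 := h j
  have h2 : eval (Pi.single i 1) (pderiv j f) = coeff (Finsupp.single i d) (pderiv j f) := by
    rw [eval_eq]
    rw [Finset.sum_eq_single (Finsupp.single i d)]
    · rw [Finset.prod_eq_one, mul_one]
      intro k _
      by_cases hk : k = i
      · subst hk; simp
      · simp [hk]
    · intro ν hν hne
      have hνd : ν.degree = d := by
        rw [mem_support_iff, coeff_pderiv] at hν
        have : (ν + Finsupp.single j 1).degree = d + 1 := hf _ (left_ne_zero_of_mul hν)
        simpa using this
      obtain ⟨k, hki, hk⟩ : ∃ k, k ≠ i ∧ ν k ≠ 0 := by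
        by_contra! hall
        apply hne
        have hs : ν = Finsupp.single i (ν i) := by
          ext k
          by_cases hk : k = i
          · subst hk; simp
          · rw [hall k hk, Finsupp.single_eq_of_ne hk]
        rw [hs, Finsupp.degree_single] at hνd
        rw [hs, hνd]
      rw [Finset.prod_eq_zero (Finsupp.mem_support_iff.mpr hk), mul_zero]
      simp [hki, hk]
    · intro hν
      rw [notMem_support_iff.mp hν, zero_mul]
  rw [h2] at h1
  rw [coeff_pderiv] at h1
  rcases mul_eq_zero.mp h1 with h3 | h3
  · exact hcon h3
  · rw [← Nat.cast_succ, Nat.cast_eq_zero] at h3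
    omega

end Checker

section BaseCases

lemma eval_eq_zero_of_dirD {σ : Type*} [Fintype σ] {d : ℕ} (hd : d ≠ 0) {f : MvPolynomial σ ℂ}
    (hf : f ∈ restrictSupport ℂ (degSet σ d)) {q : σ → ℂ} (h : dirD q q f = 0) :
    eval q f = 0 := by
  have := euler hf q
  rw [h] at this
  simpa [hd] using this.symm

lemma eq_zero_of_check_equiv {σ : Type*} [Fintype σ] [DecidableEq σ] {N d : ℕ} (e : σ ≃ Fin N)
    {S : Set (σ →₀ ℕ)} (hS : S ⊆ degSet σ (d + 1)) {pred : List ℕ → Bool} {I : Set σ}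
    (hpred : ∀ μ ∈ S, (∀ i ∈ I, μ i < d) → pred (List.ofFn fun j => μ (e.symm j)) = true)
    {P Q : List (List ℕ)} (h : check N (d + 1) pred P Q = true) {f : MvPolynomial σ ℂ}
    (hf : f ∈ restrictSupport ℂ S) (hI : ∀ i ∈ I, Sing f (Pi.single i 1))
    (hP : ∀ p ∈ P, Sing f (vec N p ∘ e)) (hQ : ∀ q ∈ Q, dirD (vec N q ∘ e) (vec N q ∘ e) f = 0) :
    f = 0 := by
  have hf' : f ∈ restrictSupport ℂ (degSet σ (d + 1)) :=
    mem_restrictSupport_iff.mpr fun μ hμ => hS (mem_restrictSupport_iff.mp hf μ hμ)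
  suffices rename e f = 0 from (rename_injective e e.injective) (this.trans (map_zero _).symm)
  refine eq_zero_of_check h (fun μ hμ => ?_) (fun p hp i => ?_) fun q hq => ?_
  · obtain ⟨ν, rfl⟩ := exists_mapDomain_eq e.injective (μ := μ)
      fun i hi => absurd (e.apply_symm_apply i) (hi _)
    rw [coeff_rename_mapDomain _ e.injective] at hμ
    have hν := mem_restrictSupport_iff.mp hf ν hμ
    refine ⟨by simpa using (show ν.degree = d + 1 from hS hν), ?_⟩
    have : (⇑(Finsupp.mapDomain e ν) : Fin N → ℕ) = fun j => ν (e.symm j) := by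
      funext j
      conv_lhs => rw [← e.apply_symm_apply j]
      exact Finsupp.mapDomain_apply e.injective ν _
    rw [this]
    refine hpred ν hν fun i hi => ?_
    by_contra! hle
    exact hμ ((hI i hi).coeff_eq_zero hf' hle)
  · obtain ⟨i, rfl⟩ := e.surjective i
    rw [pderiv_rename e.injective, eval_rename]
    exact hP p hp i
  · rw [eval_rename]
    exact eval_eq_zero_of_dirD (Nat.succ_ne_zero d) hf' (hQ q hq)

/-- All exponents are less than `d`. -/
def small (d : ℕ) (m : List ℕ) : Bool := m.all fun a => Nat.blt a d

/-- Some exponent in the block of three starting at `a` is nonzero. -/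
def block (a : ℕ) (m : List ℕ) : Bool :=
  !Nat.beq (m.getD a 0 + m.getD (a + 1) 0 + m.getD (a + 2) 0) 0

lemma small_ofFn {N d : ℕ} {g : Fin N → ℕ} (h : ∀ i, g i < d) : small d (List.ofFn g) = true := by
  rw [small, List.all_eq_true]
  intro a ha
  obtain ⟨i, rfl⟩ := List.mem_ofFn.mp ha
  rw [Nat.blt_eq]
  exact h i

lemma block_ofFn {N a : ℕ} {g : Fin N → ℕ} (x : Fin 3) (j : Fin N) (hj : (j : ℕ) = a + x)
    (h : g j ≠ 0) : block a (List.ofFn g) = true := by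
  have h1 : (List.ofFn g).getD (a + x) 0 ≠ 0 := by
    rw [← hj]
    simpa using h
  rw [block, Bool.not_eq_true', ← Bool.not_eq_true, Nat.beq_eq]
  fin_cases x <;> simp only [Fin.zero_eta, Fin.val_zero, add_zero, Fin.mk_one, Fin.val_one,
    Fin.reduceFinMk, Fin.val_two] at h1 <;> omega

lemma K.of_check {N d : ℕ} {P Q : List (List ℕ)} (h : check N (d + 1) (small d) P Q = true) :
    K N (d + 1) (N + P.length) Q.length := by
  have : KT (Fin N) (Fin N ⊕ Fin P.length) (Fin Q.length) (d + 1) := by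
    refine ⟨Sum.elim (fun i => Pi.single i 1) fun a => vec N P[a], fun b => vec N Q[b],
      fun f hf hP hQ => ?_⟩
    refine eq_zero_of_check_equiv (Equiv.refl _) subset_rfl (I := Set.univ)
      (fun μ _ hμ => small_ofFn fun i => hμ i trivial) h hf (fun i _ => hP (Sum.inl i))
      (fun p hp => ?_) fun q hq => ?_
    · obtain ⟨i, rfl⟩ := List.get_of_mem hp
      exact hP (Sum.inr i)
    · obtain ⟨i, rfl⟩ := List.get_of_mem hq
      exact hQ i
  simpa using kT_iff_K.mp this

lemma ext_eq {σ τ : Type*} {j : τ → σ} (hj : j.Injective) {v : σ → ℂ}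
    (hv : ∀ a, (∀ b, j b ≠ a) → v a = 0) : ext j (v ∘ j) = v := by
  funext a
  by_cases ha : ∃ b, j b = a
  · obtain ⟨b, rfl⟩ := ha
    exact hj.extend_apply _ _ _
  · rw [ext, Function.extend_apply' _ _ _ ha, hv a (by simpa using ha)]
    rfl

lemma ext_single {σ τ : Type*} [DecidableEq σ] [DecidableEq τ] {j : τ → σ} (hj : j.Injective)
    (b : τ) : ext j (Pi.single b 1) = Pi.single (j b) 1 := by
  rw [← ext_eq hj (v := Pi.single (j b) 1) fun a ha => Pi.single_eq_of_ne (ha b).symm _]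
  congr 1
  funext c
  by_cases hc : c = b
  · subst hc; simp
  · simp [hc, hj.ne hc]

lemma vec_of_le {N : ℕ} {l : List ℕ} {i : Fin N} (h : l.length ≤ i) : vec N l i = 0 := by
  simp [vec, h]

lemma exists_getD_of_mem {G : List (List ℕ)} {p : List ℕ} (hp : p ∈ G) {w : ℕ}
    (hG : G.length = w) : ∃ a : Fin w, G.getD a [] = p := by
  subst hG
  obtain ⟨i, rfl⟩ := List.get_of_mem hp
  exact ⟨i, by simp⟩

lemma OneKill.of_check {w : ℕ} {L G Q : List (List ℕ)} (hL : ∀ p ∈ L, p.length ≤ w)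
    (hG : G.length = w)
    (h : check (w + 3) 3 (fun m => small 2 m && block w m) (L ++ G) Q = true) :
    OneKill (Fin w) (Fin w ⊕ Fin L.length) (Fin Q.length) := by
  let e : Fin w ⊕ Fin 3 ≃ Fin (w + 3) := finSumFinEquiv
  refine ⟨Sum.elim (fun i => Pi.single i 1) fun a => (vec (w + 3) L[a] ∘ e) ∘ Sum.inl,
    Sum.elim (fun a => vec (w + 3) (G.getD a []) ∘ e) fun x => Pi.single (Sum.inr x) 1,
    fun b => vec (w + 3) Q[b] ∘ e, fun f hf hP hQ => ?_⟩
  refine eq_zero_of_check_equiv e (oneBlock_subset _) (I := Set.univ) (fun μ hμ hlt => ?_) h hf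
    (fun i _ => ?_) (fun p hp => ?_) fun q hq => ?_
  · rw [Bool.and_eq_true]
    refine ⟨small_ofFn fun i => hlt _ trivial, ?_⟩
    obtain ⟨x, hx⟩ := hμ.2
    exact block_ofFn x (e (Sum.inr x)) (by simp [e]) (by simpa using hx)
  · rcases i with i | x
    · have := hP (Sum.inl (Sum.inl i))
      rwa [Sum.elim_inl, Sum.elim_inl, ext_single Sum.inl_injective] at this
    · exact hP (Sum.inr (Sum.inr x))
  · rcases List.mem_append.mp hp with hp | hp
    · obtain ⟨i, rfl⟩ := List.get_of_mem hp
      have := hP (Sum.inl (Sum.inr i))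
      rw [Sum.elim_inl, Sum.elim_inr, ext_eq Sum.inl_injective] at this
      · exact this
      · rintro (a | x) ha
        · exact absurd rfl (ha a)
        · exact vec_of_le ((hL _ hp).trans (by simp [e]))
    · obtain ⟨a, rfl⟩ := exists_getD_of_mem hp hG
      exact hP (Sum.inr (Sum.inl a))
  · obtain ⟨i, rfl⟩ := List.get_of_mem hq
    exact hQ i

/-- The standard enumeration of variables in three blocks. -/
def blockEquiv (w : ℕ) : Fin w ⊕ (Fin 3 ⊕ Fin 3) ≃ Fin (w + (3 + 3)) :=
  (Equiv.sumCongr (Equiv.refl _) finSumFinEquiv).trans finSumFinEquiv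

lemma blockEquiv_inl (w : ℕ) (a : Fin w) : (blockEquiv w (Sum.inl a) : ℕ) = a := rfl
lemma blockEquiv_inr_inl (w : ℕ) (x : Fin 3) :
    (blockEquiv w (Sum.inr (Sum.inl x)) : ℕ) = w + x := rfl
lemma blockEquiv_inr_inr (w : ℕ) (y : Fin 3) :
    (blockEquiv w (Sum.inr (Sum.inr y)) : ℕ) = w + 3 + y := (Nat.add_assoc w 3 y).symm

lemma TwoKill.of_check {w : ℕ} {L M G : List (List ℕ)}
    (hL' : L.all (fun p => !block w p) = true) (hM' : ∀ p ∈ M, p.length ≤ w + 3)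
    (hL : L.length = w) (hM : M.length = w) (hG : G.length = 3)
    (h : check (w + (3 + 3)) 3 (fun m => small 2 (m.drop w) && (block w m && block (w + 3) m))
      (L ++ M ++ G) [] = true) : TwoKill (Fin w) := by
  let e := blockEquiv w
  have hjL : Function.Injective (Sum.map id Sum.inr : Fin w ⊕ Fin 3 → Fin w ⊕ (Fin 3 ⊕ Fin 3)) :=
    Function.injective_id.sumMap Sum.inr_injective
  have hjM : Function.Injective (Sum.map id Sum.inl : Fin w ⊕ Fin 3 → Fin w ⊕ (Fin 3 ⊕ Fin 3)) :=
    Function.injective_id.sumMap Sum.inl_injective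
  refine ⟨Sum.elim (fun a => (vec (w + (3 + 3)) (L.getD a []) ∘ e) ∘ Sum.map id Sum.inr)
      fun y => Pi.single (Sum.inr y) 1,
    Sum.elim (fun a => (vec (w + (3 + 3)) (M.getD a []) ∘ e) ∘ Sum.map id Sum.inl)
      fun x => Pi.single (Sum.inr x) 1,
    fun a => vec (w + (3 + 3)) (G.getD a []) ∘ e, fun f hf hP _ => ?_⟩
  refine eq_zero_of_check_equiv e (twoBlock_subset _) (I := Set.range Sum.inr) (fun μ hμ hlt => ?_)
    h hf ?_ (fun p hp => ?_) fun q hq => absurd hq (by simp)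
  · rw [Bool.and_eq_true, Bool.and_eq_true]
    obtain ⟨-, ⟨x, hx⟩, y, hy⟩ := hμ
    refine ⟨?_, block_ofFn x (e (Sum.inr (Sum.inl x))) (blockEquiv_inr_inl _ x) (by simpa using hx),
      block_ofFn y (e (Sum.inr (Sum.inr y))) (blockEquiv_inr_inr _ y) (by simpa using hy)⟩
    rw [small, List.all_eq_true]
    intro a ha
    obtain ⟨i, hi, rfl⟩ := List.mem_iff_getElem.mp ha
    rw [Nat.blt_eq]
    simp only [List.length_drop, List.length_ofFn] at hi
    have hi' : i < 6 := by omega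
    rw [List.getElem_drop, List.getElem_ofFn]
    have : e.symm ⟨w + i, by omega⟩ = Sum.inr (finSumFinEquiv.symm ⟨i, hi'⟩) := by
      rw [Equiv.symm_apply_eq]
      obtain ⟨c, hc⟩ := finSumFinEquiv.surjective (⟨i, hi'⟩ : Fin (3 + 3))
      rw [← hc, Equiv.symm_apply_apply]
      have hci : i = (finSumFinEquiv c : Fin (3 + 3)) := by rw [hc]
      subst hci
      rfl
    rw [this]
    exact hlt _ ⟨_, rfl⟩
  · rintro _ ⟨x | y, rfl⟩
    · have := hP (Sum.inl (Sum.inr (Sum.inr x)))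
      rwa [Sum.elim_inl, Sum.elim_inr, Sum.elim_inr, ext_single hjM] at this
    · have := hP (Sum.inl (Sum.inl (Sum.inr y)))
      rwa [Sum.elim_inl, Sum.elim_inl, Sum.elim_inr, ext_single hjL] at this
  · rw [List.mem_append, List.mem_append] at hp
    rcases hp with (hp | hp) | hp
    · obtain ⟨a, ha⟩ := exists_getD_of_mem hp hL
      have := hP (Sum.inl (Sum.inl (Sum.inl a)))
      rw [Sum.elim_inl, Sum.elim_inl, Sum.elim_inl, ext_eq hjL, ha] at this
      · exact this
      · rintro (b | x | y) hb
        · exact absurd rfl (hb (Sum.inl b))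
        · rw [ha]
          have h1 := List.all_eq_true.mp hL' p hp
          rw [block, Bool.not_not, Nat.beq_eq] at h1
          have h2 : p.getD (w + x) 0 = 0 := by
            fin_cases x <;> simp only [Fin.zero_eta, Fin.val_zero, add_zero, Fin.mk_one,
              Fin.val_one, Fin.reduceFinMk, Fin.val_two] <;> omega
          have h3 : ((e (Sum.inr (Sum.inl x)) : Fin (w + (3 + 3))) : ℕ) = w + x :=
            blockEquiv_inr_inl _ x
          rw [Function.comp_apply, vec, h3, h2, Nat.cast_zero]
        · exact absurd rfl (hb (Sum.inr y))
    · obtain ⟨a, ha⟩ := exists_getD_of_mem hp hM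
      have := hP (Sum.inl (Sum.inr (Sum.inl a)))
      rw [Sum.elim_inl, Sum.elim_inr, Sum.elim_inl, ext_eq hjM, ha] at this
      · exact this
      · rintro (b | x | y) hb
        · exact absurd rfl (hb (Sum.inl b))
        · exact absurd rfl (hb (Sum.inr x))
        · rw [ha]
          refine vec_of_le ((hM' _ hp).trans ?_)
          rw [blockEquiv_inr_inr]
          omega
    · obtain ⟨a, rfl⟩ := exists_getD_of_mem hp hG
      exact hP (Sum.inr a)

lemma ThreeKill.of_check {L M G : List (List ℕ)} (hL : L.length = 3) (hM : M.length = 3)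
    (hG : G.length = 3) (hL' : L.all (fun p => !block 3 p) = true) (hM' : ∀ p ∈ M, p.length ≤ 6)
    (hG' : G.all (fun p => !block 0 p) = true)
    (h : check (3 + (3 + 3)) 3 (fun m => block 0 m && (block 3 m && block 6 m))
      (L ++ M ++ G) [] = true) :
    ThreeKill := by
  let e := blockEquiv 3
  have hjL : Function.Injective (Sum.map id Sum.inr : Fin 3 ⊕ Fin 3 → Fin 3 ⊕ (Fin 3 ⊕ Fin 3)) :=
    Function.injective_id.sumMap Sum.inr_injective
  have hjM : Function.Injective (Sum.map id Sum.inl : Fin 3 ⊕ Fin 3 → Fin 3 ⊕ (Fin 3 ⊕ Fin 3)) :=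
    Function.injective_id.sumMap Sum.inl_injective
  have hvec : ∀ (p : List ℕ) (a : ℕ) (x : Fin 3) (i : Fin (3 + (3 + 3))), (!block a p) = true →
      (i : ℕ) = a + x → vec (3 + (3 + 3)) p i = 0 := by
    intro p a x i h1 hi
    rw [block, Bool.not_not, Nat.beq_eq] at h1
    have h2 : p.getD (a + x) 0 = 0 := by
      fin_cases x <;> simp only [Fin.zero_eta, Fin.val_zero, add_zero, Fin.mk_one,
        Fin.val_one, Fin.reduceFinMk, Fin.val_two] <;> omega
    rw [vec, hi, h2, Nat.cast_zero]
  refine ⟨fun a => (vec (3 + (3 + 3)) (L.getD a []) ∘ e) ∘ Sum.map id Sum.inr,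
    fun a => (vec (3 + (3 + 3)) (M.getD a []) ∘ e) ∘ Sum.map id Sum.inl,
    fun a => (vec (3 + (3 + 3)) (G.getD a []) ∘ e) ∘ Sum.inr, fun f hf hP _ => ?_⟩
  refine eq_zero_of_check_equiv e (fun μ hμ => hμ.1) (I := ∅) (fun μ hμ _ => ?_)
    h hf (by simp) (fun p hp => ?_) fun q hq => absurd hq (by simp)
  · rw [Bool.and_eq_true, Bool.and_eq_true]
    obtain ⟨-, ⟨x, hx⟩, ⟨y, hy⟩, z, hz⟩ := hμ
    exact ⟨block_ofFn z (e (Sum.inl z)) ((blockEquiv_inl _ _).trans (Nat.zero_add _).symm)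
      (by simpa using hz),
      block_ofFn x (e (Sum.inr (Sum.inl x))) (blockEquiv_inr_inl _ x) (by simpa using hx),
      block_ofFn y (e (Sum.inr (Sum.inr y))) (blockEquiv_inr_inr _ y) (by simpa using hy)⟩
  · rw [List.mem_append, List.mem_append] at hp
    rcases hp with (hp | hp) | hp
    · obtain ⟨a, ha⟩ := exists_getD_of_mem hp hL
      have := hP (Sum.inl (Sum.inl a))
      rw [Sum.elim_inl, Sum.elim_inl, ext_eq hjL, ha] at this
      · exact this
      · rintro (b | x | y) hb
        · exact absurd rfl (hb (Sum.inl b))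
        · rw [ha]
          exact hvec p 3 x _ (List.all_eq_true.mp hL' p hp) (blockEquiv_inr_inl _ x)
        · exact absurd rfl (hb (Sum.inr y))
    · obtain ⟨a, ha⟩ := exists_getD_of_mem hp hM
      have := hP (Sum.inl (Sum.inr a))
      rw [Sum.elim_inl, Sum.elim_inr, ext_eq hjM, ha] at this
      · exact this
      · rintro (b | x | y) hb
        · exact absurd rfl (hb (Sum.inl b))
        · exact absurd rfl (hb (Sum.inr x))
        · rw [ha]
          refine vec_of_le ((hM' _ hp).trans ?_)
          rw [blockEquiv_inr_inr]
          omega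
    · obtain ⟨a, ha⟩ := exists_getD_of_mem hp hG
      have := hP (Sum.inr a)
      rw [Sum.elim_inr, ext_eq Sum.inr_injective, ha] at this
      · exact this
      · rintro (b | x) hb
        · rw [ha]
          exact hvec p 0 b _ (List.all_eq_true.mp hG' p hp)
            ((blockEquiv_inl _ _).trans (Nat.zero_add _).symm)
        · exact absurd rfl (hb x)

end BaseCases

section BaseInstances

lemma k_1_3_1_0 : K 1 3 1 0 :=
  K.of_check (N := 1) (d := 2) (P := [])
    (Q := []) (by decide +kernel)

lemma k_2_3_2_0 : K 2 3 2 0 :=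
  K.of_check (N := 2) (d := 2) (P := [])
    (Q := []) (by decide +kernel)

lemma k_3_3_3_1 : K 3 3 3 1 :=
  K.of_check (N := 3) (d := 2) (P := [])
    (Q := [[3, 1, 3]]) (by decide +kernel)

lemma k_3_3_4_0 : K 3 3 4 0 :=
  K.of_check (N := 3) (d := 2) (P := [[1, 3, 2]])
    (Q := []) (by decide +kernel)

lemma k_5_3_6_5 : K 5 3 6 5 :=
  K.of_check (N := 5) (d := 2) (P := [[1, 2, 2, 3, 3]])
    (Q := [[1, 0, 0, 3, 2], [1, 1, 1, 3, 0], [1, 3, 2, 1, 0], [3, 2, 1, 3, 1],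
      [3, 3, 2, 3, 2]]) (by decide +kernel)

lemma k_5_3_8_0 : K 5 3 8 0 :=
  K.of_check (N := 5) (d := 2) (P := [[2, 3, 3, 1, 0], [3, 1, 3, 2, 1], [0, 3, 2, 2, 0]])
    (Q := []) (by decide +kernel)

lemma k_8_3_15_0 : K 8 3 15 0 :=
  K.of_check (N := 8) (d := 2) (P := [[1, 0, 3, 3, 2, 3, 0, 1], [1, 2, 0, 2, 3, 2, 3, 0],
      [2, 0, 2, 0, 2, 2, 2, 2], [1, 3, 3, 2, 3, 1, 1, 3], [3, 1, 1, 0, 2, 0, 3, 0],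
      [2, 1, 2, 3, 3, 3, 1, 3], [2, 3, 3, 3, 1, 2, 2, 3]])
    (Q := []) (by decide +kernel)

lemma k_2_4_2_1 : K 2 4 2 1 :=
  K.of_check (N := 2) (d := 3) (P := [])
    (Q := [[1, 1]]) (by decide +kernel)

lemma k_2_4_3_0 : K 2 4 3 0 :=
  K.of_check (N := 2) (d := 3) (P := [[1, 1]])
    (Q := []) (by decide +kernel)

lemma k_3_4_4_3 : K 3 4 4 3 :=
  K.of_check (N := 3) (d := 3) (P := [[1, 2, 1]])
    (Q := [[2, 0, 1], [2, 2, 1], [1, 2, 3]]) (by decide +kernel)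

lemma k_3_4_5_1 : K 3 4 5 1 :=
  K.of_check (N := 3) (d := 3) (P := [[3, 2, 1], [2, 2, 2]])
    (Q := [[3, 3, 1]]) (by decide +kernel)

lemma k_3_4_6_0 : K 3 4 6 0 :=
  K.of_check (N := 3) (d := 3) (P := [[2, 2, 3], [2, 0, 1], [1, 3, 0]])
    (Q := []) (by decide +kernel)

lemma k_4_4_8_3 : K 4 4 8 3 :=
  K.of_check (N := 4) (d := 3) (P := [[2, 3, 3, 1], [1, 2, 1, 2], [2, 1, 2, 2], [1, 0, 3, 3]])
    (Q := [[2, 1, 1, 1], [3, 3, 0, 0], [1, 3, 0, 2]]) (by decide +kernel)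

lemma k_4_4_10_0 : K 4 4 10 0 :=
  K.of_check (N := 4) (d := 3) (P := [[2, 0, 0, 3], [2, 1, 2, 3], [1, 2, 3, 0], [0, 2, 3, 2],
      [0, 3, 0, 1], [3, 1, 2, 0]])
    (Q := []) (by decide +kernel)

lemma k_5_4_13_5 : K 5 4 13 5 :=
  K.of_check (N := 5) (d := 3) (P := [[1, 0, 3, 1, 1], [1, 3, 3, 1, 3], [0, 2, 3, 1, 2],
      [0, 1, 3, 3, 3], [1, 1, 2, 2, 0], [1, 1, 2, 0, 3], [2, 1, 2, 1, 0], [1, 3, 0, 0, 3]])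
    (Q := [[2, 0, 3, 1, 2], [0, 0, 2, 3, 2], [3, 2, 3, 1, 3], [3, 3, 0, 1, 3],
      [2, 0, 0, 3, 1]]) (by decide +kernel)

lemma k_5_4_15_0 : K 5 4 15 0 :=
  K.of_check (N := 5) (d := 3) (P := [[1, 2, 2, 2, 3], [2, 0, 3, 3, 1], [3, 3, 0, 1, 0],
      [3, 2, 0, 2, 2], [3, 0, 1, 0, 3], [1, 2, 0, 0, 0], [0, 0, 2, 2, 2], [3, 1, 0, 3, 3],
      [2, 1, 2, 3, 3], [3, 0, 1, 2, 3]])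
    (Q := []) (by decide +kernel)

lemma k_6_4_21_0 : K 6 4 21 0 :=
  K.of_check (N := 6) (d := 3) (P := [[2, 3, 0, 2, 0, 3], [1, 0, 0, 1, 2, 2],
      [1, 3, 0, 0, 2, 3], [2, 2, 2, 1, 2, 3], [1, 0, 1, 1, 0, 2], [0, 1, 1, 1, 3, 1],
      [2, 1, 1, 1, 0, 3], [1, 3, 2, 2, 0, 1], [3, 0, 2, 3, 0, 2], [0, 1, 1, 2, 3, 2],
      [3, 2, 1, 1, 3, 1], [0, 0, 3, 1, 2, 0], [1, 2, 1, 2, 3, 2], [0, 2, 2, 0, 1, 0],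
      [1, 2, 3, 3, 2, 0]])
    (Q := []) (by decide +kernel)

lemma oneKill_0 : OneKill (Fin 0) (Fin 0 ⊕ Fin 0) (Fin 1) :=
  OneKill.of_check (w := 0) (L := [])
    (G := [])
    (Q := [[3, 3, 3]]) (by decide) (by decide) (by decide +kernel)

lemma oneKill_1 : OneKill (Fin 1) (Fin 1 ⊕ Fin 0) (Fin 0) :=
  OneKill.of_check (w := 1) (L := [])
    (G := [[2, 1, 2, 3]])
    (Q := []) (by decide) (by decide) (by decide +kernel)

lemma oneKill_3 : OneKill (Fin 3) (Fin 3 ⊕ Fin 1) (Fin 0) :=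
  OneKill.of_check (w := 3) (L := [[1, 3, 1]])
    (G := [[0, 2, 1, 3, 3, 3], [1, 3, 3, 3, 3, 1], [1, 2, 1, 1, 0, 0]])
    (Q := []) (by decide) (by decide) (by decide +kernel)

lemma oneKill_5 : OneKill (Fin 5) (Fin 5 ⊕ Fin 2) (Fin 0) :=
  OneKill.of_check (w := 5) (L := [[1, 3, 2, 0, 0], [0, 1, 3, 2, 2]])
    (G := [[1, 2, 3, 1, 1, 1, 1, 1], [0, 3, 3, 0, 2, 3, 1, 0], [1, 0, 3, 1, 1, 3, 2, 1],
      [2, 0, 2, 2, 1, 2, 2, 1], [3, 1, 3, 1, 2, 0, 1, 2]])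
    (Q := []) (by decide) (by decide) (by decide +kernel)

lemma twoKill_0 : TwoKill (Fin 0) :=
  TwoKill.of_check (w := 0) (L := [])
    (M := [])
    (G := [[3, 1, 0, 1, 1, 2], [1, 1, 2, 3, 1, 3], [2, 3, 3, 1, 2, 2]])
    (by decide) (by decide) (by decide) (by decide) (by decide) (by decide +kernel)

lemma twoKill_1 : TwoKill (Fin 1) :=
  TwoKill.of_check (w := 1) (L := [[0, 0, 0, 0, 2, 1, 3]])
    (M := [[0, 3, 0, 2]])
    (G := [[1, 0, 3, 1, 0, 3, 3], [0, 2, 2, 1, 1, 3, 0], [2, 1, 3, 0, 3, 2, 2]])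
    (by decide) (by decide) (by decide) (by decide) (by decide) (by decide +kernel)

lemma twoKill_2 : TwoKill (Fin 2) :=
  TwoKill.of_check (w := 2) (L := [[3, 3, 0, 0, 0, 2, 2, 2], [2, 1, 0, 0, 0, 2, 1, 3]])
    (M := [[1, 3, 0, 2, 2], [3, 2, 3, 3, 2]])
    (G := [[3, 2, 2, 1, 3, 3, 2, 0], [0, 1, 2, 3, 3, 0, 2, 1], [0, 1, 1, 3, 1, 2, 2, 1]])
    (by decide) (by decide) (by decide) (by decide) (by decide) (by decide +kernel)

lemma threeKill : ThreeKill :=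
  ThreeKill.of_check (L := [[3, 3, 1, 0, 0, 0, 1, 2, 4], [0, 4, 4, 0, 0, 0, 0, 4, 4],
      [4, 4, 3, 0, 0, 0, 3, 2, 0]])
    (M := [[4, 3, 0, 1, 3, 0], [2, 2, 1, 0, 4, 3], [1, 4, 1, 4, 3, 0]])
    (G := [[0, 0, 0, 4, 4, 3, 4, 1, 2], [0, 0, 0, 0, 0, 1, 0, 1, 3], [0, 0, 0, 0, 3, 3, 0, 2, 4]])
    (by decide) (by decide) (by decide) (by decide) (by decide) (by decide) (by decide +kernel)

end BaseInstances

section CubicChains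

lemma exists_twoKill : ∀ w : ℕ, ∃ (W : Type) (_ : Fintype W), Fintype.card W = w ∧ TwoKill W
  | 0 => ⟨Fin 0, inferInstance, by simp, twoKill_0⟩
  | 1 => ⟨Fin 1, inferInstance, by simp, twoKill_1⟩
  | 2 => ⟨Fin 2, inferInstance, by simp, twoKill_2⟩
  | w + 3 => by
    obtain ⟨W, _, hW, h⟩ := exists_twoKill w
    exact ⟨W ⊕ Fin 3, inferInstance, by simp [hW], twoKill_step h threeKill⟩

/-- `OneKill` for the standard index types. -/
def OneK (w k s : ℕ) : Prop := OneKill (Fin w) (Fin k) (Fin s)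

lemma OneKill.toOneK {W ι κ : Type} [Fintype W] [Fintype ι] [Fintype κ] (h : OneKill W ι κ)
    {w k s : ℕ} (hw : Fintype.card W = w) (hk : Fintype.card ι = k) (hs : Fintype.card κ = s) :
    OneK w k s :=
  (h.congr (Fintype.equivFinOfCardEq hw)).of_surjective
    (Fintype.equivFinOfCardEq hk).symm.surjective (Fintype.equivFinOfCardEq hs).symm.surjective

lemma OneK.step {w k s : ℕ} (h : OneK w k s) : OneK (w + 3) (k + (w + 3)) s := by
  obtain ⟨W, _, hW, hC⟩ := exists_twoKill w
  have h' := OneKill.congr h (Fintype.equivFinOfCardEq hW).symm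
  exact (oneKill_step h' hC).toOneK (by simp [hW]) (by simp [hW]) (by simp)

lemma K.cubic_step {w k s s' : ℕ} (h : K w 3 k s) (hB : OneK w k s') :
    K (w + 3) 3 (k + (w + 3)) (s + s') := by
  have := kT_iff_K.mp (kT_step h hB)
  simpa using this

/-- Cubics in `3 m + 1` variables. -/
lemma cubic_one (m : ℕ) : ∃ k, 2 * k = (m + 1) * (3 * m + 2) ∧ K (3 * m + 1) 3 k 0 ∧
    OneK (3 * m + 1) k 0 := by
  induction m with
  | zero => exact ⟨1, by norm_num, k_1_3_1_0, oneKill_1.toOneK (by simp) (by simp) (by simp)⟩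
  | succ m ih =>
    obtain ⟨k, hk, h, hB⟩ := ih
    exact ⟨k + (3 * m + 1 + 3), by linarith, h.cubic_step hB, hB.step⟩

/-- Cubics in `3 m + 8` variables. -/
lemma cubic_two (m : ℕ) : ∃ k, 2 * k = (m + 3) * (3 * m + 10) ∧ K (3 * m + 8) 3 k 0 ∧
    OneK (3 * m + 8) k 0 := by
  induction m with
  | zero =>
    exact ⟨15, by norm_num, k_8_3_15_0,
      OneK.step (w := 5) (k := 7) (oneKill_5.toOneK (by simp) (by simp) (by simp))⟩
  | succ m ih =>
    obtain ⟨k, hk, h, hB⟩ := ih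
    exact ⟨k + (3 * m + 8 + 3), by linarith, h.cubic_step hB, hB.step⟩

/-- Cubics in `3 m + 3` variables, with the largest number of singular points. -/
lemma cubic_three_floor (m : ℕ) : ∃ k, 2 * k = (m + 1) * (3 * m + 6) ∧
    K (3 * m + 3) 3 k (m + 1) ∧ OneK (3 * m + 3) k 1 := by
  induction m with
  | zero =>
    exact ⟨3, by norm_num, k_3_3_3_1,
      OneK.step (w := 0) (k := 0) (oneKill_0.toOneK (by simp) (by simp) (by simp))⟩
  | succ m ih =>
    obtain ⟨k, hk, h, hB⟩ := ih
    exact ⟨k + (3 * m + 3 + 3), by linarith, h.cubic_step hB, hB.step⟩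

/-- Cubics in `3 m + 3` variables, with one additional singular point. -/
lemma cubic_three_ceil (m : ℕ) : ∃ k, 2 * k = (m + 1) * (3 * m + 6) + 2 ∧
    K (3 * m + 3) 3 k 0 ∧ OneK (3 * m + 3) k 0 := by
  induction m with
  | zero => exact ⟨4, by norm_num, k_3_3_4_0, oneKill_3.toOneK (by simp) (by simp) (by simp)⟩
  | succ m ih =>
    obtain ⟨k, hk, h, hB⟩ := ih
    exact ⟨k + (3 * m + 3 + 3), by linarith, h.cubic_step hB, hB.step⟩

end CubicChains

section Quadrics

/-- Quadrics singular at all coordinate points vanish. -/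
lemma k_quadric (N : ℕ) : K N 2 N 0 := by
  classical
  refine ⟨fun i => Pi.single i 1, fun b => b.elim0, fun f hf hP _ => ?_⟩
  ext μ
  rw [coeff_zero]
  by_contra hμ
  have hd : μ.degree = 2 := mem_restrictSupport_iff.mp hf μ hμ
  obtain ⟨i, hi⟩ : ∃ i, 1 ≤ μ i := by
    by_contra! h
    have : μ = 0 := by ext i; simpa using h i
    simp [this] at hd
  exact hμ (Sing.coeff_eq_zero hf (hP i) hi)

end Quadrics

section Induction

/-- The parameters excluded from the induction. -/
def Exceptional (n d k s : ℕ) : Prop :=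
  (n = 2 ∧ d = 4 ∧ k = 5 ∧ s = 0) ∨ (n = 3 ∧ d = 4 ∧ k = 9) ∨ (n = 4 ∧ d = 4 ∧ k = 14) ∨
    (n = 4 ∧ d = 3 ∧ k = 7)

/-- Outside the exceptional parameters, general double and simple points impose the expected
number of conditions as soon as they are numerous enough to kill everything. -/
def Expected (n d : ℕ) : Prop :=
  ∀ k s, (n + d).choose d ≤ (n + 1) * k + s → ¬ Exceptional n d k s → K (n + 1) d k s

lemma Expected.of_floor_ceil {n d q r : ℕ} (hd : d ≠ 0) (hC : (n + 1) * q + r = (n + d).choose d)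
    (h1 : K (n + 1) d q r) (h2 : K (n + 1) d (q + 1) 0) : Expected n d := by
  intro k s hks _
  rcases le_or_gt k q with h | h
  · exact h1.trade hd h (by omega)
  · exact h2.mono h (Nat.zero_le _)

lemma Expected.of_exact {n d q : ℕ} (hd : d ≠ 0) (hC : (n + 1) * q = (n + d).choose d)
    (h1 : K (n + 1) d q 0) : Expected n d :=
  Expected.of_floor_ceil (r := 0) hd (by simpa using hC) h1 (h1.mono (Nat.le_succ q) le_rfl)

lemma choose_three (n : ℕ) : 6 * (n + 3).choose 3 = (n + 3) * (n + 2) * (n + 1) := by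
  have := Nat.add_one_mul_choose_eq (n + 2) 2
  have h2 := Nat.add_one_mul_choose_eq (n + 1) 1
  simp only [Nat.choose_one_right] at h2
  nlinarith

lemma choose_four (n : ℕ) : 24 * (n + 4).choose 4 = (n + 4) * (n + 3) * (n + 2) * (n + 1) := by
  have := Nat.add_one_mul_choose_eq (n + 3) 3
  have h2 := choose_three n
  have : 6 * ((n + 3 + 1) * (n + 3).choose 3) = 6 * ((n + 3 + 1).choose 4 * 4) := by rw [this]
  nlinarith

lemma expected_zero {d : ℕ} (hd : d ≠ 0) : Expected 0 d := by
  refine Expected.of_exact (q := 1) hd (by simp) ?_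
  obtain ⟨d, rfl⟩ := Nat.exists_eq_succ_of_ne_zero hd
  refine ⟨fun _ => Pi.single 0 1, fun b => b.elim0, fun f hf hP _ => ?_⟩
  ext μ
  rw [coeff_zero]
  by_contra hμ
  have hd : μ.degree = d + 1 := mem_restrictSupport_iff.mp hf μ hμ
  refine hμ (Sing.coeff_eq_zero hf (hP 0) (i := 0) ?_)
  rw [Finsupp.degree_eq_sum] at hd
  simp at hd
  omega

lemma expected_cubic (n : ℕ) : Expected n 3 := by
  have h3 := choose_three n
  obtain ⟨m, h | h | h⟩ : ∃ m, n = 3 * m ∨ n = 3 * m + 1 ∨ n = 3 * m + 2 := ⟨n / 3, by omega⟩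
  · obtain ⟨k, hk, hK, -⟩ := cubic_one m
    subst h
    exact Expected.of_exact three_ne_zero (by nlinarith) hK
  · obtain rfl | rfl | ⟨m, rfl⟩ : m = 0 ∨ m = 1 ∨ ∃ l, m = l + 2 := by
      rcases m with _ | _ | m <;> simp
    · subst h
      exact Expected.of_exact three_ne_zero (by decide) k_2_3_2_0
    · subst h
      intro k s hks hE
      have hc : Nat.choose (3 * 1 + 1 + 3) 3 = 35 := by decide
      rw [hc] at hks
      rcases le_or_gt k 6 with h | h
      · exact k_5_3_6_5.trade three_ne_zero h (by omega)
      · refine k_5_3_8_0.mono ?_ (Nat.zero_le _)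
        simp [Exceptional] at hE
        omega
    · obtain ⟨k, hk, hK, -⟩ := cubic_two m
      subst h
      exact Expected.of_exact three_ne_zero (by nlinarith) hK
  · obtain ⟨k, hk, hK, -⟩ := cubic_three_floor m
    obtain ⟨k', hk', hK', -⟩ := cubic_three_ceil m
    subst h
    obtain rfl : k' = k + 1 := by omega
    exact Expected.of_floor_ceil three_ne_zero (by nlinarith) hK hK'

/-- The numerical conditions of the degeneration argument, when a general bound suffices. -/
lemma numeric_bound {n d u ε A : ℕ} (hε : ε < n) (hu : d * (n * u + ε) = (n + d - 1) * A)
    (hn : n ≠ 0) (hd : d ≠ 0) (hA : d * (n * n) ≤ (d - 1) * A + d) : u + n * ε ≤ A := by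
  obtain ⟨d, rfl⟩ := Nat.exists_eq_succ_of_ne_zero hd
  obtain ⟨m, rfl⟩ := Nat.exists_eq_succ_of_ne_zero hn
  simp only [Nat.succ_eq_add_one, Nat.add_sub_cancel] at *
  have h1 : (m + 1 + (d + 1) - 1) = m + d + 1 := by omega
  rw [h1] at hu
  have h2 : ε ≤ m := by omega
  by_contra! hcon
  zify at *
  have h3 : (d + 1) * (m + 1) * (A + 1 : ℤ) ≤ (d + 1) * (m + 1) * (u + (m + 1) * ε) :=
    mul_le_mul_of_nonneg_left (by linarith) (by positivity)
  have h4 : (d + 1) * (m * (m + 2)) * (ε : ℤ) ≤ (d + 1) * (m * (m + 2)) * m :=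
    mul_le_mul_of_nonneg_left h2 (by positivity)
  have h5 := mul_le_mul_of_nonneg_left hA (Int.natCast_nonneg m)
  nlinarith

lemma choose_le_of_four {n d : ℕ} (hd : 4 ≤ d) : (n + 4).choose 4 ≤ (n + d).choose d := by
  rw [← Nat.choose_symm_add, ← Nat.choose_symm_add]
  exact Nat.choose_le_choose n (by omega)

/-- The degeneration step, once the numerical conditions are known. -/
lemma K.of_expected {n d u ε k s : ℕ} (hT : Expected n (d + 2)) (hC : Expected (n + 1) (d + 1))
    (hu : (n + 1) * u + ε = (n + (d + 2)).choose (d + 2)) (hε : ε ≤ n) (hεu : ε ≤ u)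
    (hks : (n + 1 + (d + 2)).choose (d + 2) ≤ (n + 2) * k + s) (hk : u + ε ≤ k)
    (hL : K (n + 2) d (k - (u + ε)) s) (hE : ¬ Exceptional n (d + 2) u ε)
    (hE' : ¬ Exceptional (n + 1) (d + 1) (k - u) (u + s - ε)) : K (n + 2) (d + 2) k s := by
  obtain ⟨k, rfl⟩ := Nat.exists_eq_add_of_le hk
  have e1 : u + ε + k - (u + ε) = k := by omega
  have e2 : u + ε + k - u = k + ε := by omega
  rw [e1] at hL
  rw [e2] at hE'
  have hP : (n + 1 + (d + 2)).choose (d + 2) =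
      (n + 1 + (d + 1)).choose (d + 1) + (n + (d + 2)).choose (d + 2) := by
    rw [show n + 1 + (d + 2) = n + d + 2 + 1 by ring, show n + 1 + (d + 1) = n + d + 2 by ring,
      show n + (d + 2) = n + d + 2 by ring]
    exact Nat.choose_succ_succ (n + d + 2) (d + 1)
  have h := horace (N := n + 1) (s' := u + s - ε) (hT u ε hu.ge hE) (hC (k + ε) (u + s - ε) ?_ hE')
    hL (by omega) (by omega) (by omega)
  · convert h using 1
    ring
  · zify [show ε ≤ u + s by omega] at *
    linarith

lemma pascal_two (n d : ℕ) : (n + 1 + (d + 2)).choose (d + 2) =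
    (n + (d + 2)).choose (d + 2) + (n + (d + 1)).choose (d + 1) + (n + 1 + d).choose d := by
  have h1 : (n + d + 2 + 1).choose (d + 2) =
    (n + d + 2).choose (d + 1) + (n + d + 2).choose (d + 2) := Nat.choose_succ_succ _ _
  have h2 : (n + d + 2).choose (d + 1) =
    (n + d + 1).choose d + (n + d + 1).choose (d + 1) := Nat.choose_succ_succ _ _
  have e1 : n + 1 + (d + 2) = n + d + 2 + 1 := by ring
  have e2 : n + (d + 2) = n + d + 2 := by ring
  have e3 : n + 1 + d = n + d + 1 := by ring
  have e4 : n + (d + 1) = n + d + 1 := by ring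
  rw [e1, e2, e3, e4]
  omega

lemma numeric_residual {n d u ε k s : ℕ} (hu : (n + 1) * u + ε = (n + (d + 2)).choose (d + 2))
    (hks : (n + 1 + (d + 2)).choose (d + 2) ≤ (n + 2) * k + s) (hs : s ≤ n + 1) (hd : d ≠ 0)
    (hA : u + (n + 1) * ε ≤ (n + (d + 1)).choose (d + 1)) :
    u + ε ≤ k ∧ (n + 1 + d).choose d ≤ (n + 2) * (k - (u + ε)) + s := by
  have hp := pascal_two n d
  have h1 : n + 2 ≤ (n + 1 + d).choose d := by
    rw [← Nat.choose_symm_add]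
    calc n + 2 = (n + 1 + 1).choose (n + 1) := by simp
      _ ≤ _ := Nat.choose_le_choose _ (by omega)
  have hk : u + ε ≤ k := by
    by_contra! hcon
    have : (n + 2) * (k + 1) ≤ (n + 2) * (u + ε) := Nat.mul_le_mul_left _ hcon
    nlinarith
  refine ⟨hk, ?_⟩
  zify [hk] at *
  nlinarith

lemma numeric_of_five {n d u ε : ℕ} (hd : 3 ≤ d)
    (hu : (n + 1) * u + ε = (n + (d + 2)).choose (d + 2)) (hε : ε ≤ n) :
    ε ≤ u ∧ u + (n + 1) * ε ≤ (n + (d + 1)).choose (d + 1) := by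
  have h4 := choose_four n
  have h5 := choose_le_of_four (n := n) (d := d + 1) (by omega)
  have h6 := choose_le_of_four (n := n) (d := d + 2) (by omega)
  have hn : n = 0 ∨ n = 1 ∨ n = 2 ∨ 3 ≤ n := by omega
  have hq : n * (n + 1) ≤ (n + 4).choose 4 := by
    rcases hn with rfl | rfl | rfl | hn
    · decide
    · decide
    · decide
    · nlinarith [mul_le_mul hn hn (by omega) (by omega)]
  have hr : 5 * ((n + 1) * (n + 1)) ≤ 4 * (n + 4).choose 4 + 5 := by
    rcases hn with rfl | rfl | rfl | hn
    · decide
    · decide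
    · decide
    · nlinarith [mul_le_mul hn hn (by omega) (by omega)]
  constructor
  · by_contra! hcon
    have : (n + 1) * (u + 1) ≤ (n + 1) * n := Nat.mul_le_mul_left _ (by omega)
    nlinarith
  · refine numeric_bound (n := n + 1) (d := d + 2) (by omega) ?_ (by omega) (by omega) ?_
    · rw [hu]
      have := Nat.add_one_mul_choose_eq (n + (d + 1)) (d + 1)
      have e : n + 1 + (d + 2) - 1 = n + (d + 1) + 1 := by omega
      rw [e, this, mul_comm]
      rfl
    · rw [show d + 2 - 1 = d + 1 by omega]
      have h7 := Nat.mul_le_mul_left (4 * (d + 1)) h5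
      have h8 : (d + 2) * (5 * ((n + 1) * (n + 1))) ≤ (d + 2) * (4 * (n + 4).choose 4 + 5) :=
        Nat.mul_le_mul_left _ hr
      have h9 : 4 * (d + 2) * (n + 4).choose 4 ≤ 5 * (d + 1) * (n + 4).choose 4 :=
        Nat.mul_le_mul_right _ (by omega)
      have h10 := Nat.mul_le_mul_left (5 * (d + 1)) h5
      nlinarith

lemma Expected.of_step {n d : ℕ} (hd : d ≠ 0) (h : ∀ k s, s ≤ n →
    (n + d).choose d ≤ (n + 1) * k + s → (n + 1) * k + s ≤ (n + d).choose d + n →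
    K (n + 1) d k s) : Expected n d := by
  have h1 := Nat.div_add_mod ((n + d).choose d) (n + 1)
  have h2 := Nat.mod_lt ((n + d).choose d) (Nat.succ_pos n)
  set q := (n + d).choose d / (n + 1)
  set r := (n + d).choose d % (n + 1)
  rcases Nat.eq_zero_or_pos r with h0 | h0
  · exact Expected.of_exact hd (by omega) (h q 0 (by omega) (by omega) (by omega))
  · exact Expected.of_floor_ceil hd h1 (h q r (by omega) (by omega) (by omega))
      (h (q + 1) 0 (by omega) (by rw [mul_add]; omega) (by rw [mul_add]; omega))

lemma expected_of_five {n d : ℕ} (hd : 3 ≤ d) (hT : Expected n (d + 2))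
    (hC : Expected (n + 1) (d + 1)) (hL : Expected (n + 1) d) : Expected (n + 1) (d + 2) := by
  refine Expected.of_step (by omega) fun k s hs hks hks' => ?_
  have hu := Nat.div_add_mod ((n + (d + 2)).choose (d + 2)) (n + 1)
  have hε := Nat.mod_lt ((n + (d + 2)).choose (d + 2)) (Nat.succ_pos n)
  generalize (n + (d + 2)).choose (d + 2) / (n + 1) = u at hu
  generalize (n + (d + 2)).choose (d + 2) % (n + 1) = ε at hu hε
  obtain ⟨h1, h2⟩ := numeric_of_five hd hu (by omega)
  obtain ⟨h3, h4⟩ := numeric_residual hu hks (by omega) (by omega) h2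
  refine K.of_expected hT hC hu (by omega) h1 hks h3 (hL _ _ h4 ?_) ?_ ?_
  · rintro (⟨hn, rfl, hk, hs⟩ | ⟨hn, rfl, hk⟩ | ⟨hn, rfl, hk⟩ | ⟨hn, rfl, hk⟩)
    all_goals
      obtain rfl := Nat.succ_injective hn
      simp only [Nat.choose, Nat.reduceAdd] at hu hks hks'
      omega
  · rintro (⟨-, hd', -⟩ | ⟨-, hd', -⟩ | ⟨-, hd', -⟩ | ⟨-, hd', -⟩) <;> omega
  · rintro (⟨hn, hd', hk, hs⟩ | ⟨hn, hd', hk⟩ | ⟨hn, hd', hk⟩ | ⟨hn, hd', hk⟩)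
    · obtain rfl := Nat.succ_injective hn
      obtain rfl : d = 3 := by omega
      simp only [Nat.choose, Nat.reduceAdd] at hu hks hks'
      omega
    · obtain rfl := Nat.succ_injective hn
      obtain rfl : d = 3 := by omega
      simp only [Nat.choose, Nat.reduceAdd] at hu hks hks'
      omega
    · obtain rfl := Nat.succ_injective hn
      obtain rfl : d = 3 := by omega
      simp only [Nat.choose, Nat.reduceAdd] at hu hks hks'
      omega
    · omega

lemma expected_quartic_step {n : ℕ} (hn : 5 ≤ n) (hT : Expected n 4) : Expected (n + 1) 4 := by
  refine Expected.of_step (by omega) fun k s hs hks hks' => ?_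
  have hu := Nat.div_add_mod ((n + 4).choose 4) (n + 1)
  have hε := Nat.mod_lt ((n + 4).choose 4) (Nat.succ_pos n)
  generalize (n + 4).choose 4 / (n + 1) = u at hu
  generalize (n + 4).choose 4 % (n + 1) = ε at hu hε
  have h4 := choose_four n
  have h3 := choose_three n
  have hp := pascal_two n 2
  have h2 := Nat.triangle_succ (n + 2)
  have hc2 : (n + 1 + 2).choose 2 * 2 = (n + 3) * (n + 2) := by
    have := Nat.add_one_mul_choose_eq (n + 2) 1
    simp only [Nat.choose_one_right] at this
    exact this.symm
  simp only [Nat.reduceAdd] at hp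
  have key : ε ≤ u ∧ u + ε + (n + 2) ≤ k := by
    rcases le_or_gt n 8 with h | h
    · have : n = 5 ∨ n = 6 ∨ n = 7 ∨ n = 8 := by omega
      rcases this with rfl | rfl | rfl | rfl
      all_goals
        simp only [Nat.choose, Nat.reduceAdd] at hu hks
        omega
    · have hn2 : 9 * 9 ≤ n * n := Nat.mul_le_mul h h
      have hu' : 24 * ((n + 1) * u) + 24 * ε = (n + 4) * (n + 3) * (n + 2) * (n + 1) := by
        rw [← h4, ← hu]; ring
      have hub : 24 * u ≤ (n + 4) * (n + 3) * (n + 2) := by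
        by_contra! hcon
        have := Nat.mul_le_mul_right (n + 1) hcon
        nlinarith
      constructor
      · by_contra! hcon
        have : (n + 1) * (u + 1) ≤ (n + 1) * n := Nat.mul_le_mul_left _ (by omega)
        nlinarith
      · by_contra! hcon
        have h5 : (n + 2) * (k + 1) ≤ (n + 2) * (u + ε + (n + 2)) := Nat.mul_le_mul_left _ hcon
        have h6 : (n + 1) * ε ≤ (n + 1) * n := Nat.mul_le_mul_left _ (by omega)
        nlinarith
  refine K.of_expected (d := 2) hT (expected_cubic _) hu (by omega) key.1 hks (by omega)
    ((k_quadric _).mono (by omega) (Nat.zero_le _)) ?_ ?_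
  · rintro (⟨hn', -⟩ | ⟨hn', -⟩ | ⟨hn', -⟩ | ⟨hn', -⟩) <;> omega
  · rintro (⟨hn', -⟩ | ⟨hn', -⟩ | ⟨hn', -⟩ | ⟨hn', -⟩) <;> omega

lemma expected_quartic (n : ℕ) : Expected n 4 := by
  rcases le_or_gt 5 n with h | h
  · induction n, h using Nat.le_induction with
    | base => exact Expected.of_exact four_ne_zero (by decide) k_6_4_21_0
    | succ n hn ih => exact expected_quartic_step hn ih
  · have : n = 0 ∨ n = 1 ∨ n = 2 ∨ n = 3 ∨ n = 4 := by omega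
    rcases this with rfl | rfl | rfl | rfl | rfl
    · exact expected_zero four_ne_zero
    · exact Expected.of_floor_ceil (q := 2) (r := 1) four_ne_zero (by decide) k_2_4_2_1 k_2_4_3_0
    · intro k s hks hE
      unfold Exceptional at hE
      simp only [Nat.choose, Nat.reduceAdd] at hks
      rcases le_or_gt k 4 with h | h
      · exact k_3_4_4_3.trade four_ne_zero h (by omega)
      rcases Nat.eq_or_lt_of_le h with rfl | h
      · exact k_3_4_5_1.mono le_rfl (by omega)
      · exact k_3_4_6_0.mono (by omega) (Nat.zero_le _)
    · intro k s hks hE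
      unfold Exceptional at hE
      simp only [Nat.choose, Nat.reduceAdd] at hks
      rcases le_or_gt k 8 with h | h
      · exact k_4_4_8_3.trade four_ne_zero h (by omega)
      · exact k_4_4_10_0.mono (by omega) (Nat.zero_le _)
    · intro k s hks hE
      unfold Exceptional at hE
      simp only [Nat.choose, Nat.reduceAdd] at hks
      rcases le_or_gt k 13 with h | h
      · exact k_5_4_13_5.trade four_ne_zero h (by omega)
      · exact k_5_4_15_0.mono (by omega) (Nat.zero_le _)

theorem expected (n d : ℕ) (hd : 3 ≤ d) : Expected n d := by
  induction d using Nat.strong_induction_on generalizing n with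
  | _ d ihd =>
    obtain rfl | rfl | hd' : d = 3 ∨ d = 4 ∨ 5 ≤ d := by omega
    · exact expected_cubic n
    · exact expected_quartic n
    · induction n with
      | zero => exact expected_zero (by omega)
      | succ n ihn =>
        obtain ⟨d, rfl⟩ := Nat.exists_eq_add_of_le' (show 2 ≤ d by omega)
        exact expected_of_five (by omega) ihn (ihd (d + 1) (by omega) _ (by omega))
          (ihd d (by omega) _ (by omega))

/-- Double points in number at least the value of Alexander and Hirschowitz kill everything. -/
theorem K.generic {n d R : ℕ} (hd : 2 ≤ d) (h2 : d = 2 → n + 1 ≤ R)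
    (hR : (n + d).choose d ≤ (n + 1) * R) (h4 : d = 4 → 2 ≤ n → n ≤ 4 → (n + 2).choose 2 ≤ R)
    (h3 : n = 4 → d = 3 → 8 ≤ R) : K (n + 1) d R 0 := by
  obtain rfl | hd' := Nat.eq_or_lt_of_le hd
  · exact (k_quadric _).mono (h2 rfl) le_rfl
  · refine expected n d hd' R 0 (by simpa using hR) ?_
    rintro (⟨rfl, rfl, rfl, -⟩ | ⟨rfl, rfl, rfl⟩ | ⟨rfl, rfl, rfl⟩ | ⟨rfl, rfl, rfl⟩)
    · exact absurd (h4 rfl le_rfl (by omega)) (by decide)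
    · exact absurd (h4 rfl (by omega) (by omega)) (by decide)
    · exact absurd (h4 rfl (by omega) (by omega)) (by decide)
    · exact absurd (h3 rfl rfl) (by decide)

end Induction

section Dominance

variable {σ τ : Type*}

/-- A polynomial map with algebraically independent components is generically surjective. -/
lemma exists_generic_preimage [Finite σ] [Finite τ] {Φ : τ → MvPolynomial σ ℂ}
    (h : AlgebraicIndependent ℂ Φ) :
    ∃ D : MvPolynomial τ ℂ, D ≠ 0 ∧ ∀ a : τ → ℂ, eval a D ≠ 0 →
      ∃ x : σ → ℂ, ∀ t, eval x (Φ t) = a t := by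
  let φ : MvPolynomial τ ℂ →ₐ[ℂ] MvPolynomial σ ℂ := aeval Φ
  have hinj : Function.Injective φ := h
  have hfp : φ.toRingHom.FinitePresentation := by
    refine RingHom.FinitePresentation.of_finiteType.mp
      (RingHom.FiniteType.of_comp_finiteType (f := C) ?_)
    rw [show φ.toRingHom.comp C = algebraMap ℂ (MvPolynomial σ ℂ) from RingHom.ext fun c => by
      simp [φ, algebraMap_eq]]
    exact RingHom.finiteType_algebraMap.mpr inferInstance
  obtain ⟨S, hS⟩ := PrimeSpectrum.exists_constructibleSetData_iff.mpr
    (PrimeSpectrum.isConstructible_range_comap hfp)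
  have hbot : (⊥ : PrimeSpectrum (MvPolynomial τ ℂ)) ∈
      Set.range (PrimeSpectrum.comap φ.toRingHom) := by
    refine ⟨⊥, PrimeSpectrum.ext ?_⟩
    change Ideal.comap φ.toRingHom ⊥ = ⊥
    exact (RingHom.injective_iff_ker_eq_bot φ.toRingHom).mp hinj
  rw [← hS] at hbot
  simp only [PrimeSpectrum.ConstructibleSetData.toSet, Set.mem_iUnion] at hbot
  obtain ⟨B, hB, hB'⟩ := hbot
  obtain ⟨hg, hf⟩ := hB'
  have hg0 : ∀ i, B.g i = 0 := fun i => hg (Set.mem_range_self i)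
  refine ⟨B.f, fun h0 => hf (by simp [h0]), fun a ha => ?_⟩
  let p : PrimeSpectrum (MvPolynomial τ ℂ) := ⟨vanishingIdeal ℂ {a}, inferInstance⟩
  have hp : p ∈ Set.range (PrimeSpectrum.comap φ.toRingHom) := by
    rw [← hS]
    simp only [PrimeSpectrum.ConstructibleSetData.toSet, Set.mem_iUnion]
    refine ⟨B, hB, ?_, fun hmem => ha ?_⟩
    · rintro _ ⟨i, rfl⟩
      rw [hg0 i]
      exact p.asIdeal.zero_mem
    · have : B.f ∈ vanishingIdeal ℂ {a} := hmem rfl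
      simpa [mem_vanishingIdeal_singleton_iff, aeval_eq_eval] using this
  obtain ⟨q, hq⟩ := hp
  obtain ⟨m, hm, hqm⟩ := Ideal.exists_le_maximal q.asIdeal q.isPrime.ne_top
  obtain ⟨x, rfl⟩ := eq_vanishingIdeal_singleton_of_isMaximal ℂ hm
  refine ⟨x, fun t => ?_⟩
  have h1 : X t - C (a t) ∈ p.asIdeal := by
    change X t - C (a t) ∈ vanishingIdeal ℂ {a}
    simp [mem_vanishingIdeal_singleton_iff]
  rw [← hq] at h1
  have h2 : φ (X t - C (a t)) ∈ vanishingIdeal ℂ {x} := hqm h1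
  simpa [φ, mem_vanishingIdeal_singleton_iff, aeval_eq_eval, sub_eq_zero] using h2

lemma pderiv_aeval [Fintype τ] (Φ : τ → MvPolynomial σ ℂ) (s : σ) (F : MvPolynomial τ ℂ) :
    pderiv s (aeval Φ F) = ∑ t, aeval Φ (pderiv t F) * pderiv s (Φ t) := by
  classical
  induction F using MvPolynomial.induction_on with
  | C c => simp [algebraMap_eq]
  | add p q hp hq => simp only [map_add, hp, hq, add_mul, Finset.sum_add_distrib]
  | mul_X p i hp =>
    rw [map_mul, pderiv_mul, hp, aeval_X]
    simp only [pderiv_mul, map_add, map_mul, aeval_X, add_mul, Finset.sum_add_distrib, pderiv_X]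
    congr 1
    · rw [Finset.sum_mul]
      exact Finset.sum_congr rfl fun t _ => by ring
    · rw [Finset.sum_eq_single i]
      · simp
      · intro t _ ht
        simp [Pi.single_apply, ht.symm]
      · simp

lemma totalDegree_pderiv_le {t : τ} {F : MvPolynomial τ ℂ} {m : ℕ} (h : F.totalDegree ≤ m + 1) :
    (pderiv t F).totalDegree ≤ m := by
  refine Finset.sup_le fun μ hμ => ?_
  rw [mem_support_iff, coeff_pderiv] at hμ
  have h1 := le_totalDegree (mem_support_iff.mpr (left_ne_zero_of_mul hμ))
  change (μ + Finsupp.single t 1).degree ≤ _ at h1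
  change μ.degree ≤ m
  rw [map_add, Finsupp.degree_single] at h1
  omega

/-- The Jacobian criterion for algebraic independence. -/
lemma algebraicIndependent_of_jacobian [Fintype σ] [Fintype τ] {Φ : τ → MvPolynomial σ ℂ}
    (x : σ → ℂ) (h : ∀ c : τ → ℂ, (∀ s, ∑ t, c t * eval x (pderiv s (Φ t)) = 0) → c = 0) :
    AlgebraicIndependent ℂ Φ := by
  classical
  let J : Matrix σ τ (MvPolynomial σ ℂ) := Matrix.of fun s t => pderiv s (Φ t)
  let M : Matrix σ τ ℂ := J.map (eval x)
  obtain ⟨g, hg⟩ := LinearMap.exists_leftInverse_of_injective (Matrix.toLin' M) (by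
    rw [LinearMap.ker_eq_bot']
    intro c hc
    refine h c fun s => ?_
    have := congrFun hc s
    simpa [M, J, Matrix.mulVec, dotProduct, mul_comm] using this)
  let L : Matrix τ σ ℂ := LinearMap.toMatrix' g
  have hL : L * M = 1 := by
    have := congrArg LinearMap.toMatrix' hg
    rwa [LinearMap.toMatrix'_comp, LinearMap.toMatrix'_toLin', LinearMap.toMatrix'_id] at this
  let L' : Matrix τ σ (MvPolynomial σ ℂ) := L.map C
  let N : Matrix τ τ (MvPolynomial σ ℂ) := L' * J
  have hdet : N.det ≠ 0 := by
    intro h0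
    have h1 := congrArg (eval x) h0
    have h2 : N.map (eval x) = L * M := by
      rw [Matrix.map_mul, Matrix.map_map]
      congr 1
      ext a b
      simp
    rw [RingHom.map_det, RingHom.mapMatrix_apply, h2, hL] at h1
    simp at h1
  have key : ∀ G : τ → MvPolynomial σ ℂ, (∀ s, ∑ t, G t * pderiv s (Φ t) = 0) → G = 0 := by
    intro G hG
    refine Matrix.eq_zero_of_mulVec_eq_zero hdet ?_
    change (L' * J).mulVec G = 0
    rw [← Matrix.mulVec_mulVec]
    have : J.mulVec G = 0 := by
      funext s
      simpa [J, Matrix.mulVec, dotProduct, mul_comm] using hG s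
    rw [this, Matrix.mulVec_zero]
  have main : ∀ (m : ℕ) (F : MvPolynomial τ ℂ), F.totalDegree ≤ m → aeval Φ F = 0 → F = 0 := by
    intro m
    induction m with
    | zero =>
      intro F hF h0
      rw [totalDegree_eq_zero_iff_eq_C.mp (Nat.le_zero.mp hF)] at h0 ⊢
      simpa [algebraMap_eq] using h0
    | succ m ih =>
      intro F hF h0
      have hG := key (fun t => aeval Φ (pderiv t F)) fun s => by
        rw [← pderiv_aeval, h0, map_zero]
      have hd : ∀ t, pderiv t F = 0 := fun t =>
        ih _ (totalDegree_pderiv_le hF) (congrFun hG t)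
      refine ih F ?_ h0
      refine Finset.sup_le fun μ hμ => ?_
      suffices μ = 0 by simp [this]
      by_contra hne
      obtain ⟨t, ht⟩ : ∃ t, μ t ≠ 0 := by
        by_contra! h'
        exact hne (Finsupp.ext h')
      have h1 := congrArg (coeff (μ - Finsupp.single t 1)) (hd t)
      rw [coeff_pderiv, tsub_add_cancel_of_le (by simpa using Nat.one_le_iff_ne_zero.mpr ht),
        coeff_zero, mul_eq_zero] at h1
      rcases h1 with h1 | h1
      · exact mem_support_iff.mp hμ h1
      · exact Nat.cast_add_one_ne_zero _ h1
  exact (injective_iff_map_eq_zero (aeval (R := ℂ) Φ)).mpr fun F hF => main _ F le_rfl hF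

end Dominance

section PowerSums

/-- The exponents of the monomials of degree `d` in `x_0, …, x_n`. -/
abbrev Expo (n d : ℕ) : Type := {μ : Fin (n+1) →₀ ℕ // (μ.sum fun _ e => e) = d}

lemma Expo.degree_eq {n d : ℕ} (μ : Expo n d) : μ.1.degree = d := μ.2

noncomputable instance (n d : ℕ) : Fintype (Expo n d) :=
  (degSet_finite (σ := Fin (n+1)) d).fintype

lemma card_expo (n d : ℕ) : Fintype.card (Expo n d) = (n + d).choose d := by
  have h := Nat.card_congr (Sym.equivNatSum (Fin (n+1)) d)
  rw [Nat.card_eq_fintype_card, Sym.card_sym_eq_choose, Fintype.card_fin] at h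
  rw [show n + d = n + 1 + d - 1 by omega, h, ← Nat.card_eq_fintype_card]
  rfl

lemma coeff_linForm_pow {N : ℕ} (v : Fin N → ℂ) {d : ℕ} {μ : Fin N →₀ ℕ} (hμ : μ.degree = d) :
    coeff μ (linForm N v ^ d) =
      (Nat.multinomial Finset.univ μ : ℂ) * eval v (monomial μ 1) := by
  classical
  have hmon : ∀ k : Fin N → ℕ, (∏ j, (C (v j) * X j) ^ k j : MvPolynomial (Fin N) ℂ) =
      monomial (Finsupp.equivFunOnFinite.symm k) (∏ j, v j ^ k j) := by
    intro k
    rw [monomial_eq, Finsupp.prod_fintype _ _ (by simp), map_prod, ← Finset.prod_mul_distrib]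
    exact Finset.prod_congr rfl fun j _ => by simp [mul_pow]
  rw [linForm, Finset.sum_pow_eq_sum_piAntidiag, coeff_sum]
  simp_rw [hmon, ← map_natCast (C (σ := Fin N) (R := ℂ)), coeff_C_mul, coeff_monomial]
  rw [Finset.sum_eq_single (⇑μ)]
  · rw [if_pos (by ext; simp), eval_monomial, Finsupp.prod_fintype _ _ (by simp), one_mul]
  · intro k _ hk
    rw [if_neg, mul_zero]
    rintro rfl
    exact hk (by ext; simp)
  · intro h
    refine absurd ?_ h
    rw [Finset.mem_piAntidiag]
    exact ⟨by rw [← hμ, Finsupp.degree_eq_sum], by simp⟩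

lemma multinomial_cast_ne_zero {N : ℕ} (μ : Fin N →₀ ℕ) :
    (Nat.multinomial Finset.univ μ : ℂ) ≠ 0 :=
  Nat.cast_ne_zero.mpr (Nat.multinomial_pos _ _).ne'

lemma isHomogeneous_linForm_pow {N : ℕ} (v : Fin N → ℂ) (d : ℕ) :
    (linForm N v ^ d).IsHomogeneous d := by
  have h : (linForm N v).IsHomogeneous 1 :=
    IsHomogeneous.sum _ _ _ fun j _ => by
      simpa using (isHomogeneous_C (Fin N) (v j)).mul (isHomogeneous_X ℂ j)
  simpa using h.pow d

/-- The coefficient at `μ` of `∑ i, ℓ_{v_i}^d`, as a polynomial in the coordinates of the `v_i`. -/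
noncomputable def powerSumCoeff (n d r : ℕ) (μ : Expo n d) :
    MvPolynomial (Fin r × Fin (n+1)) ℂ :=
  ∑ i, rename (Prod.mk i) (monomial μ.1 (Nat.multinomial Finset.univ μ.1 : ℂ))

lemma eval_powerSumCoeff {n d r : ℕ} (μ : Expo n d) (x : Fin r × Fin (n+1) → ℂ) :
    eval x (powerSumCoeff n d r μ) =
      coeff μ.1 (∑ i, linForm (n+1) (fun j => x (i, j)) ^ d) := by
  rw [powerSumCoeff, map_sum, coeff_sum]
  refine Finset.sum_congr rfl fun i _ => ?_
  rw [coeff_linForm_pow _ μ.degree_eq, eval_rename, eval_monomial, eval_monomial, one_mul]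
  rfl

lemma eval_pderiv_powerSumCoeff {n d r : ℕ} (μ : Expo n d) (x : Fin r × Fin (n+1) → ℂ)
    (i : Fin r) (j : Fin (n+1)) :
    eval x (pderiv (i, j) (powerSumCoeff n d r μ)) = eval (fun j => x (i, j))
      (pderiv j (monomial μ.1 (Nat.multinomial Finset.univ μ.1 : ℂ))) := by
  classical
  rw [powerSumCoeff, map_sum, map_sum, Finset.sum_eq_single i]
  · rw [pderiv_rename (Prod.mk_right_injective i), eval_rename]
    rfl
  · intro k _ hk
    rw [pderiv_eq_zero_of_notMem_vars, map_zero]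
    intro h
    have := vars_rename _ _ h
    simp only [Finset.mem_image, Prod.mk.injEq] at this
    obtain ⟨_, _, h, _⟩ := this
    exact hk h
  · simp

lemma eq_of_coeff_expo {n d : ℕ} {f g : MvPolynomial (Fin (n+1)) ℂ} (hf : f.IsHomogeneous d)
    (hg : g.IsHomogeneous d) (h : ∀ μ : Expo n d, coeff μ.1 f = coeff μ.1 g) : f = g := by
  ext μ
  by_cases hμ : μ.degree = d
  · exact h ⟨μ, hμ⟩
  · rw [hf.coeff_eq_zero hμ, hg.coeff_eq_zero hμ]

lemma isHomogeneous_sum_linForm_pow {N r : ℕ} (v : Fin r → Fin N → ℂ) (d : ℕ) :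
    (∑ i, linForm N (v i) ^ d).IsHomogeneous d :=
  IsHomogeneous.sum _ _ _ fun i _ => isHomogeneous_linForm_pow (v i) d

/-- If double points at `R` suitable points impose enough conditions on forms of degree `d`, a
general form is a sum of `R` powers of linear forms. -/
lemma K.exists_general_sum_pow {n d R : ℕ} (h : K (n+1) d R 0) :
    ∃ D : MvPolynomial (Expo n d) ℂ, D ≠ 0 ∧ ∀ f : MvPolynomial (Fin (n+1)) ℂ,
      f.IsHomogeneous d → eval (fun μ => coeff μ.1 f) D ≠ 0 →
        ∃ v : Fin R → Fin (n+1) → ℂ, f = ∑ i, linForm (n+1) (v i) ^ d := by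
  classical
  obtain ⟨P, Q, hK⟩ := h
  have hind : AlgebraicIndependent ℂ (powerSumCoeff n d R) := by
    refine algebraicIndependent_of_jacobian (fun q => P q.1 q.2) fun c hc => ?_
    let g : MvPolynomial (Fin (n+1)) ℂ :=
      ∑ μ : Expo n d, c μ • monomial μ.1 (Nat.multinomial Finset.univ μ.1 : ℂ)
    have hcoeff : ∀ μ : Expo n d, coeff μ.1 g = c μ * Nat.multinomial Finset.univ μ.1 := by
      intro μ
      simp only [g, coeff_sum, coeff_smul, coeff_monomial, smul_eq_mul]
      rw [Finset.sum_eq_single μ (fun ν _ hν => by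
        rw [if_neg (fun h => hν (Subtype.ext h)), mul_zero]) (by simp)]
      simp
    have hg : g = 0 := by
      refine hK g (mem_of_isHomogeneous ?_) (fun i j => ?_) (fun b => b.elim0)
      · refine IsHomogeneous.sum _ _ _ fun μ _ => ?_
        rw [smul_monomial]
        exact isHomogeneous_monomial _ μ.2
      · rw [← hc (i, j)]
        simp [g, eval_pderiv_powerSumCoeff]
    funext μ
    have := hcoeff μ
    rw [hg, coeff_zero] at this
    exact (mul_eq_zero.mp this.symm).resolve_right (multinomial_cast_ne_zero _)
  obtain ⟨D, hD, h⟩ := exists_generic_preimage hind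
  refine ⟨D, hD, fun f hf hne => ?_⟩
  obtain ⟨x, hx⟩ := h _ hne
  refine ⟨fun i j => x (i, j), eq_of_coeff_expo hf (isHomogeneous_sum_linForm_pow _ d) fun μ => ?_⟩
  rw [← eval_powerSumCoeff, hx]

/-- Sums of `r` powers of linear forms satisfy a nontrivial polynomial equation. -/
def Deficient (n d r : ℕ) : Prop :=
  ∃ D : MvPolynomial (Expo n d) ℂ, D ≠ 0 ∧ ∀ v : Fin r → Fin (n+1) → ℂ,
    eval (fun μ => coeff μ.1 (∑ i, linForm (n+1) (v i) ^ d)) D = 0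

lemma deficient_of_lt_choose {n d r : ℕ} (h : r * (n + 1) < (n + d).choose d) :
    Deficient n d r := by
  have hdep : ¬ AlgebraicIndependent ℂ (powerSumCoeff n d r) := by
    intro hind
    have h1 := hind.lift_cardinalMk_le_trdeg
    rw [MvPolynomial.trdeg_of_isDomain] at h1
    simp only [Cardinal.mk_fintype, Cardinal.lift_natCast, Nat.cast_le, Fintype.card_prod,
      Fintype.card_fin, card_expo] at h1
    omega
  rw [algebraicIndependent_iff] at hdep
  push Not at hdep
  obtain ⟨D, h0, hD⟩ := hdep
  refine ⟨D, hD, fun v => ?_⟩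
  have h1 := congrArg (eval fun q : Fin r × Fin (n+1) => v q.1 q.2) h0
  rw [map_zero, aeval_def, eval₂_eq', map_sum] at h1
  rw [eval_eq', ← h1]
  refine Finset.sum_congr rfl fun m _ => ?_
  simp [eval_powerSumCoeff, algebraMap_eq]

lemma exists_linForm_pow_eq {N d : ℕ} (hd : d ≠ 0) (c : ℂ) (v : Fin N → ℂ) :
    ∃ w : Fin N → ℂ, c • linForm N v ^ d = linForm N w ^ d := by
  obtain ⟨z, hz⟩ := IsAlgClosed.exists_pow_nat_eq c (Nat.pos_of_ne_zero hd)
  refine ⟨z • v, ?_⟩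
  have : linForm N (z • v) = C z * linForm N v := by
    simp [linForm, Finset.mul_sum, mul_assoc]
  rw [this, mul_pow, ← C_pow, hz, smul_eq_C_mul]

lemma exists_pad {N d r s : ℕ} (hd : d ≠ 0) (hrs : r ≤ s) (c : Fin r → ℂ)
    (v : Fin r → Fin N → ℂ) : ∃ w : Fin s → Fin N → ℂ,
      ∑ i, c i • linForm N (v i) ^ d = ∑ i, linForm N (w i) ^ d := by
  obtain ⟨k, rfl⟩ := Nat.exists_eq_add_of_le hrs
  choose w hw using fun i => exists_linForm_pow_eq hd (c i) (v i)
  refine ⟨Fin.append w 0, ?_⟩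
  rw [Fin.sum_univ_add, Finset.sum_congr rfl fun i _ => hw i]
  simp [linForm, hd]

lemma waringRank_eq_of_general {n d R : ℕ} (hd : d ≠ 0) (hK : K (n+1) d R 0)
    (hdef : ∀ r < R, Deficient n d r) :
    ∃ D : MvPolynomial (Expo n d) ℂ, D ≠ 0 ∧ ∀ f : MvPolynomial (Fin (n+1)) ℂ,
      f.IsHomogeneous d → eval (fun μ => coeff μ.1 f) D ≠ 0 → waringRank n d f = R := by
  obtain ⟨D₁, hD₁, h₁⟩ := hK.exists_general_sum_pow
  obtain ⟨D₂, hD₂, h₂⟩ : ∃ D : MvPolynomial (Expo n d) ℂ, D ≠ 0 ∧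
      ∀ r < R, ∀ (c : Fin r → ℂ) (v : Fin r → Fin (n+1) → ℂ),
        eval (fun μ => coeff μ.1 (∑ i, c i • linForm (n+1) (v i) ^ d)) D = 0 := by
    rcases R with _ | R
    · exact ⟨1, one_ne_zero, by simp⟩
    · obtain ⟨D, hD, h⟩ := hdef R (Nat.lt_succ_self R)
      refine ⟨D, hD, fun r hr c v => ?_⟩
      obtain ⟨w, hw⟩ := exists_pad hd (Nat.le_of_lt_succ hr) c v
      rw [hw]
      exact h w
  refine ⟨D₁ * D₂, mul_ne_zero hD₁ hD₂, fun f hf hne => ?_⟩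
  rw [map_mul] at hne
  obtain ⟨v, hv⟩ := h₁ f hf (left_ne_zero_of_mul hne)
  have hmem : R ∈ {r : ℕ | ∃ (c : Fin r → ℂ) (v : Fin r → (Fin (n+1) → ℂ)),
      (∀ i, v i ≠ 0) ∧ f = ∑ i, c i • (linForm (n+1) (v i)) ^ d} := by
    classical
    refine ⟨fun i => if v i = 0 then 0 else 1, fun i => if v i = 0 then 1 else v i,
      fun i => ?_, ?_⟩
    · dsimp only
      split_ifs with h
      · exact one_ne_zero
      · exact h
    · rw [hv]
      refine Finset.sum_congr rfl fun i _ => ?_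
      dsimp only
      split_ifs with h
      · simp [h, linForm, hd]
      · simp
  refine le_antisymm (Nat.sInf_le hmem) (le_csInf ⟨R, hmem⟩ ?_)
  rintro r ⟨c, w, -, hw⟩
  by_contra! hr
  exact right_ne_zero_of_mul hne (by rw [hw]; exact h₂ r hr c w)

end PowerSums

section Flattening

lemma eval_eq_sum_expo {n d : ℕ} {g : MvPolynomial (Fin (n+1)) ℂ} (hg : g.IsHomogeneous d)
    (v : Fin (n+1) → ℂ) :
    eval v g = ∑ μ : Expo n d, coeff μ.1 g * eval v (monomial μ.1 1) := by
  classical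
  have h : g = ∑ μ : Expo n d, C (coeff μ.1 g) * monomial μ.1 1 := by
    refine eq_of_coeff_expo hg (IsHomogeneous.sum _ _ _ fun μ _ => ?_) fun μ => ?_
    · rw [C_mul_monomial, mul_one]
      exact isHomogeneous_monomial _ μ.2
    · simp only [coeff_sum, coeff_C_mul, coeff_monomial]
      rw [Finset.sum_eq_single μ (fun ν _ hν => by
        rw [if_neg (fun h => hν (Subtype.ext h)), mul_zero]) (by simp)]
      simp
  conv_lhs => rw [h]
  simp

/-- A square matrix of forms of degree `d` gives an equation for sums of `r` powers as soon as
its rank at every point is at most `s`, with `r * s` smaller than its size. -/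
lemma deficient_of_flattening {n d r s : ℕ} {ι κ : Type} [Fintype ι] [DecidableEq ι] [Fintype κ]
    (G : Matrix ι ι (MvPolynomial (Fin (n+1)) ℂ)) (hG : ∀ a b, (G a b).IsHomogeneous d)
    (p : κ → Fin (n+1) → ℂ) (hp : (∑ k, G.map (eval (p k))).det ≠ 0)
    (hs : ∀ v, ∃ φ : Fin s → (ι → ℂ) →ₗ[ℂ] ℂ,
      ∀ y, (∀ t, φ t y = 0) → (G.map (eval v)).mulVec y = 0)
    (hr : r * s < Fintype.card ι) : Deficient n d r := by
  let A : Matrix ι ι (MvPolynomial (Expo n d) ℂ) := Matrix.of fun a b =>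
    ∑ μ, C (coeff μ.1 (G a b) / (Nat.multinomial Finset.univ μ.1 : ℂ)) * X μ
  have key : ∀ {κ' : Type} [Fintype κ'] (v : κ' → Fin (n+1) → ℂ),
      eval (fun μ : Expo n d => coeff μ.1 (∑ k, linForm (n+1) (v k) ^ d)) A.det =
        (∑ k, G.map (eval (v k))).det := by
    intro κ' _ v
    rw [RingHom.map_det]
    congr 1
    ext a b
    simp only [A, RingHom.mapMatrix_apply, Matrix.map_apply, Matrix.of_apply, map_sum, map_mul,
      eval_C, eval_X, Matrix.sum_apply, coeff_sum, eval_eq_sum_expo (hG a b)]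
    rw [Finset.sum_comm]
    refine Finset.sum_congr rfl fun μ _ => ?_
    rw [Finset.mul_sum]
    refine Finset.sum_congr rfl fun k _ => ?_
    rw [coeff_linForm_pow _ μ.degree_eq, ← mul_assoc,
      div_mul_cancel₀ _ (multinomial_cast_ne_zero _)]
  refine ⟨A.det, fun h0 => hp ?_, fun v => ?_⟩
  · rw [← key p, h0, map_zero]
  · rw [key v]
    choose φ hφ using hs
    let L : (ι → ℂ) →ₗ[ℂ] (Fin r × Fin s → ℂ) := LinearMap.pi fun q => φ (v q.1) q.2
    have hker : LinearMap.ker L ≠ ⊥ := LinearMap.ker_ne_bot_of_finrank_lt (by simpa using hr)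
    obtain ⟨y, hy, hy0⟩ := (Submodule.ne_bot_iff _).mp hker
    refine Matrix.exists_mulVec_eq_zero_iff.mp ⟨y, hy0, ?_⟩
    rw [Matrix.sum_mulVec]
    exact Finset.sum_eq_zero fun i _ => hφ _ y fun t => congrFun hy (i, t)

/-- The equation of sums of fewer than `binom(n+e,e)` powers of degree `2e` given by the
determinant of the catalecticant. -/
lemma deficient_catalecticant {n e r : ℕ} (hr : r < (n + e).choose e) :
    Deficient n (e + e) r := by
  classical
  let G : Matrix (Expo n e) (Expo n e) (MvPolynomial (Fin (n+1)) ℂ) :=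
    Matrix.of fun a b => monomial (a.1 + b.1) 1
  have hGe : ∀ v a b, eval v (G a b) = eval v (monomial a.1 1) * eval v (monomial b.1 1) := by
    intro v a b
    rw [← map_mul, monomial_mul, one_mul]
    rfl
  obtain ⟨q, hq⟩ : ∃ q : Fin (Fintype.card (Expo n e)) → Fin (n+1) → ℂ,
      ∀ c : Expo n e → ℂ, (∀ k, ∑ a, c a * eval (q k) (monomial a.1 1) = 0) → c = 0 := by
    refine exists_separating_of_finrank_le (V := Expo n e → ℂ)
      (fun v : Fin (n+1) → ℂ =>
        ∑ a : Expo n e, (eval v (monomial a.1 1) : ℂ) • LinearMap.proj a) (by simp) ?_ |>.imp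
      fun q hq c hc => hq c fun k => ?_
    · intro c hc
      have h0 : (∑ a : Expo n e, C (c a) * monomial a.1 1 : MvPolynomial (Fin (n+1)) ℂ) = 0 :=
        funext fun v => by simpa [mul_comm] using hc v
      funext a
      have := congrArg (coeff a.1) h0
      simp only [coeff_sum, coeff_C_mul, coeff_monomial] at this
      rw [Finset.sum_eq_single a (fun ν _ hν => by
        rw [if_neg (fun h => hν (Subtype.ext h)), mul_zero]) (by simp)] at this
      simpa using this
    · simpa [mul_comm] using hc k
  let g := (Fintype.equivFin (Expo n e)).symm
  let V : Matrix (Expo n e) (Expo n e) ℂ :=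
    Matrix.of fun k a => eval (q (g.symm k)) (monomial a.1 1)
  have hV : V.det ≠ 0 := by
    intro h0
    obtain ⟨c, hc, h⟩ := Matrix.exists_mulVec_eq_zero_iff.mpr h0
    refine hc (hq c fun k => ?_)
    simpa [V, Matrix.mulVec, dotProduct, mul_comm] using congrFun h (g k)
  refine deficient_of_flattening (s := 1) G
    (fun a b => isHomogeneous_monomial _ ?_) (fun k : Expo n e => q (g.symm k)) ?_ ?_ ?_
  · have := map_add (Finsupp.degree (σ := Fin (n+1)) (R := ℕ)) a.1 b.1
    rw [a.degree_eq, b.degree_eq] at this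
    exact this
  · have : ∑ k : Expo n e, G.map (eval (q (g.symm k))) = V.transpose * V := by
      ext a b
      simp [Matrix.sum_apply, Matrix.mul_apply, hGe, V]
    rw [this, Matrix.det_mul, Matrix.det_transpose]
    exact mul_ne_zero hV hV
  · intro v
    refine ⟨fun _ => ∑ b : Expo n e, (eval v (monomial b.1 1) : ℂ) • LinearMap.proj b,
      fun y hy => ?_⟩
    have hy := hy 0
    funext a
    simp only [Matrix.mulVec, dotProduct, Matrix.map_apply, hGe, mul_assoc, ← Finset.mul_sum]
    simp only [LinearMap.sum_apply, LinearMap.smul_apply, LinearMap.proj_apply, smul_eq_mul] at hy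
    rw [hy, mul_zero]
    rfl
  · rwa [mul_one, card_expo]

end Flattening

section Koszul

lemma det_ne_zero_of_elimK {m : ℕ} (A : Matrix (Fin m) (Fin m) ℤ)
    (h : forceRows (List.ofFn fun i => List.ofFn fun j => (A i j % 10007).toNat) (elimK m) = true) :
    (A.map (Int.castRingHom ℂ)).det ≠ 0 := by
  rw [← RingHom.mapMatrix_apply, ← RingHom.map_det]
  suffices A.det ≠ 0 by simpa using this
  intro h0
  have h1 : (A.map (Int.castRingHom (ZMod 10007))).det = 0 := by
    rw [← RingHom.mapMatrix_apply, ← RingHom.map_det, h0, map_zero]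
  obtain ⟨v, hv, hA⟩ := Matrix.exists_mulVec_eq_zero_iff.mpr h1
  have hl : ∀ r ∈ (List.ofFn fun i => List.ofFn fun j => (A i j % 10007).toNat),
      r.length = m := by
    simp [List.mem_ofFn]
  refine hv (funext fun j => indep_of_forceRows hl h (List.ofFn v) (by simp) (fun r hr => ?_) _
    (by simp [List.mem_ofFn]))
  obtain ⟨i, rfl⟩ := List.mem_ofFn.mp hr
  rw [dot_ofFn _ _ _ (by simp)]
  refine Eq.trans ?_ (congrFun hA i)
  refine Finset.sum_congr rfl fun j _ => ?_
  congr 1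
  simp only [List.getD_eq_getElem?_getD, List.getElem?_ofFn, Fin.is_lt, dif_pos, Option.getD_some,
    Matrix.map_apply, Fin.eta, Int.coe_castRingHom]
  have h2 : (((A i j % 10007).toNat : ℤ) : ZMod 10007) = ((A i j % 10007 : ℤ) : ZMod 10007) := by
    rw [Int.toNat_of_nonneg (Int.emod_nonneg _ (by norm_num))]
  rw [Int.cast_natCast] at h2
  rw [h2]
  exact ZMod.intCast_mod (A i j) 10007

/-- The sign of `b - a`. -/
def ordSign (a b : Fin 5) : ℤ := if a.1 < b.1 then 1 else if b.1 < a.1 then -1 else 0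

lemma ordSign_swap (a b : Fin 5) : ordSign a b = -ordSign b a := by
  revert a b
  decide

/-- The alternating tensor on five letters. -/
def leviCivita (a b c d e : Fin 5) : ℤ :=
  ordSign a b * ordSign a c * ordSign a d * ordSign a e * ordSign b c * ordSign b d *
    ordSign b e * ordSign c d * ordSign c e * ordSign d e

lemma leviCivita_swap_left (a b c d e : Fin 5) :
    leviCivita a b c d e = -leviCivita b a c d e := by
  rw [leviCivita, leviCivita, ordSign_swap a b]
  ring

lemma leviCivita_swap_outer (a b c d e : Fin 5) :
    leviCivita a b c d e = -leviCivita c b a d e := by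
  rw [leviCivita, leviCivita, ordSign_swap a b, ordSign_swap a c, ordSign_swap b c]
  ring

/-- The positions of a nonvanishing minor of size `43` of the Koszul flattening. -/
def koszulIndex (k : ℕ) : (Fin 5 × Fin 5) × Fin 5 :=
  ([(0, 1), (0, 2), (0, 3), (0, 4), (1, 2), (1, 3), (1, 4), (2, 3), (2, 4), (3, 4)].getD
    (29 * k % 50 / 5) (0, 0), Fin.ofNat 5 (29 * k % 50))

/-- Points in `ℂ^5` at which the Koszul flattening of the sum of cubes has large rank. -/
def koszulPoint : Fin 8 → Fin 5 → ℕ :=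
  ![![1, 0, 0, 0, 0], ![0, 1, 0, 0, 0], ![0, 0, 1, 0, 0], ![0, 0, 0, 1, 0], ![0, 0, 0, 0, 1],
    ![1, 1, 1, 1, 1], ![1, 2, 3, 4, 5], ![1, 3, 2, 5, 7]]

/-- A fast form of `∑ t, p_t i * p_t j * p_t k` for the points `p_t` of `koszulPoint`. -/
def koszulCubic (i j k : Fin 5) : ℕ :=
  (if i.1 = j.1 then if j.1 = k.1 then 1 else 0 else 0) + 1 +
    (i.1 + 1) * (j.1 + 1) * (k.1 + 1) +
    [1, 3, 2, 5, 7].getD i.1 0 * [1, 3, 2, 5, 7].getD j.1 0 * [1, 3, 2, 5, 7].getD k.1 0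

lemma sum_koszulPoint (i j k : Fin 5) :
    ∑ t, koszulPoint t i * koszulPoint t j * koszulPoint t k = koszulCubic i j k := by
  revert i j k
  decide +kernel

/-- The minor of the Koszul flattening of a cubic with coefficients `F`. -/
def koszulMinor {R : Type*} [CommRing R] (F : Fin 5 → Fin 5 → Fin 5 → R) :
    Matrix (Fin 43) (Fin 43) R :=
  Matrix.of fun k l => ∑ i, (leviCivita (koszulIndex k).1.1 (koszulIndex k).1.2 i
    (koszulIndex l).1.1 (koszulIndex l).1.2 : R) * F i (koszulIndex k).2 (koszulIndex l).2

/-- A fast form of the entries of `koszulMinor`. -/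
def koszulEntry (u v : (Fin 5 × Fin 5) × Fin 5) : ℤ :=
  let t := fun i : Fin 5 => leviCivita u.1.1 u.1.2 i v.1.1 v.1.2 * (koszulCubic i u.2 v.2 : ℤ)
  t 0 + t 1 + t 2 + t 3 + t 4

set_option maxRecDepth 100000 in
lemma koszulEntry_check : forceRows (List.ofFn fun k : Fin 43 => List.ofFn fun l : Fin 43 =>
    (koszulEntry (koszulIndex k) (koszulIndex l) % 10007).toNat) (elimK 43) = true := by
  decide +kernel

lemma koszulMinor_map {R S : Type*} [CommRing R] [CommRing S] (φ : R →+* S)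
    (F : Fin 5 → Fin 5 → Fin 5 → R) :
    (koszulMinor F).map φ = koszulMinor fun i j k => φ (F i j k) := by
  ext k l
  simp [koszulMinor]

lemma koszulMinor_sum {R κ : Type*} [CommRing R] [Fintype κ]
    (F : κ → Fin 5 → Fin 5 → Fin 5 → R) :
    ∑ t, koszulMinor (F t) = koszulMinor fun i j k => ∑ t, F t i j k := by
  ext k l
  simp only [koszulMinor, Matrix.sum_apply, Matrix.of_apply, Finset.mul_sum]
  exact Finset.sum_comm

lemma det_koszulMinor_ne_zero :
    (∑ t, koszulMinor fun i j k => (koszulPoint t i * koszulPoint t j * koszulPoint t k : ℂ)).det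
      ≠ 0 := by
  have h := det_ne_zero_of_elimK (koszulMinor fun i j k => (koszulCubic i j k : ℤ)) <| by
    have : ∀ k l, koszulMinor (fun i j k => (koszulCubic i j k : ℤ)) k l =
        koszulEntry (koszulIndex k) (koszulIndex l) := fun k l => by
      simp [koszulMinor, koszulEntry, Fin.sum_univ_five]
    simp only [this]
    exact koszulEntry_check
  rw [koszulMinor_map] at h
  rw [koszulMinor_sum]
  convert! h using 3
  funext i j k
  rw [← sum_koszulPoint]
  simp

lemma sum_leviCivita_mul (v : Fin 5 → ℂ) (b d e : Fin 5) :
    ∑ a, v a * ∑ i, (leviCivita a b i d e : ℂ) * v i = 0 := by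
  have h : ∑ a, v a * ∑ i, (leviCivita a b i d e : ℂ) * v i =
      -∑ a, v a * ∑ i, (leviCivita a b i d e : ℂ) * v i := by
    simp only [Finset.mul_sum]
    rw [← Finset.sum_neg_distrib, Finset.sum_comm]
    refine Finset.sum_congr rfl fun a _ => ?_
    rw [← Finset.sum_neg_distrib]
    refine Finset.sum_congr rfl fun i _ => ?_
    rw [leviCivita_swap_outer]
    push_cast
    ring
  exact self_eq_neg.mp h

/-- The Koszul flattening of a cube has rank at most six. -/
lemma exists_six_functionals_koszulMinor (v : Fin 5 → ℂ) :
    ∃ φ : Fin 6 → (Fin 43 → ℂ) →ₗ[ℂ] ℂ, ∀ y, (∀ t, φ t y = 0) →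
      (koszulMinor fun i j k => v i * v j * v k).mulVec y = 0 := by
  by_cases hv : v = 0
  · refine ⟨0, fun y _ => ?_⟩
    ext k
    simp [koszulMinor, Matrix.mulVec, dotProduct, hv]
  obtain ⟨m, hm⟩ := Function.ne_iff.mp hv
  let H : Fin 5 → Fin 5 → (Fin 43 → ℂ) →ₗ[ℂ] ℂ := fun a b =>
    ∑ l : Fin 43, ((∑ i, (leviCivita a b i (koszulIndex l).1.1 (koszulIndex l).1.2 : ℂ) * v i) *
      v (koszulIndex l).2) • LinearMap.proj l
  have hswap : ∀ a b y, H a b y = -H b a y := by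
    intro a b y
    simp only [H, LinearMap.sum_apply, LinearMap.smul_apply, ← Finset.sum_neg_distrib]
    refine Finset.sum_congr rfl fun l _ => ?_
    simp only [leviCivita_swap_left a b, Int.cast_neg, neg_mul, Finset.sum_neg_distrib, neg_smul]
  have hsum : ∀ b y, ∑ a, v a * H a b y = 0 := by
    intro b y
    simp only [H, LinearMap.sum_apply, LinearMap.smul_apply, LinearMap.proj_apply, smul_eq_mul,
      Finset.mul_sum]
    rw [Finset.sum_comm]
    refine Finset.sum_eq_zero fun l _ => ?_
    have := sum_leviCivita_mul v b (koszulIndex l).1.1 (koszulIndex l).1.2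
    have h2 := congrArg (fun z => z * (v (koszulIndex l).2 * y l)) this
    simp only [Finset.sum_mul, zero_mul, Finset.mul_sum] at h2
    rw [← h2]
    simp only [Finset.mul_sum, Finset.sum_mul, mul_assoc]
  let T := {q : Fin 5 × Fin 5 // q.1 < q.2 ∧ q.1 ≠ m ∧ q.2 ≠ m}
  have hT : Fintype.card T = 6 := by
    have : ∀ m : Fin 5,
        Fintype.card {q : Fin 5 × Fin 5 // q.1 < q.2 ∧ q.1 ≠ m ∧ q.2 ≠ m} = 6 := by decide
    exact this m
  let g : Fin 6 ≃ T := (finCongr hT).symm.trans (Fintype.equivFin T).symm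
  refine ⟨fun t => H (g t).1.1 (g t).1.2, fun y hy => ?_⟩
  have hdiag : ∀ a, H a a y = 0 := fun a => self_eq_neg.mp (hswap a a y)
  have hlt : ∀ a b, a < b → a ≠ m → b ≠ m → H a b y = 0 := fun a b hab ha hb => by
    simpa using hy (g.symm ⟨(a, b), hab, ha, hb⟩)
  have hne : ∀ a b, a ≠ m → b ≠ m → H a b y = 0 := by
    intro a b ha hb
    rcases lt_trichotomy a b with h | rfl | h
    · exact hlt a b h ha hb
    · exact hdiag a
    · rw [hswap, hlt b a h hb ha, neg_zero]
  have hleft : ∀ b, H m b y = 0 := by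
    intro b
    by_cases hb : b = m
    · rw [hb, hdiag]
    · have := hsum b y
      rw [Finset.sum_eq_single m (fun a _ ha => by rw [hne a b ha hb, mul_zero]) (by simp)] at this
      exact (mul_eq_zero.mp this).resolve_left hm
  have hall : ∀ a b, H a b y = 0 := by
    intro a b
    by_cases ha : a = m
    · rw [ha, hleft]
    · by_cases hb : b = m
      · rw [hb, hswap, hleft, neg_zero]
      · exact hne a b ha hb
  ext k
  have := congrArg (v (koszulIndex k).2 * ·) (hall (koszulIndex k).1.1 (koszulIndex k).1.2)
  simp only [H, LinearMap.sum_apply, LinearMap.smul_apply, LinearMap.proj_apply, smul_eq_mul,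
    mul_zero, Finset.mul_sum, Finset.sum_mul] at this
  simp only [koszulMinor, Matrix.mulVec, dotProduct, Matrix.of_apply, Finset.sum_mul, Pi.zero_apply]
  rw [← this]
  refine Finset.sum_congr rfl fun l _ => Finset.sum_congr rfl fun i _ => ?_
  ring

lemma deficient_cubic_four {r : ℕ} (hr : r < 8) : Deficient 4 3 r := by
  have hmap : ∀ v : Fin 5 → ℂ, (koszulMinor fun i j k =>
      (X i * X j * X k : MvPolynomial (Fin 5) ℂ)).map (eval v) =
        koszulMinor fun i j k => v i * v j * v k := by
    intro v
    rw [koszulMinor_map]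
    simp
  refine deficient_of_flattening (s := 6)
    (koszulMinor fun i j k => (X i * X j * X k : MvPolynomial (Fin 5) ℂ)) (fun a b => ?_)
    (fun t i => (koszulPoint t i : ℂ)) ?_ (fun v => ?_) ?_
  · rw [koszulMinor, Matrix.of_apply]
    refine IsHomogeneous.sum _ _ _ fun i _ => ?_
    have h := (isHomogeneous_C (Fin 5) ((leviCivita (koszulIndex a).1.1 (koszulIndex a).1.2 i
      (koszulIndex b).1.1 (koszulIndex b).1.2 : ℤ) : ℂ)).mul (((isHomogeneous_X ℂ i).mul
        (isHomogeneous_X ℂ (koszulIndex a).2)).mul (isHomogeneous_X ℂ (koszulIndex b).2))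
    simpa using h
  · simp only [hmap]
    exact det_koszulMinor_ne_zero
  · rw [hmap]
    exact exists_six_functionals_koszulMinor v
  · rw [Fintype.card_fin]
    omega

end Koszul

lemma deficient_of_lt_genericRank {n d r : ℕ} (h : r < genericRank n d) : Deficient n d r := by
  unfold genericRank at h
  split_ifs at h with h2 h4 h3
  · subst h2
    exact deficient_catalecticant (e := 1) (by simpa using h)
  · obtain ⟨rfl, -, -⟩ := h4
    exact deficient_catalecticant (e := 2) h
  · obtain ⟨rfl, rfl⟩ := h3
    exact deficient_cubic_four h
  · refine deficient_of_lt_choose ?_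
    have := (Nat.le_div_iff_mul_le (Nat.add_one_pos n)).mp (Nat.succ_le_of_lt h)
    rw [Nat.succ_eq_add_one, add_one_mul] at this
    omega

lemma k_genericRank {n d : ℕ} (hd : 2 ≤ d) : K (n+1) d (genericRank n d) 0 := by
  have hceil : ∀ N : ℕ, N ≤ (n + 1) * ((N + n) / (n + 1)) := by
    intro N
    have := Nat.lt_mul_div_succ (N + n) (Nat.add_one_pos n)
    rw [Nat.mul_add, mul_one] at this
    omega
  unfold genericRank
  split_ifs with h2 h4 h3
  · subst h2
    refine K.generic le_rfl (fun _ => le_rfl) ?_ (by simp) (by simp)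
    rw [Nat.choose_two_right]
    refine Nat.div_le_of_le_mul ?_
    simp only [Nat.add_succ_sub_one]
    nlinarith
  · obtain ⟨rfl, h1, h5⟩ := h4
    refine K.generic hd (by simp) ?_ (fun _ _ _ => le_rfl) (by simp)
    interval_cases n <;> decide
  · obtain ⟨rfl, rfl⟩ := h3
    exact K.generic hd (by simp) (by decide) (by simp) (fun _ _ => le_rfl)
  · exact K.generic hd (fun h => absurd h h2) (hceil _) (fun a b c => absurd ⟨a, b, c⟩ h4)
      (fun a b => absurd ⟨a, b⟩ h3)

end AlexanderHirschowitz

/-- **Alexander–Hirschowitz / generic rank** (Theorem 2.2): for `n ≥ 1`, `d ≥ 2`, a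
general homogeneous polynomial `f` of degree `d` in `x_0,…,x_n` over `ℂ` has symmetric
rank exactly `R(n,d)`: there is a nonzero polynomial `D` in the degree-`d` coefficients
of `f` such that every homogeneous `f` of degree `d` with `D(f) ≠ 0` has rank `R(n,d)`. -/
theorem statement0 (n d : ℕ) (hn : 1 ≤ n) (hd : 2 ≤ d) :
    ∃ D : MvPolynomial {μ : Fin (n+1) →₀ ℕ // (μ.sum fun _ e => e) = d} ℂ, D ≠ 0 ∧
      ∀ f : MvPolynomial (Fin (n+1)) ℂ, f.IsHomogeneous d →
        MvPolynomial.eval (fun μ => MvPolynomial.coeff μ.1 f) D ≠ 0 →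
        waringRank n d f = genericRank n d := by
  exact AlexanderHirschowitz.waringRank_eq_of_general (by omega)
    (AlexanderHirschowitz.k_genericRank hd)
    fun _ h => AlexanderHirschowitz.deficient_of_lt_genericRank h
end

section
/- Let f = Σ_{i=1}^r c_i ℓ_{v_i}^d ∈ ℂ[x_0,…,x_n], where the v_i ∈ ℂ^{n+1} are nonzero and span r distinct lines, all c_i ≠ 0, and let 1 ≤ m < d. Set Z = {v_1,…,v_r}. If rank C_f^m = r, then ker C_f^m = I_{Z,m} and im C_f^m = span{ℓ_{v_1}^{d−m},…,ℓ_{v_r}^{d−m}}. -/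
open MvPolynomial

/-- `diffOp p f = p(∂/∂x_0, …, ∂/∂x_{k-1})(f)`: the constant-coefficient differential
operator associated to `p`, applied to `f`.  For `p` homogeneous of degree `m` this is
the catalecticant `C_f^m` applied to `p`. -/
noncomputable def diffOp {k : ℕ} (p f : MvPolynomial (Fin k) ℂ) : MvPolynomial (Fin k) ℂ :=
  ∑ μ ∈ p.support, p.coeff μ •
    (((μ.support.sort (· ≤ ·)).map fun i =>
        ((MvPolynomial.pderiv i).toLinearMap :
          Module.End ℂ (MvPolynomial (Fin k) ℂ)) ^ (μ i)).prod f)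

/-- The formal partial derivative of a linear form is its coefficient. -/
lemma pderiv_linForm {k : ℕ} (v : Fin k → ℂ) (i : Fin k) :
    pderiv i (linForm k v) = C (v i) := by
  simp [linForm, pderiv_X, Pi.single_apply]

lemma pderiv_pow_linForm_pow {k : ℕ} (v : Fin k → ℂ) (i : Fin k) (d s a : ℕ) :
    ((pderiv i).toLinearMap ^ a : Module.End ℂ (MvPolynomial (Fin k) ℂ))
        ((d.descFactorial s : ℂ) • linForm k v ^ (d - s)) =
      (v i ^ a * (d.descFactorial (s + a) : ℂ)) • linForm k v ^ (d - (s + a)) := by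
  induction a with
  | zero => simp
  | succ a ih =>
    rw [pow_succ', Module.End.mul_apply, ih, map_smul,
      Derivation.coeFn_coe, Derivation.leibniz_pow, pderiv_linForm, ← add_assoc,
      Nat.descFactorial_succ, Nat.sub_sub]
    simp only [smul_eq_C_mul, nsmul_eq_mul, smul_eq_mul, map_mul, map_pow, Nat.cast_mul,
      map_natCast]
    ring

lemma list_prod_pderiv_linForm_pow {k : ℕ} (v : Fin k → ℂ) (μ : Fin k → ℕ) (d : ℕ)
    (l : List (Fin k)) :
    (l.map fun i => ((pderiv i).toLinearMap :
        Module.End ℂ (MvPolynomial (Fin k) ℂ)) ^ μ i).prod (linForm k v ^ d) =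
      ((l.map fun i => v i ^ μ i).prod * (d.descFactorial (l.map μ).sum : ℂ)) •
        linForm k v ^ (d - (l.map μ).sum) := by
  induction l with
  | nil => simp
  | cons i l ih =>
    simp only [List.map_cons, List.prod_cons, List.sum_cons, Module.End.mul_apply]
    rw [ih, mul_smul, map_smul, pderiv_pow_linForm_pow, smul_smul, add_comm (μ i)]
    congr 1
    ring

/-- A form of degree `m` acts on `ℓ_v ^ d` by evaluation at `v`, up to a factorial factor. -/
lemma diffOp_linForm_pow {k m : ℕ} {p : MvPolynomial (Fin k) ℂ} (hp : p.IsHomogeneous m)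
    (v : Fin k → ℂ) (d : ℕ) :
    diffOp p (linForm k v ^ d) =
      ((d.descFactorial m : ℂ) * eval v p) • linForm k v ^ (d - m) := by
  rw [diffOp, eval_eq, Finset.mul_sum, Finset.sum_smul]
  refine Finset.sum_congr rfl fun μ hμ => ?_
  have hdeg : ((μ.support.sort (· ≤ ·)).map μ).sum = m := by
    rw [← List.sum_toFinset _ (Finset.sort_nodup _ _), Finset.sort_toFinset]
    have := hp.degree_eq_sum_deg_support hμ
    simpa [Finsupp.degree] using this.symm
  have hprod : ((μ.support.sort (· ≤ ·)).map fun i => v i ^ μ i).prod =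
      ∏ i ∈ μ.support, v i ^ μ i := by
    rw [← List.prod_toFinset _ (Finset.sort_nodup _ _), Finset.sort_toFinset]
  rw [list_prod_pderiv_linForm_pow, hdeg, hprod, smul_smul]
  congr 1
  ring

lemma diffOp_sum_smul {k : ℕ} {ι : Type*} (s : Finset ι) (p : MvPolynomial (Fin k) ℂ)
    (c : ι → ℂ) (g : ι → MvPolynomial (Fin k) ℂ) :
    diffOp p (∑ i ∈ s, c i • g i) = ∑ i ∈ s, c i • diffOp p (g i) := by
  simp only [diffOp, map_sum, map_smul, Finset.smul_sum]
  rw [Finset.sum_comm]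
  exact Finset.sum_congr rfl fun i _ => Finset.sum_congr rfl fun μ _ => smul_comm _ _ _

/-- Proposition (equality case for the catalecticant): if `f = Σ_{i=1}^r c_i ℓ_{v_i}^d`
with the `v_i` spanning `r` distinct lines, all `c_i ≠ 0`, `1 ≤ m < d`, and
`rank C_f^m = r`, then `ker C_f^m = I_{Z,m}` and
`im C_f^m = span{ℓ_{v_1}^{d−m},…,ℓ_{v_r}^{d−m}}`. -/
theorem statement3 (n d m r : ℕ) (hm1 : 1 ≤ m) (hmd : m < d)
    (v : Fin r → Fin (n+1) → ℂ) (hv : ∀ i, v i ≠ 0)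
    (hdist : ∀ i j, i ≠ j → ∀ lam : ℂ, v i ≠ lam • v j)
    (c : Fin r → ℂ) (hc : ∀ i, c i ≠ 0)
    (f : MvPolynomial (Fin (n+1)) ℂ)
    (hf : f = ∑ i, c i • (linForm (n+1) (v i)) ^ d)
    (hrank : Module.rank ℂ ↥(Submodule.span ℂ
        {g | ∃ p : MvPolynomial (Fin (n+1)) ℂ, p.IsHomogeneous m ∧ g = diffOp p f})
      = (r : Cardinal)) :
    (∀ p : MvPolynomial (Fin (n+1)) ℂ, p.IsHomogeneous m →
      (diffOp p f = 0 ↔ ∀ i, MvPolynomial.eval (v i) p = 0)) ∧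
    Submodule.span ℂ
        {g | ∃ p : MvPolynomial (Fin (n+1)) ℂ, p.IsHomogeneous m ∧ g = diffOp p f}
      = Submodule.span ℂ (Set.range fun i => (linForm (n+1) (v i)) ^ (d - m)) := by
  have hdiff : ∀ p : MvPolynomial (Fin (n+1)) ℂ, p.IsHomogeneous m → diffOp p f =
      ∑ i, (c i * ((d.descFactorial m : ℂ) * eval (v i) p)) •
        linForm (n+1) (v i) ^ (d - m) := by
    intro p hp
    simp only [hf, diffOp_sum_smul, diffOp_linForm_pow hp, smul_smul]
  have hle : Submodule.span ℂ
        {g | ∃ p : MvPolynomial (Fin (n+1)) ℂ, p.IsHomogeneous m ∧ g = diffOp p f}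
      ≤ Submodule.span ℂ (Set.range fun i => linForm (n+1) (v i) ^ (d - m)) := by
    rw [Submodule.span_le]
    rintro _ ⟨p, hp, rfl⟩
    rw [hdiff p hp]
    exact Submodule.sum_mem _ fun i _ =>
      Submodule.smul_mem _ _ (Submodule.subset_span ⟨i, rfl⟩)
  have hfin : Module.Finite ℂ
      (Submodule.span ℂ (Set.range fun i => linForm (n+1) (v i) ^ (d - m))) :=
    Module.Finite.span_of_finite ℂ (Set.finite_range _)
  have hcard := finrank_range_le_card (R := ℂ) fun i => linForm (n+1) (v i) ^ (d - m)
  rw [Set.finrank, Fintype.card_fin] at hcard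
  have hspan := Submodule.eq_of_le_of_finrank_le hle
    (hcard.trans_eq (Module.finrank_eq_of_rank_eq hrank).symm)
  have hli : LinearIndependent ℂ fun i => linForm (n+1) (v i) ^ (d - m) := by
    rw [linearIndependent_iff_card_eq_finrank_span, Set.finrank, ← hspan,
      Module.finrank_eq_of_rank_eq hrank, Fintype.card_fin]
  refine ⟨fun p hp => ?_, hspan⟩
  rw [hdiff p hp]
  constructor
  · intro h i
    have hi := Fintype.linearIndependent_iff.1 hli _ h i
    have hd : (d.descFactorial m : ℂ) ≠ 0 := by
      rw [Nat.cast_ne_zero, Ne, Nat.descFactorial_eq_zero_iff_lt]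
      exact hmd.le.not_gt
    simpa [hc i, hd] using hi
  · intro h
    simp [h]
end
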